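/- arXiv:1412.5357 — 2 statements merged into one kernel-verified Lean document; each statement's English description precedes it below -/
import Mathlib

section
/- Let G = ⟨X; Rⁿ⟩ be a freely indecomposable one-relator group with torsion. Suppose G splits nontrivially as an amalgamated free product A ∗_C B where C is infinite dihedral. Then A is infinite dihedral or B is infinite dihedral. -/
/-- A group is *virtually-ℤ* if it has a finite-index subgroup isomorphic to `ℤ`. -/
def VirtuallyZ (G : Type*) [Group G] : Prop :=
  ∃ H : Subgroup G, H.FiniteIndex ∧ Nonempty (H ≃* Multiplicative ℤ)

/-- A subgroup `M` of `G` is *malnormal* if `g M g⁻¹ ∩ M ≠ 1` implies `g ∈ M`. -/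
def Subgroup.IsMalnormal {G : Type*} [Group G] (M : Subgroup G) : Prop :=
  ∀ g : G, (∃ x : G, x ≠ 1 ∧ x ∈ M ∧ g * x * g⁻¹ ∈ M) → g ∈ M

/-- A group is a *free product of cyclic groups* if it is isomorphic to the free product
(`Monoid.CoprodI`) of a family of cyclic groups; every cyclic group is isomorphic to
`Multiplicative (ZMod m)` for some `m : ℕ` (with `m = 0` giving the infinite cyclic group). -/
def IsFreeProductOfCyclics (G : Type*) [Group G] : Prop :=
  ∃ (ι : Type) (m : ι → ℕ),
    Nonempty (G ≃* Monoid.CoprodI fun i => Multiplicative (ZMod (m i)))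

/-- A group is *freely decomposable* if it is isomorphic to a free product of two
nontrivial groups. -/
def FreelyDecomposable (G : Type*) [Group G] : Prop :=
  ∃ (H K : Type) (gH : Group H) (gK : Group K),
    Nontrivial H ∧ Nontrivial K ∧
      Nonempty (G ≃* (letI := gH; letI := gK; Monoid.Coprod H K))

/-- A group is *freely indecomposable* if it is not isomorphic to a free product of two
nontrivial groups. -/
def FreelyIndecomposable (G : Type*) [Group G] : Prop := ¬ FreelyDecomposable G

namespace OneRel

structure TreeData (V E : Type) (s t : E → V) : Prop where
  pot : ∀ (P : Type) [Group P] (d : E → P), ∃ D : V → P, ∀ e, D (t e) = D (s e) * d e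
  conn : ∀ S : Set V, S.Nonempty → (∀ e, s e ∈ S ↔ t e ∈ S) → S = Set.univ
  nonempty : Nonempty V

theorem exists_transversal {Γ V E : Type} [Group Γ] [MulAction Γ V] [MulAction Γ E]
    {s t : E → V} (hs : ∀ (g : Γ) e, s (g • e) = g • s e) (ht : ∀ (g : Γ) e, t (g • e) = g • t e)
    (T : TreeData V E s t) :
    ∃ (R : Set V) (v0 : V), v0 ∈ R ∧ (∀ v, ∃ g : Γ, ∃ r ∈ R, v = g • r) ∧
      (∀ r ∈ R, ∀ r' ∈ R, ∀ g : Γ, g • r = r' → r = r') ∧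
      ∀ S : Set V, v0 ∈ S → (∀ e, s e ∈ R → t e ∈ R → (s e ∈ S ↔ t e ∈ S)) → R ⊆ S := by
  obtain ⟨v0⟩ := T.nonempty
  let Z : Set (Set V) := {R | v0 ∈ R ∧ (∀ r ∈ R, ∀ r' ∈ R, ∀ g : Γ, g • r = r' → r = r') ∧
      ∀ S : Set V, v0 ∈ S → (∀ e, s e ∈ R → t e ∈ R → (s e ∈ S ↔ t e ∈ S)) → R ⊆ S}
  have h0 : ({v0} : Set V) ∈ Z := by
    refine ⟨rfl, ?_, ?_⟩
    · rintro r rfl r' rfl g _; rfl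
    · rintro S hS _ v rfl; exact hS
  obtain ⟨R, hR, hmax⟩ := zorn_subset_nonempty Z (by
    intro c hc hch hne
    refine ⟨⋃₀ c, ⟨?_, ?_, ?_⟩, fun a ha => Set.subset_sUnion_of_mem ha⟩
    · obtain ⟨a, ha⟩ := hne
      exact ⟨a, ha, (hc ha).1⟩
    · rintro r ⟨a, ha, hr⟩ r' ⟨b, hb, hr'⟩ g hg
      rcases hch.total ha hb with h | h
      · exact (hc hb).2.1 r (h hr) r' hr' g hg
      · exact (hc ha).2.1 r hr r' (h hr') g hg
    · rintro S hS hcl v ⟨a, ha, hv⟩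
      exact (hc ha).2.2 S hS (fun e h1 h2 => hcl e ⟨a, ha, h1⟩ ⟨a, ha, h2⟩) hv) {v0} h0
  obtain ⟨hRm, hmax⟩ := hmax
  refine ⟨R, v0, hRm.1, ?_, hRm.2.1, hRm.2.2⟩
  have key : ∀ r ∈ R, ∀ w : V, (∃ e, (s e = r ∧ t e = w) ∨ (s e = w ∧ t e = r)) →
      ∃ g : Γ, ∃ r ∈ R, w = g • r := by
    intro r hr w hw
    by_contra hcon
    push Not at hcon
    have hZ : insert w R ∈ Z := by
      refine ⟨Or.inr hRm.1, ?_, ?_⟩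
      · rintro a ha b hb g hg
        rcases ha with rfl | ha <;> rcases hb with rfl | hb
        · rfl
        · exact absurd (by rw [← hg, inv_smul_smul]) (hcon g⁻¹ b hb)
        · exact absurd hg.symm (hcon g a ha)
        · exact hRm.2.1 a ha b hb g hg
      · intro S hS hcl
        have hRS : R ⊆ S := hRm.2.2 S hS (fun e h1 h2 => hcl e (Or.inr h1) (Or.inr h2))
        rintro v (rfl | hv)
        · obtain ⟨e, ⟨h1, h2⟩ | ⟨h1, h2⟩⟩ := hw
          · have := hcl e (by rw [h1]; exact Or.inr hr) (by rw [h2]; exact Or.inl rfl)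
            rw [h1, h2] at this
            exact this.1 (hRS hr)
          · have := hcl e (by rw [h1]; exact Or.inl rfl) (by rw [h2]; exact Or.inr hr)
            rw [h1, h2] at this
            exact this.2 (hRS hr)
        · exact hRS hv
    have hsub := hmax hZ (Set.subset_insert w R)
    exact hcon 1 w (hsub (Or.inl rfl)) (one_smul _ _).symm
  have : {v | ∃ g : Γ, ∃ r ∈ R, v = g • r} = Set.univ := by
    apply T.conn
    · exact ⟨v0, 1, v0, hRm.1, (one_smul _ _).symm⟩
    · intro e
      constructor
      · rintro ⟨g, r, hr, h⟩
        obtain ⟨g', r', hr', h'⟩ := key r hr (t (g⁻¹ • e))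
          ⟨g⁻¹ • e, Or.inl ⟨by rw [hs, h, inv_smul_smul], rfl⟩⟩
        refine ⟨g * g', r', hr', ?_⟩
        rw [mul_smul, ← h', ht, smul_inv_smul]
      · rintro ⟨g, r, hr, h⟩
        obtain ⟨g', r', hr', h'⟩ := key r hr (s (g⁻¹ • e))
          ⟨g⁻¹ • e, Or.inr ⟨rfl, by rw [ht, h, inv_smul_smul]⟩⟩
        refine ⟨g * g', r', hr', ?_⟩
        rw [mul_smul, ← h', hs, smul_inv_smul]
  intro v
  have hv : v ∈ (Set.univ : Set V) := trivial
  rw [← this] at hv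
  exact hv

/-- Structure theorem for actions on trees with trivial edge stabilisers. -/
theorem tree_structure {Γ V E : Type} [Group Γ] [MulAction Γ V] [MulAction Γ E]
    {s t : E → V} (hs : ∀ (g : Γ) e, s (g • e) = g • s e) (ht : ∀ (g : Γ) e, t (g • e) = g • t e)
    (T : TreeData V E s t) (hfree : ∀ (g : Γ) (e : E), g • e = e → g = 1) :
    ∃ (Λ : Type) (R : Set V) (k : Λ → Γ), (∀ v, ∃ g : Γ, ∃ r ∈ R, v = g • r) ∧
      (∀ r ∈ R, ∀ r' ∈ R, ∀ g : Γ, g • r = r' → r = r') ∧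
      Subgroup.closure ({g : Γ | ∃ r ∈ R, g • r = r} ∪ Set.range k) = ⊤ ∧
      ∀ (Q : Type) [Group Q] (f : V → Γ → Q),
        (∀ r ∈ R, ∀ g g' : Γ, g • r = r → g' • r = r → f r (g * g') = f r g * f r g') →
        ∀ c : Λ → Q, ∃ Θ : Γ →* Q, (∀ r ∈ R, ∀ g : Γ, g • r = r → Θ g = f r g) ∧
          ∀ l, Θ (k l) = c l := by
  classical
  obtain ⟨R, v0, hv0, hcov, hinj, hconn⟩ := exists_transversal hs ht T
  have hch : ∀ v, ∃ g : Γ, ∃ r ∈ R, v = g • r ∧ (v ∈ R → g = 1) := by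
    intro v
    by_cases hv : v ∈ R
    · exact ⟨1, v, hv, (one_smul _ _).symm, fun _ => rfl⟩
    · obtain ⟨g, r, hr, h⟩ := hcov v
      exact ⟨g, r, hr, h, fun h => absurd h hv⟩
  choose h ρ hρ hhρ hh1 using hch
  have hρg : ∀ (g : Γ) v, ρ (g • v) = ρ v := by
    intro g v
    apply hinj _ (hρ _) _ (hρ _) ((h v)⁻¹ * g⁻¹ * h (g • v))
    rw [mul_smul, mul_smul, ← hhρ, inv_smul_smul, inv_smul_eq_iff]
    exact hhρ v
  have hρR : ∀ v ∈ R, ρ v = v := by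
    intro v hv
    have := hhρ v
    rw [hh1 v hv, one_smul] at this
    exact this.symm
  -- edge representatives
  have hrep : ∀ q : MulAction.orbitRel.Quotient Γ E, ∃ e : E,
      (Quotient.mk'' e : MulAction.orbitRel.Quotient Γ E) = q ∧ s e ∈ R ∧
      ((∃ e' : E, (Quotient.mk'' e' : MulAction.orbitRel.Quotient Γ E) = q ∧ s e' ∈ R ∧ t e' ∈ R) →
        t e ∈ R) := by
    intro q
    by_cases hq : ∃ e' : E, (Quotient.mk'' e' : MulAction.orbitRel.Quotient Γ E) = q ∧
        s e' ∈ R ∧ t e' ∈ R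
    · obtain ⟨e', h1, h2, h3⟩ := hq
      exact ⟨e', h1, h2, fun _ => h3⟩
    · obtain ⟨e, rfl⟩ := Quotient.mk''_surjective q
      refine ⟨(h (s e))⁻¹ • e, ?_, ?_, fun h => absurd h hq⟩
      · apply Quotient.sound'
        exact ⟨(h (s e))⁻¹, rfl⟩
      · rw [hs, inv_smul_eq_iff.2 (hhρ (s e))]
        exact hρ _
  choose rep hrepq hrs hrt using hrep
  have hgam : ∀ e : E, ∃ g : Γ, e = g • rep (Quotient.mk'' e) := by
    intro e
    have := hrepq (Quotient.mk'' e)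
    rw [Quotient.eq''] at this
    have h2 : (MulAction.orbitRel Γ E) e (rep (Quotient.mk'' e)) := (MulAction.orbitRel Γ E).symm' this
    obtain ⟨g, hg⟩ := h2
    exact ⟨g, hg.symm⟩
  choose γ hγ using hgam
  have hqg : ∀ (g : Γ) (e : E), (Quotient.mk'' (g • e) : MulAction.orbitRel.Quotient Γ E)
      = Quotient.mk'' e := by
    intro g e
    apply Quotient.sound'
    exact ⟨g, rfl⟩
  have hγg : ∀ (g : Γ) (e : E), γ (g • e) = g * γ e := by
    intro g e
    have h1 := hγ (g • e)
    rw [hqg] at h1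
    have h2 := hγ e
    have : ((g * γ e)⁻¹ * γ (g • e)) • rep (Quotient.mk'' e) = rep (Quotient.mk'' e) := by
      rw [mul_smul, ← h1, inv_smul_eq_iff, mul_smul, ← h2]
    have := hfree _ _ this
    rw [inv_mul_eq_one] at this
    exact this.symm
  let Λ := {q : MulAction.orbitRel.Quotient Γ E // t (rep q) ∉ R}
  let k : Λ → Γ := fun l => h (t (rep l.1))
  refine ⟨Λ, R, k, hcov, hinj, ?_, ?_⟩
  · set L := Subgroup.closure ({g : Γ | ∃ r ∈ R, g • r = r} ∪ Set.range k) with hL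
    have hLs : ∀ r ∈ R, ∀ g : Γ, g • r = r → g ∈ L := fun r hr g hg =>
      Subgroup.subset_closure (Or.inl ⟨r, hr, hg⟩)
    have hLk : ∀ q, h (t (rep q)) ∈ L := by
      intro q
      by_cases hq : t (rep q) ∈ R
      · rw [hh1 _ hq]; exact L.one_mem
      · exact Subgroup.subset_closure (Or.inr ⟨⟨q, hq⟩, rfl⟩)
    have hS : {v | ∃ l ∈ L, ∃ r ∈ R, v = l • r} = Set.univ := by
      apply T.conn
      · exact ⟨v0, 1, L.one_mem, v0, hv0, (one_smul _ _).symm⟩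
      · intro e
        constructor
        · rintro ⟨l, hl, r, hr, hlr⟩
          have h1 := hγ e
          have h2 : s e = γ e • s (rep (Quotient.mk'' e)) := by rw [← hs, ← h1]
          have h3 : r = s (rep (Quotient.mk'' e)) := by
            apply hinj _ hr _ (hrs _) ((γ e)⁻¹ * l)
            rw [mul_smul, ← hlr, h2, inv_smul_smul]
          have h4 : γ e ∈ L := by
            have : l⁻¹ * γ e ∈ L := by
              apply hLs r hr
              rw [mul_smul]; nth_rw 1 [h3]; rw [← h2, hlr, inv_smul_smul]
            simpa using L.mul_mem hl this
          refine ⟨γ e * h (t (rep (Quotient.mk'' e))), L.mul_mem h4 (hLk _),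
            ρ (t (rep (Quotient.mk'' e))), hρ _, ?_⟩
          rw [mul_smul, ← hhρ, ← ht, ← h1]
        · rintro ⟨l, hl, r, hr, hlr⟩
          have h1 := hγ e
          have h2 : t e = (γ e * h (t (rep (Quotient.mk'' e)))) • ρ (t (rep (Quotient.mk'' e))) := by
            rw [mul_smul, ← hhρ, ← ht, ← h1]
          have h3 : r = ρ (t (rep (Quotient.mk'' e))) := by
            apply hinj _ hr _ (hρ _) ((γ e * h (t (rep (Quotient.mk'' e))))⁻¹ * l)
            rw [mul_smul, ← hlr, h2, inv_smul_smul]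
          have h4 : γ e ∈ L := by
            have : l⁻¹ * (γ e * h (t (rep (Quotient.mk'' e)))) ∈ L := by
              apply hLs r hr
              rw [mul_smul]; nth_rw 1 [h3]; rw [← h2, hlr, inv_smul_smul]
            have := L.mul_mem hl this
            rw [mul_inv_cancel_left] at this
            exact (Subgroup.mul_mem_cancel_right _ (hLk _)).1 this
          refine ⟨γ e, h4, s (rep (Quotient.mk'' e)), hrs _, ?_⟩
          rw [← hs, ← h1]
    rw [eq_top_iff]
    intro g _
    have : g • v0 ∈ {v | ∃ l ∈ L, ∃ r ∈ R, v = l • r} := by rw [hS]; trivial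
    obtain ⟨l, hl, r, hr, hlr⟩ := this
    have h3 : r = v0 := by
      apply hinj _ hr _ hv0 (g⁻¹ * l)
      rw [mul_smul, ← hlr, inv_smul_smul]
    subst h3
    have : l⁻¹ * g ∈ L := by
      apply hLs r hr
      rw [mul_smul, hlr, inv_smul_smul]
    simpa using L.mul_mem hl this
  · intro Q _ f hf c
    let κ : V → Γ → Q := fun v g => f (ρ v) ((h (g • v))⁻¹ * g * h v)
    have hst : ∀ v g, ((h (g • v))⁻¹ * g * h v) • ρ v = ρ v := by
      intro v g
      rw [mul_smul, ← hhρ, mul_smul, inv_smul_eq_iff, ← hρg g v]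
      exact hhρ (g • v)
    have hκ : ∀ v g g', κ v (g * g') = κ (g' • v) g * κ v g' := by
      intro v g g'
      simp only [κ]
      rw [hρg, ← hf _ (hρ _)]
      · congr 1
        rw [mul_smul]; group
      · have := hst (g' • v) g
        rw [hρg] at this
        exact this
      · exact hst v g'
    have hf1 : ∀ r ∈ R, f r 1 = 1 := by
      intro r hr
      have := hf r hr 1 1 (one_smul _ _) (one_smul _ _)
      rw [mul_one] at this
      exact left_eq_mul.1 this
    let c' : MulAction.orbitRel.Quotient Γ E → Q := fun q =>
      if hq : t (rep q) ∉ R then c ⟨q, hq⟩ else 1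
    let d : E → Q := fun e => κ (s (rep (Quotient.mk'' e))) (γ e) * c' (Quotient.mk'' e) *
      (κ (t (rep (Quotient.mk'' e))) (γ e))⁻¹
    have hd : ∀ g e, d (g • e) = κ (s e) g * d e * (κ (t e) g)⁻¹ := by
      intro g e
      simp only [d]
      rw [hqg, hγg, hκ, hκ, ← hs, ← ht, ← hγ e]
      group
    have hdrep : ∀ q, d (rep q) = c' q := by
      intro q
      have h1 : γ (rep q) = 1 := by
        have := hγ (rep q)
        rw [hrepq] at this
        exact hfree _ _ this.symm
      simp only [d]
      rw [hrepq, h1]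
      have : ∀ v, κ v 1 = 1 := by
        intro v
        simp only [κ, one_smul, mul_one, inv_mul_cancel]
        exact hf1 _ (hρ _)
      rw [this, this]; simp
    obtain ⟨D0, hD0⟩ := T.pot Q d
    let D : V → Q := fun v => (D0 v0)⁻¹ * D0 v
    have hD : ∀ e, D (t e) = D (s e) * d e := by
      intro e; simp only [D]; rw [hD0, mul_assoc]
    have hDR : ∀ r ∈ R, D r = 1 := by
      apply hconn {v | D v = 1}
      · simp [D]
      · intro e h1 h2
        have hq1 := hrt (Quotient.mk'' e) ⟨e, rfl, h1, h2⟩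
        have e1 : s (rep (Quotient.mk'' e)) = s e := by
          apply hinj _ (hrs _) _ h1 (γ e)
          rw [← hs, ← hγ]
        have e2 : t (rep (Quotient.mk'' e)) = t e := by
          apply hinj _ hq1 _ h2 (γ e)
          rw [← ht, ← hγ]
        have := hD (rep (Quotient.mk'' e))
        rw [hdrep, e1, e2] at this
        have hc : c' (Quotient.mk'' e) = 1 := by
          simp only [c']; rw [dif_neg]; simpa using hq1
        rw [hc, mul_one] at this
        simp only [Set.mem_ofPred_eq, this]
    have hconst : ∀ g v, D (g • v) * κ v g * (D v)⁻¹ = D (g • v0) * κ v0 g * (D v0)⁻¹ := by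
      intro g v
      have : {v | D (g • v) * κ v g * (D v)⁻¹ = D (g • v0) * κ v0 g * (D v0)⁻¹} = Set.univ := by
        apply T.conn
        · exact ⟨v0, rfl⟩
        · intro e
          have : D (g • t e) * κ (t e) g * (D (t e))⁻¹ = D (g • s e) * κ (s e) g * (D (s e))⁻¹ := by
            rw [← ht, ← hs, hD, hD, hd]; group
          simp only [Set.mem_ofPred_eq, this]
      have hv : v ∈ (Set.univ : Set V) := trivial
      rw [← this] at hv
      exact hv
    let Θ : Γ →* Q := MonoidHom.mk' (fun g => D (g • v0) * κ v0 g * (D v0)⁻¹) (by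
      intro g g'
      rw [← hconst g (g' • v0), hκ, mul_smul]; group)
    have hΘ : ∀ g v, Θ g = D (g • v) * κ v g * (D v)⁻¹ := fun g v => (hconst g v).symm
    refine ⟨Θ, ?_, ?_⟩
    · intro r hr g hg
      rw [hΘ g r, hg, hDR r hr]
      simp only [κ, hg, hh1 r hr, hρR r hr]; simp
    · intro l
      have h1 : k l • ρ (t (rep l.1)) = t (rep l.1) := (hhρ _).symm
      rw [hΘ (k l) (ρ (t (rep l.1))), h1, hD, hDR _ (hρ _), hDR _ (hrs _), hdrep]
      simp only [κ, h1]
      rw [hh1 _ (hρ _)]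
      have : c' l.1 = c l := by simp only [c']; rw [dif_pos l.2]
      rw [this]
      have : (h (t (rep l.1)))⁻¹ * k l * 1 = 1 := by simp [k]
      rw [this, hρR _ (hρ _), hf1 _ (hρ _)]; simp

end OneRel

namespace OneRel

theorem free_sq {Λ : Type} {x : FreeGroup Λ} (h : x * x = 1) : x = 1 := by
  have : x ^ 2 = 1 := by rw [pow_two, h]
  exact (pow_eq_one_iff_left (two_ne_zero)).1 this

theorem sq_zpowers {A : Type} [Group A] {a : A} (ha : a * a = 1) {g : A}
    (hg : g ∈ Subgroup.zpowers a) : g = 1 ∨ g = a := by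
  obtain ⟨i, rfl⟩ := hg
  have h2 : a ^ (2 : ℤ) = 1 := by rw [zpow_two, ha]
  rcases Int.even_or_odd' i with ⟨m, rfl | rfl⟩
  · left; simp only [zpow_mul, h2, one_zpow]
  · right; simp only [zpow_add, zpow_mul, h2, one_zpow, zpow_one, one_mul]

theorem involution_fixes {A V E : Type} [Group A] [MulAction A V] [MulAction A E]
    {s t : E → V} (hs : ∀ (g : A) e, s (g • e) = g • s e) (ht : ∀ (g : A) e, t (g • e) = g • t e)
    (T : TreeData V E s t) {a : A} (ha : a * a = 1) : ∃ v : V, a • v = v := by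
  by_contra hcon
  push Not at hcon
  obtain ⟨v1⟩ := T.nonempty
  have ha1 : a ≠ 1 := by
    rintro rfl; exact hcon v1 (one_smul _ _)
  obtain ⟨Λ, R, k, -, -, hcl, huniv⟩ := tree_structure (Γ := Subgroup.zpowers a) (s := s) (t := t)
    (fun g e => hs g e) (fun g e => ht g e) T (by
      rintro ⟨g, hg⟩ e he
      rcases sq_zpowers ha hg with rfl | rfl
      · rfl
      · exfalso
        apply hcon (s e)
        rw [← hs]
        exact congrArg s he)
  have hΛ : IsEmpty Λ := by
    refine ⟨fun l => ?_⟩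
    obtain ⟨Θ, -, h2⟩ := huniv (FreeGroup Λ) (fun _ _ => 1) (by simp) FreeGroup.of
    have h3 := h2 l
    have h4 : k l * k l = 1 := by
      obtain ⟨g, hg⟩ := k l
      apply Subtype.ext
      rcases sq_zpowers ha hg with rfl | rfl
      · simp
      · simpa using ha
    have h5 : Θ (k l) = 1 := free_sq (by rw [← map_mul, h4, map_one])
    rw [h3] at h5
    exact FreeGroup.of_ne_one l h5
  have : Subgroup.closure ({g : Subgroup.zpowers a | ∃ r ∈ R, g • r = r} ∪ Set.range k) ≤ ⊥ := by
    rw [Subgroup.closure_le]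
    rintro ⟨g, hg⟩ (⟨r, -, h⟩ | ⟨l, -⟩)
    · rcases sq_zpowers ha hg with rfl | rfl
      · simp
      · exact absurd h (hcon r)
    · exact hΛ.elim l
  rw [hcl] at this
  have h6 := this (show (⟨a, Subgroup.mem_zpowers a⟩ : Subgroup.zpowers a) ∈ ⊤ from trivial)
  rw [Subgroup.mem_bot] at h6
  exact ha1 (congrArg Subtype.val h6)

def Q1 (A : Type) [Group A] : Prop :=
  ∀ a : A, a * a = 1 → Subgroup.normalClosure {a} = ⊤ →
    ∃ a' : A, a' * a' = 1 ∧ Subgroup.closure {a'} = ⊤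

def Q2 (A : Type) [Group A] : Prop :=
  ∀ a b : A, a * a = 1 → b * b = 1 → Subgroup.normalClosure {a, b} = ⊤ →
    ∃ a' b' : A, a' * a' = 1 ∧ b' * b' = 1 ∧ Subgroup.closure {a', b'} = ⊤

def HQ (G : Type) [Group G] : Prop :=
  ∀ (A : Type) [Group A] (j : A →* G), Function.Injective j → Q1 A ∧ Q2 A

theorem HQ.of_injective {G G' : Type} [Group G] [Group G'] (h : HQ G') (j : G →* G')
    (hj : Function.Injective j) : HQ G :=
  fun A _ i hi => h A (j.comp i) (hj.comp hi)

theorem hom_trivial_of_normalClosure {A Q : Type} [Group A] [Group Q] {S : Set A}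
    (hS : Subgroup.normalClosure S = ⊤) (Θ : A →* Q) (h : ∀ x ∈ S, Θ x = 1) (x : A) : Θ x = 1 := by
  have : Subgroup.normalClosure S ≤ Θ.ker := Subgroup.normalClosure_le_normal h
  rw [hS] at this
  exact this (show x ∈ ⊤ from trivial)

theorem normalClosure_map_top {A Q : Type} [Group A] [Group Q] {S : Set A}
    (hS : Subgroup.normalClosure S = ⊤) (Θ : A →* Q) (hΘ : Function.Surjective Θ) {U : Set Q}
    (h : ∀ x ∈ S, Θ x ∈ Subgroup.normalClosure U) : Subgroup.normalClosure U = ⊤ := by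
  have : Subgroup.normalClosure S ≤ (Subgroup.normalClosure U).comap Θ :=
    Subgroup.normalClosure_le_normal h
  rw [hS] at this
  rw [eq_top_iff]
  intro x _
  obtain ⟨y, rfl⟩ := hΘ x
  exact this (show y ∈ ⊤ from trivial)

theorem treeQ_core {A V E : Type} [Group A] [MulAction A V] [MulAction A E]
    {s t : E → V} (hs : ∀ (g : A) e, s (g • e) = g • s e) (ht : ∀ (g : A) e, t (g • e) = g • t e)
    (T : TreeData V E s t) (hfree : ∀ (g : A) (e : E), g • e = e → g = 1)
    {a b : A} (ha : a * a = 1) (hb : b * b = 1) (hab : Subgroup.normalClosure {a, b} = ⊤) :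
    ∃ (r1 r2 : V) (a' : MulAction.stabilizer A r1) (b' : MulAction.stabilizer A r2),
      a' * a' = 1 ∧ b' * b' = 1 ∧ (a = b → r1 = r2 ∧ (a' : A) = b') ∧
      Subgroup.closure ((MulAction.stabilizer A r1 : Set A) ∪ MulAction.stabilizer A r2) = ⊤ ∧
      (r1 ≠ r2 → Subgroup.normalClosure {a'} = ⊤ ∧ Subgroup.normalClosure {b'} = ⊤) ∧
      (∀ h : r1 = r2, Subgroup.normalClosure {a', h ▸ b'} = ⊤) := by
  classical
  obtain ⟨Λ, R, k, hcov, hinj, hcl, huniv⟩ := tree_structure hs ht T hfree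
  have hfix : ∀ a : A, a * a = 1 → ∃ r ∈ R, ∃ a' : A, a' * a' = 1 ∧ a' • r = r ∧ ∃ g : A, a = g * a' * g⁻¹ := by
    intro a ha
    obtain ⟨v, hv⟩ := involution_fixes hs ht T ha
    obtain ⟨g, r, hr, rfl⟩ := hcov v
    refine ⟨r, hr, g⁻¹ * a * g, ?_, ?_, g, by group⟩
    · have : g⁻¹ * a * g * (g⁻¹ * a * g) = g⁻¹ * (a * a) * g := by group
      rw [this, ha]; group
    · rw [mul_smul, mul_smul, hv, inv_smul_smul]
  have hfix' : ∃ r1 ∈ R, ∃ r2 ∈ R, ∃ a' b' : A, a' * a' = 1 ∧ b' * b' = 1 ∧ a' • r1 = r1 ∧ b' • r2 = r2 ∧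
      (∃ g : A, a = g * a' * g⁻¹) ∧ (∃ g : A, b = g * b' * g⁻¹) ∧ (a = b → r1 = r2 ∧ a' = b') := by
    obtain ⟨r1, h1, a', h2, h3, h4⟩ := hfix a ha
    by_cases hE : a = b
    · exact ⟨r1, h1, r1, h1, a', a', h2, h2, h3, h3, h4, hE ▸ h4, fun _ => ⟨rfl, rfl⟩⟩
    · obtain ⟨r2, h1', b', h2', h3', h4'⟩ := hfix b hb
      exact ⟨r1, h1, r2, h1', a', b', h2, h2', h3, h3', h4, h4', fun h => absurd h hE⟩
  obtain ⟨r1, hr1, r2, hr2, a', b', ha', hb', har, hbr, ⟨g1, hg1⟩, ⟨g2, hg2⟩, hE⟩ := hfix'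
  have htriv : ∀ (Q : Type) [Group Q] (Θ : A →* Q), Θ a' = 1 → Θ b' = 1 → ∀ x, Θ x = 1 := by
    intro Q _ Θ h1 h2
    apply hom_trivial_of_normalClosure hab
    rintro x (rfl | rfl)
    · rw [hg1]; simp [h1]
    · rw [hg2]; simp [h2]
  have hΛ : IsEmpty Λ := by
    refine ⟨fun l => ?_⟩
    obtain ⟨Θ, -, h2⟩ := huniv (FreeGroup Λ) (fun _ _ => 1) (by simp) FreeGroup.of
    have h3 := h2 l
    rw [htriv _ Θ (free_sq (by rw [← map_mul, ha', map_one]))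
      (free_sq (by rw [← map_mul, hb', map_one]))] at h3
    exact FreeGroup.of_ne_one l h3.symm
  have hproj : ∀ r ∈ R, ∃ π : A →* MulAction.stabilizer A r,
      (∀ g : MulAction.stabilizer A r, π g = g) ∧
      ∀ r' ∈ R, r' ≠ r → ∀ g : A, g • r' = r' → π g = 1 := by
    intro r hr
    obtain ⟨π, h1, -⟩ := huniv (MulAction.stabilizer A r)
      (fun v g => if h : v = r ∧ g • r = r then ⟨g, h.2⟩ else 1) (by
        intro v hv g g' hg hg'
        by_cases h : v = r
        · subst h
          have : (g * g') • v = v := by rw [mul_smul, hg', hg]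
          simp only [hg, hg', this, and_self, dite_true]; rfl
        · simp [h]) (fun _ => 1)
    refine ⟨π, ?_, ?_⟩
    · rintro ⟨g, hg⟩
      rw [h1 r hr g hg, dif_pos ⟨rfl, hg⟩]
    · intro r' hr' hne g hg
      rw [h1 r' hr' g hg, dif_neg (fun h => hne h.1)]
  have ha'' : (⟨a', har⟩ : MulAction.stabilizer A r1) * ⟨a', har⟩ = 1 := Subtype.ext ha'
  have hb'' : (⟨b', hbr⟩ : MulAction.stabilizer A r2) * ⟨b', hbr⟩ = 1 := Subtype.ext hb'
  refine ⟨r1, r2, ⟨a', har⟩, ⟨b', hbr⟩, ha'', hb'', hE, ?_, ?_, ?_⟩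
  · rw [eq_top_iff, ← hcl, Subgroup.closure_le]
    rintro g (⟨r, hr, h⟩ | ⟨l, -⟩)
    · by_cases h1 : r = r1
      · subst h1; exact Subgroup.subset_closure (Or.inl h)
      by_cases h2 : r = r2
      · subst h2; exact Subgroup.subset_closure (Or.inr h)
      obtain ⟨π, hπ1, hπ2⟩ := hproj r hr
      have h3 := hπ1 ⟨g, h⟩
      rw [htriv _ π (hπ2 r1 hr1 (Ne.symm h1) _ har) (hπ2 r2 hr2 (Ne.symm h2) _ hbr)] at h3
      have : g = 1 := (congrArg Subtype.val h3).symm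
      rw [this]; exact Subgroup.one_mem _
    · exact hΛ.elim l
  · intro hne
    constructor
    · obtain ⟨π, hπ1, hπ2⟩ := hproj r1 hr1
      apply normalClosure_map_top hab π (fun g => ⟨g, hπ1 g⟩)
      rintro x (rfl | rfl)
      · rw [hg1, map_mul, map_mul, map_inv]
        apply Subgroup.normalClosure_normal.conj_mem
        apply Subgroup.subset_normalClosure
        exact hπ1 ⟨a', har⟩
      · rw [hg2, map_mul, map_mul, map_inv, hπ2 r2 hr2 (Ne.symm hne) _ hbr]
        simp
    · obtain ⟨π, hπ1, hπ2⟩ := hproj r2 hr2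
      apply normalClosure_map_top hab π (fun g => ⟨g, hπ1 g⟩)
      rintro x (rfl | rfl)
      · rw [hg1, map_mul, map_mul, map_inv, hπ2 r1 hr1 hne _ har]
        simp
      · rw [hg2, map_mul, map_mul, map_inv]
        apply Subgroup.normalClosure_normal.conj_mem
        apply Subgroup.subset_normalClosure
        exact hπ1 ⟨b', hbr⟩
  · intro h
    subst h
    obtain ⟨π, hπ1, hπ2⟩ := hproj r1 hr1
    apply normalClosure_map_top hab π (fun g => ⟨g, hπ1 g⟩)
    rintro x (rfl | rfl)
    · rw [hg1, map_mul, map_mul, map_inv]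
      apply Subgroup.normalClosure_normal.conj_mem
      apply Subgroup.subset_normalClosure
      left
      exact hπ1 ⟨a', har⟩
    · rw [hg2, map_mul, map_mul, map_inv]
      apply Subgroup.normalClosure_normal.conj_mem
      apply Subgroup.subset_normalClosure
      right
      exact hπ1 ⟨b', hbr⟩

theorem le_of_closure_subtype {A : Type} [Group A] {H L : Subgroup A} {S : Set H}
    (hS : Subgroup.closure S = ⊤) (h : ∀ x ∈ S, (x : A) ∈ L) : H ≤ L := by
  have : Subgroup.closure S ≤ L.comap H.subtype := by
    rw [Subgroup.closure_le]; exact h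
  rw [hS] at this
  intro x hx
  exact this (show (⟨x, hx⟩ : H) ∈ ⊤ from trivial)

theorem treeQ {A V E : Type} [Group A] [MulAction A V] [MulAction A E]
    {s t : E → V} (hs : ∀ (g : A) e, s (g • e) = g • s e) (ht : ∀ (g : A) e, t (g • e) = g • t e)
    (T : TreeData V E s t) (hfree : ∀ (g : A) (e : E), g • e = e → g = 1)
    (hst : ∀ v : V, Q1 (MulAction.stabilizer A v) ∧ Q2 (MulAction.stabilizer A v)) :
    Q1 A ∧ Q2 A := by
  constructor
  · intro a ha hn
    obtain ⟨r1, r2, a', b', ha', hb', hE, hcl, -, h2⟩ := treeQ_core hs ht T hfree ha ha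
      (by simpa using hn)
    obtain ⟨rfl, hE⟩ := hE rfl
    have hE : a' = b' := Subtype.ext hE
    subst hE
    have h2 := h2 rfl
    simp only [Set.pair_eq_singleton] at h2
    obtain ⟨x, hx, hx'⟩ := (hst r1).1 a' ha' h2
    refine ⟨x, congrArg Subtype.val hx, ?_⟩
    rw [eq_top_iff, ← hcl, Subgroup.closure_le, Set.union_self]
    apply le_of_closure_subtype hx'
    rintro _ rfl
    exact Subgroup.subset_closure rfl
  · intro a b ha hb hn
    obtain ⟨r1, r2, a', b', ha', hb', -, hcl, h1, h2⟩ := treeQ_core hs ht T hfree ha hb hn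
    by_cases hr : r1 = r2
    · subst hr
      obtain ⟨x, y, hx, hy, hxy⟩ := (hst r1).2 a' b' ha' hb' (h2 rfl)
      refine ⟨x, y, congrArg Subtype.val hx, congrArg Subtype.val hy, ?_⟩
      rw [eq_top_iff, ← hcl, Subgroup.closure_le, Set.union_self]
      apply le_of_closure_subtype hxy
      rintro _ (rfl | rfl)
      · exact Subgroup.subset_closure (Or.inl rfl)
      · exact Subgroup.subset_closure (Or.inr rfl)
    · obtain ⟨x, hx, hx'⟩ := (hst r1).1 a' ha' (h1 hr).1
      obtain ⟨y, hy, hy'⟩ := (hst r2).1 b' hb' (h1 hr).2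
      refine ⟨x, y, congrArg Subtype.val hx, congrArg Subtype.val hy, ?_⟩
      rw [eq_top_iff, ← hcl, Subgroup.closure_le, Set.union_subset_iff]
      constructor
      · apply le_of_closure_subtype hx'
        rintro _ rfl
        exact Subgroup.subset_closure (Or.inl rfl)
      · apply le_of_closure_subtype hy'
        rintro _ rfl
        exact Subgroup.subset_closure (Or.inr rfl)

end OneRel

namespace OneRel

structure Split (G Y : Type) [Group G] where
  V0 : Subgroup G
  Es : Y → Subgroup G
  τ : Y → G
  hE : ∀ y, Es y ≤ V0
  hE' : ∀ y, ∀ u ∈ Es y, (τ y)⁻¹ * u * τ y ∈ V0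
  gen : ∀ L : Subgroup G, V0 ≤ L → (∀ y, τ y ∈ L) → ∀ x, x ∈ L
  univ : ∀ (Q : Type) [Group Q] (f : V0 →* Q) (c : Y → Q),
    (∀ y u (hu : u ∈ Es y), f ⟨u, hE y hu⟩ * c y = c y * f ⟨_, hE' y u hu⟩) →
    ∃ H : G →* Q, (∀ v : V0, H v = f v) ∧ ∀ y, H (τ y) = c y

namespace Split

variable {G Y : Type} [Group G] (S : Split G Y)

abbrev V : Type := G ⧸ S.V0

abbrev E : Type := Σ y, G ⧸ S.Es y

def src (e : S.E) : S.V := Subgroup.quotientMapOfLE (S.hE e.1) e.2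

def tgt (e : S.E) : S.V :=
  Quotient.liftOn' e.2 (fun x => (QuotientGroup.mk (x * S.τ e.1) : G ⧸ S.V0)) (by
    intro a b hab
    rw [QuotientGroup.leftRel_apply] at hab
    rw [QuotientGroup.eq]
    have := S.hE' _ _ hab
    simpa [mul_assoc] using this)

theorem src_mk (y : Y) (x : G) : S.src ⟨y, QuotientGroup.mk x⟩ = QuotientGroup.mk x := rfl

theorem tgt_mk (y : Y) (x : G) : S.tgt ⟨y, QuotientGroup.mk x⟩ = QuotientGroup.mk (x * S.τ y) := rfl

theorem src_smul (g : G) (e : S.E) : S.src (g • e) = g • S.src e := by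
  obtain ⟨y, q⟩ := e
  obtain ⟨x, rfl⟩ := QuotientGroup.mk_surjective q
  rfl

theorem tgt_smul (g : G) (e : S.E) : S.tgt (g • e) = g • S.tgt e := by
  obtain ⟨y, q⟩ := e
  obtain ⟨x, rfl⟩ := QuotientGroup.mk_surjective q
  change S.tgt ⟨y, QuotientGroup.mk (g * x)⟩ = _
  rw [tgt_mk, tgt_mk, mul_assoc]
  rfl

/-- right translation action on functions -/
def rtr (G P : Type) [Group G] [Group P] : G →* MulAut (G → P) where
  toFun g :=
    { toFun := fun f x => f (x * g)
      invFun := fun f x => f (x * g⁻¹)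
      left_inv := fun f => by funext x; simp
      right_inv := fun f => by funext x; simp
      map_mul' := fun f f' => rfl }
  map_one' := by ext f x; simp
  map_mul' g g' := by
    ext f x
    change f (x * (g * g')) = f (x * g * g')
    rw [mul_assoc]

theorem tree : TreeData S.V S.E S.src S.tgt where
  nonempty := ⟨QuotientGroup.mk 1⟩
  conn := by
    intro U hU hcl
    let N : Subgroup G :=
      { carrier := {g | ∀ x : G, (QuotientGroup.mk x : S.V) ∈ U ↔ (QuotientGroup.mk (x * g) : S.V) ∈ U}
        one_mem' := by intro x; rw [mul_one]
        mul_mem' := by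
          intro a b ha hb x
          rw [ha x, hb (x * a), mul_assoc]
        inv_mem' := by
          intro a ha x
          rw [ha (x * a⁻¹), inv_mul_cancel_right] }
    have hN : ∀ x, x ∈ N := by
      apply S.gen
      · intro v hv x
        have : (QuotientGroup.mk x : S.V) = QuotientGroup.mk (x * v) := by
          rw [QuotientGroup.eq]; simpa using hv
        rw [this]
      · intro y x
        exact hcl ⟨y, QuotientGroup.mk x⟩
    obtain ⟨u, hu⟩ := hU
    obtain ⟨x, rfl⟩ := QuotientGroup.mk_surjective u
    rw [Set.eq_univ_iff_forall]
    intro v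
    obtain ⟨x', rfl⟩ := QuotientGroup.mk_surjective v
    have := (hN (x⁻¹ * x') x).1 hu
    simpa using this
  pot := by
    intro P _ d
    let c : Y → (G → P) ⋊[rtr G P] G := fun y => ⟨fun x => d ⟨y, QuotientGroup.mk x⟩, S.τ y⟩
    obtain ⟨H, h1, h2⟩ := S.univ ((G → P) ⋊[rtr G P] G)
      (SemidirectProduct.inr.comp S.V0.subtype) c (by
        intro y u hu
        apply SemidirectProduct.ext
        · simp only [c, MonoidHom.comp_apply, SemidirectProduct.mul_left, SemidirectProduct.left_inr,
            SemidirectProduct.right_inr, map_one, one_mul, mul_one]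
          funext x
          change d ⟨y, QuotientGroup.mk (x * u)⟩ = _
          congr 2
          rw [QuotientGroup.eq]
          simpa using hu
        · simp only [c, MonoidHom.comp_apply, SemidirectProduct.mul_right,
            SemidirectProduct.right_inr, Subgroup.coe_subtype]
          group)
    have hright : ∀ g, (H g).right = g := by
      let L : Subgroup G := ((SemidirectProduct.rightHom).comp H).eqLocus (MonoidHom.id G)
      apply S.gen L
      · intro v hv
        change (H v).right = v
        rw [h1 ⟨v, hv⟩]; rfl
      · intro y
        change (H (S.τ y)).right = _
        rw [h2]
        rfl
    let D0 : G → P := fun g => (H g).left 1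
    have hD0 : ∀ x g, D0 (x * g) = D0 x * (H g).left x := by
      intro x g
      simp only [D0, map_mul, SemidirectProduct.mul_left]
      change _ * (H g).left (1 * (H x).right) = _
      rw [hright, one_mul]
    refine ⟨fun v => Quotient.liftOn' v D0 ?_, ?_⟩
    · intro a b hab
      rw [QuotientGroup.leftRel_apply] at hab
      have := hD0 a (a⁻¹ * b)
      rw [mul_inv_cancel_left, h1 ⟨_, hab⟩] at this
      rw [this]
      simp
    · rintro ⟨y, q⟩
      obtain ⟨x, rfl⟩ := QuotientGroup.mk_surjective q
      change D0 (x * S.τ y) = D0 x * _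
      rw [hD0, h2]

theorem fix {a : G} (ha : a * a = 1) : ∃ x : G, x⁻¹ * a * x ∈ S.V0 := by
  obtain ⟨v, hv⟩ := involution_fixes S.src_smul S.tgt_smul S.tree ha
  obtain ⟨x, rfl⟩ := QuotientGroup.mk_surjective v
  refine ⟨x, ?_⟩
  have : (QuotientGroup.mk (a * x) : S.V) = QuotientGroup.mk x := hv
  rw [eq_comm, QuotientGroup.eq] at this
  simpa [mul_assoc] using this

theorem Q_of (hV : HQ S.V0) {A : Type} [Group A] (j : A →* G) (hj : Function.Injective j)
    (hfree : ∀ (x : G) y a, x⁻¹ * j a * x ∈ S.Es y → a = 1) : Q1 A ∧ Q2 A := by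
  let _ : MulAction A S.V := MulAction.compHom S.V j
  let _ : MulAction A S.E := MulAction.compHom S.E j
  apply treeQ (s := S.src) (t := S.tgt) (fun g e => S.src_smul (j g) e)
    (fun g e => S.tgt_smul (j g) e) S.tree
  · rintro a ⟨y, q⟩ h
    obtain ⟨x, rfl⟩ := QuotientGroup.mk_surjective q
    apply hfree x y a
    have h' : (⟨y, QuotientGroup.mk (j a * x)⟩ : S.E) = ⟨y, QuotientGroup.mk x⟩ := h
    have h2 := eq_of_heq (Sigma.mk.inj h').2
    rw [eq_comm, QuotientGroup.eq] at h2
    simpa [mul_assoc] using h2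
  · intro v
    obtain ⟨x, rfl⟩ := QuotientGroup.mk_surjective v
    let i0 : A →* G := ((MulAut.conj x⁻¹).toMonoidHom).comp j
    have hi0 : Function.Injective i0 := (MulAut.conj x⁻¹).injective.comp hj
    let i : MulAction.stabilizer A (QuotientGroup.mk x : S.V) →* S.V0 :=
      (i0.comp (Subgroup.subtype _)).codRestrict S.V0 (by
        rintro ⟨a, ha⟩
        have : (QuotientGroup.mk (j a * x) : S.V) = QuotientGroup.mk x := ha
        rw [eq_comm, QuotientGroup.eq] at this
        simpa [i0, mul_assoc] using this)
    apply hV _ i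
    intro a b hab
    have : i0 a = i0 b := congrArg Subtype.val hab
    exact Subtype.ext (hi0 this)

end Split

end OneRel

namespace OneRel

open FreeGroup (of)

/-- one relator quotient -/
abbrev OR {H : Type} [Group H] (x : H) : Type := H ⧸ Subgroup.normalClosure {x}

abbrev nc {H : Type} [Group H] (x : H) : Subgroup H := Subgroup.normalClosure {x}

def orLift {H Q : Type} [Group H] [Group Q] {x : H} (f : H →* Q) (hf : f x = 1) : OR x →* Q :=
  QuotientGroup.lift _ f (by
    have : nc x ≤ f.ker := Subgroup.normalClosure_le_normal (by simpa using hf)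
    exact this)

theorem orLift_mk {H Q : Type} [Group H] [Group Q] {x : H} (f : H →* Q) (hf : f x = 1) (h : H) :
    orLift f hf (QuotientGroup.mk h) = f h := rfl

theorem mem_nc_self {H : Type} [Group H] (x : H) : x ∈ nc x := Subgroup.subset_normalClosure rfl

theorem or_mk_eq_one {H : Type} [Group H] {x : H} {h : H} :
    (QuotientGroup.mk h : OR x) = 1 ↔ h ∈ nc x := QuotientGroup.eq_one_iff h

theorem nc_le_ker {H Q : Type} [Group H] [Group Q] {x : H} (f : H →* Q) (hf : f x = 1) {w : H}
    (hw : w ∈ nc x) : f w = 1 := by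
  have : nc x ≤ f.ker := Subgroup.normalClosure_le_normal (by simpa using hf)
  exact this hw

theorem nc_pow_le {H : Type} [Group H] (x : H) (n : ℕ) : nc (x ^ n) ≤ nc x := by
  apply Subgroup.normalClosure_le_normal
  simpa using Subgroup.pow_mem _ (mem_nc_self x) n

theorem nc_conj {H : Type} [Group H] (x g : H) : nc (g * x * g⁻¹) = nc x := by
  apply le_antisymm
  · apply Subgroup.normalClosure_le_normal
    simpa using Subgroup.normalClosure_normal.conj_mem _ (mem_nc_self x) g
  · apply Subgroup.normalClosure_le_normal
    have := Subgroup.normalClosure_normal.conj_mem _ (mem_nc_self (g * x * g⁻¹)) g⁻¹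
    simp only [Set.singleton_subset_iff, SetLike.mem_coe]
    convert this using 1; group

theorem nc_inv {H : Type} [Group H] (x : H) : nc (x⁻¹) = nc x := by
  apply le_antisymm
  · apply Subgroup.normalClosure_le_normal
    simpa using mem_nc_self x
  · apply Subgroup.normalClosure_le_normal
    simpa using Subgroup.inv_mem _ (mem_nc_self x⁻¹)

/-- `x` is not a proper power -/
def NP {H : Type} [Group H] (x : H) : Prop := ∀ (S : H) (k : ℕ), 1 ≤ k → x = S ^ k → k = 1

theorem NP.conj {H : Type} [Group H] {x : H} (h : NP x) (g : H) : NP (g * x * g⁻¹) := by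
  intro S k hk hS
  apply h (g⁻¹ * S * g) k hk
  have := conj_pow (i := k) (a := g⁻¹) (b := S)
  rw [inv_inv] at this
  rw [this, ← hS]; group

theorem NP.ne_one {H : Type} [Group H] {x : H} (h : NP x) : x ≠ 1 := by
  rintro rfl
  exact absurd (h 1 2 (by norm_num) (by simp)) (by norm_num)

def No2 (G : Type) [Group G] : Prop := ∀ a : G, a * a = 1 → a = 1

theorem No2.of_injective {G G' : Type} [Group G] [Group G'] (h : No2 G') (j : G →* G')
    (hj : Function.Injective j) : No2 G := by
  intro a ha
  apply hj
  rw [map_one]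
  exact h _ (by rw [← map_mul, ha, map_one])

theorem HQ_of_comm {G : Type} [Group G] (h : ∀ a b : G, a * b = b * a) : HQ G := by
  intro A _ j hj
  have hc : ∀ a b : A, a * b = b * a := fun a b => hj (by rw [map_mul, map_mul, h])
  have hn : ∀ S : Set A, Subgroup.normalClosure S = Subgroup.closure S := by
    intro S
    apply le_antisymm _ Subgroup.closure_le_normalClosure
    have : (Subgroup.closure S).Normal := ⟨fun x hx g => by rw [hc g x]; simpa using hx⟩
    exact Subgroup.normalClosure_le_normal Subgroup.subset_closure
  refine ⟨fun a ha h => ⟨a, ha, by rw [← hn, h]⟩, fun a b ha hb h => ⟨a, b, ha, hb, by rw [← hn, h]⟩⟩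

/-! ### free groups -/

variable {X : Type}

def lset (z : X) : Subgroup (FreeGroup X) := Subgroup.closure (FreeGroup.of '' {z}ᶜ)

open Classical in
def letters (r : FreeGroup X) : Set X := {x | ∃ b, (x, b) ∈ r.toWord}

open Classical in
noncomputable def nrm (r : FreeGroup X) : ℕ := r.norm

open Classical in
theorem mem_letters {r : FreeGroup X} {x : X} : x ∈ letters r ↔ ∃ b, (x, b) ∈ r.toWord := by
  exact Iff.rfl

open Classical in
theorem nrm_def (r : FreeGroup X) : nrm r = r.toWord.length := rfl

theorem nrm_mul_le (a b : FreeGroup X) : nrm (a * b) ≤ nrm a + nrm b := by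
  classical
  unfold nrm
  exact FreeGroup.norm_mul_le a b

theorem nrm_inv (a : FreeGroup X) : nrm a⁻¹ = nrm a := by
  classical
  unfold nrm
  exact FreeGroup.norm_inv_eq

theorem nrm_one : nrm (1 : FreeGroup X) = 0 := by
  classical
  unfold nrm
  exact FreeGroup.norm_one

theorem nrm_of (x : X) : nrm (of x) = 1 := by
  classical
  unfold nrm
  exact FreeGroup.norm_of x

open Classical in
/-- induction along the letters of `r`. -/
theorem word_sum {r : FreeGroup X} {Z : Type} (f : FreeGroup X →* FreeGroup Z) (c : X → ℕ)
    (hc : ∀ x ∈ letters r, nrm (f (of x)) ≤ c x) :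
    nrm (f r) ≤ (r.toWord.map (fun p => c p.1)).sum := by
  have key : ∀ L : List (X × Bool), (∀ p ∈ L, nrm (f (of p.1)) ≤ c p.1) →
      nrm (f (FreeGroup.mk L)) ≤ (L.map (fun p => c p.1)).sum := by
    intro L
    induction L with
    | nil => intro _; rw [← FreeGroup.one_eq_mk, map_one, nrm_one]; simp
    | cons p L ih =>
      intro h
      have h1 : FreeGroup.mk (p :: L) = FreeGroup.mk [p] * FreeGroup.mk L := by
        rw [FreeGroup.mul_mk]; rfl
      rw [h1, map_mul]
      refine (nrm_mul_le _ _).trans ?_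
      rw [List.map_cons, List.sum_cons]
      apply add_le_add _ (ih (fun q hq => h q (List.mem_cons_of_mem _ hq)))
      have h2 := h p List.mem_cons_self
      obtain ⟨x, _ | _⟩ := p
      · have : FreeGroup.mk [(x, false)] = (of x)⁻¹ := rfl
        rw [this, map_inv, nrm_inv]; exact h2
      · exact h2
  conv_lhs => rw [← FreeGroup.mk_toWord (x := r)]
  exact key _ (fun p hp => hc _ (mem_letters.2 ⟨p.2, hp⟩))

open Classical in
theorem sum_lt {r : FreeGroup X} {z : X} (hz : z ∈ letters r) {c : X → ℕ} (hc : ∀ x, c x ≤ 1)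
    (h0 : c z = 0) : (r.toWord.map (fun p => c p.1)).sum < nrm r := by
  obtain ⟨b, hb⟩ := mem_letters.1 hz
  rw [nrm_def]
  have key : ∀ L : List (X × Bool), (L.map (fun p => c p.1)).sum ≤ L.length ∧
      ((z, b) ∈ L → (L.map (fun p => c p.1)).sum < L.length) := by
    intro L
    induction L with
    | nil => simp
    | cons p L ih =>
      have := hc p.1
      simp only [List.map_cons, List.sum_cons, List.length_cons, List.mem_cons]
      refine ⟨by have := ih.1; omega, ?_⟩
      rintro (rfl | h)
      · have := ih.1; simp only [h0]; omega
      · have := ih.2 h; omega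
  exact (key _).2 hb

theorem nrm_lift_lt {r : FreeGroup X} {z : X} (hz : z ∈ letters r) {Z : Type}
    (f : FreeGroup X →* FreeGroup Z) (hf : ∀ x, nrm (f (of x)) ≤ 1) (h0 : f (of z) = 1) :
    nrm (f r) < nrm r := by
  classical
  refine lt_of_le_of_lt (word_sum f (fun x => nrm (f (of x))) (fun x _ => le_rfl)) ?_
  exact sum_lt hz hf (by rw [h0, nrm_one])

theorem nrm_lift_le {r : FreeGroup X} {Z : Type}
    (f : FreeGroup X →* FreeGroup Z) (hf : ∀ x, nrm (f (of x)) ≤ 1) :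
    nrm (f r) ≤ nrm r := by
  classical
  refine (word_sum f (fun _ => 1) (fun x _ => hf x)).trans ?_
  rw [nrm_def]; simp

theorem mem_closure_letters (r : FreeGroup X) : r ∈ Subgroup.closure (of '' letters r) := by
  classical
  have key : ∀ L : List (X × Bool), (∀ p ∈ L, p.1 ∈ letters r) →
      FreeGroup.mk L ∈ Subgroup.closure (of '' letters r) := by
    intro L
    induction L with
    | nil => intro _; rw [← FreeGroup.one_eq_mk]; exact Subgroup.one_mem _
    | cons p L ih =>
      intro h
      have h1 : FreeGroup.mk (p :: L) = FreeGroup.mk [p] * FreeGroup.mk L := by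
        rw [FreeGroup.mul_mk]; rfl
      rw [h1]
      apply Subgroup.mul_mem _ _ (ih (fun q hq => h q (List.mem_cons_of_mem _ hq)))
      have h2 : of p.1 ∈ Subgroup.closure (of '' letters r) :=
        Subgroup.subset_closure ⟨p.1, h p List.mem_cons_self, rfl⟩
      obtain ⟨x, _ | _⟩ := p
      · exact Subgroup.inv_mem _ h2
      · exact h2
  have := key r.toWord (fun p hp => mem_letters.2 ⟨p.2, hp⟩)
  rwa [FreeGroup.mk_toWord] at this

/-- agreement of homs on letters -/
theorem eq_on_letters {Q : Type} [Group Q] {r : FreeGroup X} (f g : FreeGroup X →* Q)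
    (h : ∀ x ∈ letters r, f (of x) = g (of x)) : f r = g r := by
  have : Subgroup.closure (of '' letters r) ≤ f.eqLocus g := by
    rw [Subgroup.closure_le]
    rintro _ ⟨x, hx, rfl⟩
    exact h x hx
  exact this (mem_closure_letters r)

open Classical in
/-- retraction to the subgroup generated by `S`. -/
noncomputable def retr (S : Set X) : FreeGroup X →* FreeGroup S :=
  FreeGroup.lift (fun x => if h : x ∈ S then of ⟨x, h⟩ else 1)

theorem retr_of_mem {S : Set X} {x : X} (h : x ∈ S) : retr S (of x) = of ⟨x, h⟩ := by
  simp [retr, h]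

theorem retr_of_not_mem {S : Set X} {x : X} (h : x ∉ S) : retr S (of x) = 1 := by
  simp [retr, h]

theorem retr_nrm (S : Set X) (x : X) : nrm (retr S (of x)) ≤ 1 := by
  by_cases h : x ∈ S
  · rw [retr_of_mem h, nrm_of]
  · rw [retr_of_not_mem h, nrm_one]; exact Nat.zero_le _

abbrev incl (S : Set X) : FreeGroup S →* FreeGroup X := FreeGroup.map Subtype.val

theorem incl_injective (S : Set X) : Function.Injective (incl S) :=
  FreeGroup.map_injective Subtype.val_injective

theorem incl_retr {S : Set X} {r : FreeGroup X} (h : r ∈ Subgroup.closure (of '' S)) :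
    incl S (retr S r) = r := by
  have : Subgroup.closure (of '' S) ≤ ((incl S).comp (retr S)).eqLocus (MonoidHom.id _) := by
    rw [Subgroup.closure_le]
    rintro _ ⟨x, hx, rfl⟩
    change incl S (retr S (of x)) = of x
    rw [retr_of_mem hx]; simp
  exact this h

theorem closure_mono_set {S T : Set X} (h : S ⊆ T) :
    Subgroup.closure (of '' S) ≤ Subgroup.closure (of '' T) :=
  Subgroup.closure_mono (Set.image_mono h)

theorem incl_mem (S : Set X) (w : FreeGroup S) : incl S w ∈ Subgroup.closure (of '' S) := by
  have : Subgroup.closure (Set.range of) ≤ (Subgroup.closure (of '' S)).comap (incl S) := by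
    rw [Subgroup.closure_le]
    rintro _ ⟨x, rfl⟩
    apply Subgroup.subset_closure
    exact ⟨x, x.2, by simp⟩
  rw [FreeGroup.closure_range_of] at this
  exact this trivial

/-- minimal norm in conjugacy class -/
def MinConj (r : FreeGroup X) : Prop := ∀ g, nrm r ≤ nrm (g * r * g⁻¹)

theorem exists_minConj (r : FreeGroup X) : ∃ g, MinConj (g * r * g⁻¹) ∧ nrm (g * r * g⁻¹) ≤ nrm r := by
  classical
  have hex : ∃ m, ∃ g, nrm (g * r * g⁻¹) = m := ⟨_, 1, rfl⟩
  obtain ⟨g, hg⟩ := Nat.find_spec hex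
  have hmin : ∀ h, nrm (g * r * g⁻¹) ≤ nrm (h * r * h⁻¹) := by
    intro h
    rw [hg]; exact Nat.find_min' hex ⟨h, rfl⟩
  refine ⟨g, ?_, ?_⟩
  · intro h
    have := hmin (h * g)
    convert this using 2; group
  · simpa using hmin 1

/-- essential letters -/
theorem ess {r : FreeGroup X} (hr : MinConj r) {z : X} (hz : z ∈ letters r) {S : Set X} (hS : z ∉ S)
    (g : FreeGroup X) : g * r * g⁻¹ ∉ Subgroup.closure (of '' S) := by
  intro h
  have h1 := incl_retr h
  let κ := (incl S).comp (retr S)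
  have h2 : nrm (κ r) < nrm r := by
    refine lt_of_le_of_lt (nrm_lift_le (r := retr S r) (incl S) ?_) (nrm_lift_lt hz (retr S) (retr_nrm S) (retr_of_not_mem hS))
    intro x; simp [nrm_of]
  have h3 : κ r = ((κ g)⁻¹ * g) * r * ((κ g)⁻¹ * g)⁻¹ := by
    have : κ g * κ r * (κ g)⁻¹ = g * r * g⁻¹ := by
      rw [← map_inv, ← map_mul, ← map_mul]; exact h1
    calc κ r = (κ g)⁻¹ * (κ g * κ r * (κ g)⁻¹) * κ g := by group
      _ = _ := by rw [this]; group
  have := hr ((κ g)⁻¹ * g)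
  rw [← h3] at this
  omega

/-- Freiheitssatz property -/
def Fr (r : FreeGroup X) : Prop :=
  ∀ z : X, (∀ g, g * r * g⁻¹ ∉ lset z) → ∀ w ∈ lset z, w ∈ nc r → w = 1

theorem Fr.conj {r : FreeGroup X} {g : FreeGroup X} (h : Fr (g * r * g⁻¹)) : Fr r := by
  intro z hz w hw hwr
  apply h z _ w hw (by rwa [nc_conj])
  intro g'
  have := hz (g' * g)
  convert this using 2; group

theorem Fr.subset {r : FreeGroup X} (h : Fr r) {S : Set X}
    (hS : ∀ g, g * r * g⁻¹ ∉ Subgroup.closure (of '' S)) {w : FreeGroup X}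
    (hw : w ∈ Subgroup.closure (of '' S)) (hwr : w ∈ nc r) : w = 1 := by
  obtain ⟨g, hg, -⟩ := exists_minConj r
  have : ∃ z ∈ letters (g * r * g⁻¹), z ∉ S := by
    by_contra hcon
    push Not at hcon
    exact hS g (closure_mono_set hcon (mem_closure_letters _))
  obtain ⟨z, hz, hzS⟩ := this
  apply h z _ w _ hwr
  · intro g'
    have := ess hg hz (S := {z}ᶜ) (by simp) (g' * g⁻¹)
    have h2 : g' * g⁻¹ * (g * r * g⁻¹) * (g' * g⁻¹)⁻¹ = g' * r * g'⁻¹ := by group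
    rwa [h2] at this
  · refine closure_mono_set ?_ hw
    intro x hx h
    rw [Set.mem_singleton_iff] at h
    exact hzS (h ▸ hx)

def Good (r : FreeGroup X) : Prop :=
  Fr r ∧ (NP r → No2 (OR r) ∧ ∀ n : ℕ, HQ (OR (r ^ n)))

def orCongr {H : Type} [Group H] {x y : H} (h : nc x = nc y) : OR x ≃* OR y :=
  QuotientGroup.quotientMulEquivOfEq h

theorem Good.conj {r : FreeGroup X} {g : FreeGroup X} (h : Good (g * r * g⁻¹)) : Good r := by
  refine ⟨h.1.conj, fun hr => ?_⟩
  obtain ⟨h1, h2⟩ := h.2 (hr.conj g)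
  refine ⟨h1.of_injective (orCongr (nc_conj r g).symm).toMonoidHom (orCongr (nc_conj r g).symm).injective,
    fun n => ?_⟩
  have : nc (r ^ n) = nc ((g * r * g⁻¹) ^ n) := by rw [conj_pow, nc_conj]
  exact (h2 n).of_injective (orCongr this).toMonoidHom (orCongr this).injective

/-! ### the base case -/

noncomputable def baseSplit (z : X) (n : ℕ) : Split (OR ((of z) ^ n)) {y : X // y ≠ z} := by
  classical
  exact
  { V0 := Subgroup.zpowers (QuotientGroup.mk (of z))
    Es := fun _ => ⊥
    τ := fun y => QuotientGroup.mk (of y.1)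
    hE := fun _ => bot_le
    hE' := by
      rintro y u hu
      rw [Subgroup.mem_bot] at hu
      rw [hu]; simp
    gen := by
      intro L h1 h2 x
      obtain ⟨w, rfl⟩ := QuotientGroup.mk_surjective x
      have : Subgroup.closure (Set.range of) ≤ L.comap (QuotientGroup.mk' (nc ((of z) ^ n))) := by
        rw [Subgroup.closure_le]
        rintro _ ⟨y, rfl⟩
        by_cases hy : y = z
        · subst hy; exact h1 (Subgroup.mem_zpowers _)
        · exact h2 ⟨y, hy⟩
      rw [FreeGroup.closure_range_of] at this
      exact this trivial
    univ := by
      intro Q _ f c _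
      let f0 : FreeGroup X →* Q := FreeGroup.lift (fun x => if h : x = z then
        f ⟨QuotientGroup.mk (of z), Subgroup.mem_zpowers _⟩ else c ⟨x, h⟩)
      have hz : f0 (of z) = f ⟨QuotientGroup.mk (of z), Subgroup.mem_zpowers _⟩ := by simp [f0]
      refine ⟨orLift f0 ?_, ?_, ?_⟩
      · rw [map_pow, hz, ← map_pow]
        have : (⟨QuotientGroup.mk (of z), Subgroup.mem_zpowers _⟩ :
          Subgroup.zpowers (QuotientGroup.mk (of z) : OR ((of z) ^ n))) ^ n = 1 := by
          apply Subtype.ext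
          change (QuotientGroup.mk ((of z) ^ n) : OR ((of z) ^ n)) = 1
          rw [or_mk_eq_one]; exact mem_nc_self _
        rw [this, map_one]
      · rintro ⟨_, i, rfl⟩
        change orLift f0 _ ((QuotientGroup.mk (of z) : OR ((of z) ^ n)) ^ i) = _
        rw [map_zpow, orLift_mk, hz, ← map_zpow]
        congr 1
      · rintro ⟨y, hy⟩
        change f0 (of y) = _
        simp [f0, hy] }

theorem base_HQ (z : X) (n : ℕ) : HQ (OR ((of z) ^ n)) := by
  intro A _ j hj
  apply (baseSplit z n).Q_of _ j hj
  · intro x y a h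
    have : x⁻¹ * j a * x = 1 := h
    have : j a = 1 := by
      calc j a = x * (x⁻¹ * j a * x) * x⁻¹ := by group
        _ = 1 := by rw [this]; group
    exact hj (by rw [this, map_one])
  · apply HQ_of_comm
    rintro ⟨_, i, rfl⟩ ⟨_, j, rfl⟩
    apply Subtype.ext
    exact zpow_mul_comm _ _ _

theorem base_No2 (z : X) : No2 (OR (of z)) := by
  have : nc (of z) = nc (of z ^ 1) := by rw [pow_one]
  refine No2.of_injective (G' := OR (of z ^ 1)) ?_ (orCongr this).toMonoidHom (orCongr this).injective
  intro a ha
  obtain ⟨x, i, hx⟩ := (baseSplit z 1).fix ha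
  have h1 : (QuotientGroup.mk (of z) : OR (of z ^ 1)) = 1 := by
    rw [or_mk_eq_one, ← this]; exact mem_nc_self _
  simp only [h1, one_zpow] at hx
  calc a = x * (x⁻¹ * a * x) * x⁻¹ := by group
        _ = 1 := by rw [← hx]; group

theorem base_good {r : FreeGroup X} {z : X} (hz : letters r ⊆ {z}) : Good r := by
  classical
  have hk : ∃ k : ℤ, r = of z ^ k := by
    have h1 := closure_mono_set hz (mem_closure_letters r)
    rw [Set.image_singleton, Subgroup.mem_closure_singleton] at h1
    obtain ⟨k, hk⟩ := h1
    exact ⟨k, hk.symm⟩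
  refine ⟨?_, ?_⟩
  · intro z' hz' w hw hwr
    have : z' = z := by
      by_contra hne
      obtain ⟨k, rfl⟩ := hk
      apply hz' 1
      simp only [one_mul, inv_one, mul_one]
      apply Subgroup.zpow_mem
      exact Subgroup.subset_closure ⟨z, fun h => hne h.symm, rfl⟩
    subst this
    have h1 : retr ({z'}ᶜ) w = 1 := by
      apply nc_le_ker _ _ hwr
      obtain ⟨k, rfl⟩ := hk
      rw [map_zpow, retr_of_not_mem (by simp), one_zpow]
    rw [← incl_retr hw, h1, map_one]
  · intro hNP
    have hr : r = of z ∨ r = (of z)⁻¹ := by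
      obtain ⟨k, rfl⟩ := hk
      obtain ⟨m, rfl | rfl⟩ := k.eq_nat_or_neg
      · left
        rcases Nat.eq_zero_or_pos m with rfl | hm
        · exact absurd (by simp) hNP.ne_one
        · rw [hNP (of z) m hm (by simp)]; simp
      · right
        rcases Nat.eq_zero_or_pos m with rfl | hm
        · exact absurd (by simp) hNP.ne_one
        · rw [hNP (of z)⁻¹ m hm (by simp)]; simp
    have h1 : nc r = nc (of z) := by
      rcases hr with rfl | rfl
      · rfl
      · rw [nc_inv]
    have h2 : ∀ n : ℕ, nc (r ^ n) = nc (of z ^ n) := by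
      intro n
      rcases hr with rfl | rfl
      · rfl
      · rw [inv_pow, nc_inv]
    exact ⟨(base_No2 z).of_injective (orCongr h1).toMonoidHom (orCongr h1).injective,
      fun n => (base_HQ z n).of_injective (orCongr (h2 n)).toMonoidHom (orCongr (h2 n)).injective⟩

end OneRel

namespace OneRel

open FreeGroup (of)

def shiftEquiv (Y : Type) (n : ℤ) : Y × ℤ ≃ Y × ℤ where
  toFun p := (p.1, p.2 + n)
  invFun p := (p.1, p.2 - n)
  left_inv p := by simp
  right_inv p := by simp

def shiftHom (Y : Type) : Multiplicative ℤ →* MulAut (FreeGroup (Y × ℤ)) where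
  toFun n := FreeGroup.freeGroupCongr (shiftEquiv Y n.toAdd)
  map_one' := by
    apply MulEquiv.toMonoidHom_injective
    ext p
    simp [shiftEquiv]
  map_mul' a b := by
    apply MulEquiv.toMonoidHom_injective
    ext p
    simp [shiftEquiv]
    ring_nf

theorem shiftHom_of {Y : Type} (n : Multiplicative ℤ) (p : Y × ℤ) :
    shiftHom Y n (of p) = of (p.1, p.2 + n.toAdd) := by
  simp [shiftHom, shiftEquiv]

abbrev EE (Y : Type) : Type := FreeGroup (Y × ℤ) ⋊[shiftHom Y] Multiplicative ℤ

variable {Y : Type}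

def ss : EE Y := SemidirectProduct.inr (Multiplicative.ofAdd 1)

abbrev il : FreeGroup (Y × ℤ) →* EE Y := SemidirectProduct.inl

theorem il_injective : Function.Injective (il : FreeGroup (Y × ℤ) →* EE Y) :=
  SemidirectProduct.inl_injective

theorem ss_zpow (k : ℤ) : (ss : EE Y) ^ k = SemidirectProduct.inr (Multiplicative.ofAdd k) := by
  rw [ss, ← map_zpow, ← ofAdd_zsmul]; simp

theorem ss_conj (k : ℤ) (w : FreeGroup (Y × ℤ)) :
    (ss : EE Y) ^ k * il w * (ss ^ k)⁻¹ = il (shiftHom Y (Multiplicative.ofAdd k) w) := by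
  rw [ss_zpow, SemidirectProduct.inl_aut, map_inv]

theorem EE_gen (L : Subgroup (EE Y)) (h1 : ∀ y, il (of (y, 0)) ∈ L) (h2 : ss ∈ L) (x : EE Y) :
    x ∈ L := by
  have h3 : ∀ k : ℤ, (ss : EE Y) ^ k ∈ L := fun k => L.zpow_mem h2 k
  have h4 : ∀ w, il w ∈ L := by
    intro w
    have : Subgroup.closure (Set.range of) ≤ L.comap (il : FreeGroup (Y × ℤ) →* EE Y) := by
      rw [Subgroup.closure_le]
      rintro _ ⟨⟨y, i⟩, rfl⟩
      have h5 := ss_conj i (of (y, 0))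
      rw [shiftHom_of] at h5
      simp only [toAdd_ofAdd, zero_add] at h5
      change il (of (y, i)) ∈ L
      rw [← h5]
      exact L.mul_mem (L.mul_mem (h3 _) (h1 y)) (L.inv_mem (h3 _))
    rw [FreeGroup.closure_range_of] at this
    exact this trivial
  rw [← SemidirectProduct.inl_left_mul_inr_right x]
  apply L.mul_mem (h4 _)
  have := h3 (Multiplicative.toAdd x.right)
  rwa [ss_zpow, ofAdd_toAdd] at this

theorem EE_ext {Q : Type} [Group Q] {f g : EE Y →* Q}
    (h1 : ∀ y, f (il (of (y, 0))) = g (il (of (y, 0)))) (h2 : f ss = g ss) : f = g := by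
  apply MonoidHom.ext
  exact EE_gen (f.eqLocus g) h1 h2

def EE_lift {Q : Type} [Group Q] (f : Y → Q) (c : Q) : EE Y →* Q :=
  SemidirectProduct.lift (FreeGroup.lift (fun p : Y × ℤ => c ^ p.2 * f p.1 * (c ^ p.2)⁻¹))
    (zpowersHom Q c) (by
      intro n
      ext p
      simp only [MonoidHom.comp_apply, MulEquiv.coe_toMonoidHom, shiftHom_of, FreeGroup.lift_apply_of,
        MulAut.conj_apply, zpowersHom_apply]
      rw [add_comm, zpow_add]
      group)

theorem EE_lift_il {Q : Type} [Group Q] (f : Y → Q) (c : Q) (p : Y × ℤ) :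
    EE_lift f c (il (of p)) = c ^ p.2 * f p.1 * (c ^ p.2)⁻¹ := by
  simp [EE_lift]

theorem EE_lift_ss {Q : Type} [Group Q] (f : Y → Q) (c : Q) : EE_lift f c ss = c := by
  simp [EE_lift, ss]

/-! ### windows -/

def Wd (z : Y) (b : ℕ) : Set (Y × ℤ) := {p | p.1 = z → 0 ≤ p.2 ∧ p.2 ≤ b}

abbrev Wm (z : Y) (b : ℕ) : Type := {p : Y × ℤ // p ∈ Wd z b ∧ (p.1, p.2 + 1) ∈ Wd z b}

def wm (z : Y) (b : ℕ) : FreeGroup (Wm z b) →* FreeGroup (Wd z b) :=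
  FreeGroup.map (fun p => ⟨p.1, p.2.1⟩)

def wp (z : Y) (b : ℕ) : FreeGroup (Wm z b) →* FreeGroup (Wd z b) :=
  FreeGroup.map (fun p => ⟨_, p.2.2⟩)

theorem wm_inj (z : Y) (b : ℕ) : Function.Injective (wm z b) := by
  apply FreeGroup.map_injective
  rintro ⟨p, hp⟩ ⟨q, hq⟩ h
  have := congrArg Subtype.val h
  exact Subtype.ext this

theorem wp_inj (z : Y) (b : ℕ) : Function.Injective (wp z b) := by
  apply FreeGroup.map_injective
  rintro ⟨⟨y, i⟩, hp⟩ ⟨⟨y', i'⟩, hq⟩ h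
  simpa using h

theorem win_lift {z : Y} {b : ℕ} {Q : Type} [Group Q] (f : FreeGroup (Wd z b) →* Q) (c : Q)
    (h : ∀ p, f (wp z b (of p)) * c = c * f (wm z b (of p))) :
    ∃ H : EE Y →* Q, H ss = c ∧ ∀ w, H (il (incl _ w)) = f w := by
  have h0 : ∀ y : Y, (y, (0 : ℤ)) ∈ Wd z b := fun y _ => ⟨le_rfl, Int.natCast_nonneg _⟩
  let H := EE_lift (fun y => f (of ⟨(y, 0), h0 y⟩)) c
  refine ⟨H, EE_lift_ss _ _, ?_⟩
  have step : ∀ y i (h1 : (y, i) ∈ Wd z b) (h2 : (y, i + 1) ∈ Wd z b),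
      f (of ⟨(y, i + 1), h2⟩) = c * f (of ⟨(y, i), h1⟩) * c⁻¹ := by
    intro y i h1 h2
    have := h ⟨(y, i), h1, h2⟩
    rw [eq_mul_inv_iff_mul_eq]
    simpa [wp, wm] using this
  have key : ∀ y i (h1 : (y, i) ∈ Wd z b), f (of ⟨(y, i), h1⟩) = c ^ i * f (of ⟨(y, 0), h0 y⟩) * (c ^ i)⁻¹ := by
    intro y i
    induction i using Int.induction_on with
    | zero => intro h1; simp
    | succ i ih =>
      intro h1
      have h2 : (y, (i : ℤ)) ∈ Wd z b := by
        intro hy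
        have := h1 hy
        simp only at this ⊢
        omega
      rw [step y i h2 h1, ih h2, add_comm, zpow_add]; group
    | pred i ih =>
      intro h1
      have hy : y ≠ z := by
        intro hy
        have := h1 hy
        simp only at this
        omega
      have h2 : (y, (-i : ℤ)) ∈ Wd z b := fun h => absurd h hy
      have h3 := step y (-i - 1) h1 (by simpa using h2)
      simp only [sub_add_cancel] at h3
      rw [ih h2] at h3
      have : f (of ⟨(y, -i - 1), h1⟩) = c⁻¹ * (c * f (of ⟨(y, -i - 1), h1⟩) * c⁻¹) * c := by group
      rw [this, ← h3, sub_eq_add_neg, add_comm, zpow_add]; group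
  have : (H.comp il).comp (incl (Wd z b)) = f := by
    ext ⟨⟨y, i⟩, hp⟩
    simp only [MonoidHom.comp_apply, FreeGroup.map.of]
    rw [key y i hp]
    exact EE_lift_il _ _ _
  intro w
  exact DFunLike.congr_fun this w

/-- shift relation in `EE` -/
theorem ss_wm (z : Y) (b : ℕ) (w : FreeGroup (Wm z b)) :
    (ss : EE Y) * il (incl _ (wm z b w)) * ss⁻¹ = il (incl _ (wp z b w)) := by
  have h := ss_conj (Y := Y) 1 (incl _ (wm z b w))
  rw [zpow_one] at h
  rw [h]
  congr 1
  have : ((shiftHom Y (Multiplicative.ofAdd 1)).toMonoidHom.comp (incl _)).comp (wm z b) =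
      (incl _).comp (wp z b) := by
    ext ⟨⟨y, i⟩, hp⟩
    simp [wm, wp, shiftHom_of]
  exact DFunLike.congr_fun this w

section win

variable {z : Y} {b : ℕ} (q : FreeGroup (Wd z b))

abbrev GG : Type := OR (il (incl (Wd z b) q))

def k0 : FreeGroup (Wd z b) →* GG q := (QuotientGroup.mk' _).comp (il.comp (incl _))

def kk : OR q →* GG q := orLift (k0 q) (by
  change (QuotientGroup.mk (il (incl (Wd z b) q)) : GG q) = 1
  rw [or_mk_eq_one]; exact mem_nc_self _)

def tau : GG q := QuotientGroup.mk ss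

theorem tau_wm (w : FreeGroup (Wm z b)) : tau q * k0 q (wm z b w) * (tau q)⁻¹ = k0 q (wp z b w) :=
  congrArg (QuotientGroup.mk' (nc (il (incl (Wd z b) q)))) (ss_wm z b w)

theorem GG_lift {Q : Type} [Group Q] (f : FreeGroup (Wd z b) →* Q) (c : Q) (hf : f q = 1)
    (h : ∀ p, f (wp z b (of p)) * c = c * f (wm z b (of p))) :
    ∃ H : GG q →* Q, H (tau q) = c ∧ ∀ w, H (k0 q w) = f w := by
  obtain ⟨H, h1, h2⟩ := win_lift f c h
  exact ⟨orLift H (by rw [h2, hf]), h1, h2⟩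

theorem kk_inj (hm : ∀ w, wm z b w ∈ nc q → w = 1) (hp : ∀ w, wp z b w ∈ nc q → w = 1) :
    Function.Injective (kk q) := by
  let im : FreeGroup (Wm z b) →* OR q := (QuotientGroup.mk' _).comp (wm z b)
  let ip : FreeGroup (Wm z b) →* OR q := (QuotientGroup.mk' _).comp (wp z b)
  have him : Function.Injective im := by
    rw [injective_iff_map_eq_one]
    intro w hw
    exact hm w (or_mk_eq_one.1 hw)
  have hip : Function.Injective ip := by
    rw [injective_iff_map_eq_one]
    intro w hw
    exact hp w (or_mk_eq_one.1 hw)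
  let φ : im.range ≃* ip.range := (MonoidHom.ofInjective him).symm.trans (MonoidHom.ofInjective hip)
  have hφ : ∀ w, φ ⟨im w, ⟨w, rfl⟩⟩ = ⟨ip w, ⟨w, rfl⟩⟩ := by
    intro w
    have : (MonoidHom.ofInjective him).symm ⟨im w, ⟨w, rfl⟩⟩ = w := by
      rw [MulEquiv.symm_apply_eq]; rfl
    simp only [φ, MulEquiv.trans_apply, this]; rfl
  obtain ⟨H, h1, h2⟩ := GG_lift q (Q := HNNExtension (OR q) im.range ip.range φ)
    (HNNExtension.of.comp (QuotientGroup.mk' _)) HNNExtension.t (by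
      have : (QuotientGroup.mk' (nc q)) q = 1 := or_mk_eq_one.2 (mem_nc_self q)
      rw [MonoidHom.comp_apply, this, map_one]) (by
      intro p
      have := HNNExtension.t_mul_of (φ := φ) ⟨im (of p), ⟨_, rfl⟩⟩
      rw [hφ] at this
      exact this.symm)
  have : Function.Injective (H.comp (kk q)) := by
    have : H.comp (kk q) = HNNExtension.of := by
      ext w
      exact h2 (of w)
    rw [this]
    exact HNNExtension.of_injective _
  intro x y hxy
  apply this
  simp [hxy]

noncomputable def winSplit : Split (GG q) Unit where
  V0 := (k0 q).range
  Es := fun _ => ((k0 q).comp (wp z b)).range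
  τ := fun _ => tau q
  hE := by
    rintro - _ ⟨w, rfl⟩
    exact ⟨_, rfl⟩
  hE' := by
    rintro - _ ⟨w, rfl⟩
    refine ⟨wm z b w, ?_⟩
    rw [MonoidHom.comp_apply, ← tau_wm]; group
  gen := by
    intro L h1 h2 x
    obtain ⟨x, rfl⟩ := QuotientGroup.mk_surjective x
    apply EE_gen (L.comap (QuotientGroup.mk' _))
    · intro y
      exact h1 ⟨of ⟨(y, 0), fun _ => ⟨le_rfl, Int.natCast_nonneg _⟩⟩, rfl⟩
    · exact h2 ()
  univ := by
    intro Q _ f c h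
    have hq : k0 q q = 1 := or_mk_eq_one.2 (mem_nc_self _)
    obtain ⟨H, h1, h2⟩ := GG_lift q (f.comp (k0 q).rangeRestrict) (c ()) (by
        have : (k0 q).rangeRestrict q = 1 := Subtype.ext hq
        rw [MonoidHom.comp_apply, this, map_one]) (by
        intro p
        have := h () (k0 q (wp z b (of p))) ⟨_, rfl⟩
        refine this.trans ?_
        refine congrArg (fun v => c () * f v) (Subtype.ext ?_)
        change (tau q)⁻¹ * k0 q (wp z b (of p)) * tau q = k0 q (wm z b (of p))
        rw [← tau_wm]; group)
    refine ⟨H, ?_, fun _ => h1⟩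
    rintro ⟨_, w, rfl⟩
    exact h2 w

theorem win_No2 (hk : Function.Injective (kk q)) (h : No2 (OR q)) : No2 (GG q) := by
  intro a ha
  obtain ⟨x, w, hw⟩ := (winSplit q).fix ha
  have h1 : kk q (QuotientGroup.mk w) = x⁻¹ * a * x := hw
  have h2 : (QuotientGroup.mk w : OR q) = 1 := by
    apply h
    apply hk
    rw [map_mul, h1, map_one]
    calc x⁻¹ * a * x * (x⁻¹ * a * x) = x⁻¹ * (a * a) * x := by group
      _ = 1 := by rw [ha]; group
  rw [h2, map_one] at h1
  calc a = x * (x⁻¹ * a * x) * x⁻¹ := by group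
        _ = 1 := by rw [← h1]; group

theorem win_HQ (q' : FreeGroup (Wd z b)) (hqq : nc q ≤ nc q') (hk : Function.Injective (kk q))
    (hk' : Function.Injective (kk q')) (hp : ∀ w, wp z b w ∈ nc q' → w = 1)
    (h : HQ (OR q)) (h' : No2 (GG q')) : HQ (GG q) := by
  have hq' : q ∈ nc q' := hqq (mem_nc_self q)
  have hθ : k0 q' q = 1 := by
    have : kk q' (QuotientGroup.mk q) = 1 := by rw [or_mk_eq_one.2 hq', map_one]
    exact this
  let θ : GG q →* GG q' := orLift (QuotientGroup.mk' _) hθ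
  intro A _ j hj
  have main : (∀ a, θ (j a) = 1) → Q1 A ∧ Q2 A := by
    intro htr
    apply (winSplit q).Q_of _ j hj
    · rintro x - a ⟨w, hw⟩
      have h1 : k0 q (wp z b w) = x⁻¹ * j a * x := hw
      have h2 := congrArg θ h1
      rw [map_mul, map_mul, htr, mul_one, ← map_mul, inv_mul_cancel, map_one] at h2
      have h3 : kk q' (QuotientGroup.mk (wp z b w)) = 1 := h2
      rw [← map_one (kk q')] at h3
      have h4 := hp w (or_mk_eq_one.1 (hk' h3))
      rw [h4, map_one, map_one] at h1
      apply hj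
      rw [map_one]
      calc j a = x * (x⁻¹ * j a * x) * x⁻¹ := by group
        _ = 1 := by rw [← h1]; group
    · let e : OR q ≃* (kk q).range := MonoidHom.ofInjective hk
      have hr : (winSplit q).V0 ≤ (kk q).range := by
        rintro _ ⟨w, rfl⟩
        exact ⟨QuotientGroup.mk w, rfl⟩
      exact h.of_injective (e.symm.toMonoidHom.comp (Subgroup.inclusion hr))
        (e.symm.injective.comp (Subgroup.inclusion_injective hr))
  constructor
  · intro a ha hn
    refine (main ?_).1 a ha hn
    apply hom_trivial_of_normalClosure hn (θ.comp j)
    rintro x rfl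
    exact h' _ (by rw [← map_mul, ha, map_one])
  · intro a b ha hb hn
    refine (main ?_).2 a b ha hb hn
    apply hom_trivial_of_normalClosure hn (θ.comp j)
    rintro x (rfl | rfl)
    · exact h' _ (by rw [← map_mul, ha, map_one])
    · exact h' _ (by rw [← map_mul, hb, map_one])

end win

end OneRel

namespace OneRel

open FreeGroup (of)

theorem closure_map_mem {X Q : Type} [Group Q] {S : Set X} {K : Subgroup Q} (f : FreeGroup X →* Q)
    (h : ∀ x ∈ S, f (of x) ∈ K) {w : FreeGroup X} (hw : w ∈ Subgroup.closure (of '' S)) :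
    f w ∈ K := by
  have : Subgroup.closure (of '' S) ≤ K.comap f := by
    rw [Subgroup.closure_le]
    rintro _ ⟨x, hx, rfl⟩
    exact h x hx
  exact this hw

theorem map_range_mem {X Z : Type} (f : X → Z) (w : FreeGroup X) {S : Set Z} (h : ∀ x, f x ∈ S) :
    FreeGroup.map f w ∈ Subgroup.closure (of '' S) := by
  have hw : w ∈ Subgroup.closure (of '' (Set.univ : Set X)) := by
    rw [Set.image_univ, FreeGroup.closure_range_of]; trivial
  refine closure_map_mem (FreeGroup.map f) ?_ hw
  intro x _
  rw [FreeGroup.map.of]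
  exact Subgroup.subset_closure ⟨_, h x, rfl⟩

theorem retr_incl {X : Type} (S : Set X) (w : FreeGroup S) : retr S (incl S w) = w := by
  have : (retr S).comp (incl S) = MonoidHom.id _ := by
    ext x
    simp [retr]
  exact DFunLike.congr_fun this w

theorem nrm_map_le {X Z : Type} (f : X → Z) (w : FreeGroup X) : nrm (FreeGroup.map f w) ≤ nrm w := by
  apply nrm_lift_le
  intro x; simp [nrm_of]

theorem nrm_incl {X : Type} (S : Set X) (w : FreeGroup S) : nrm w ≤ nrm (incl S w) := by
  conv_lhs => rw [← retr_incl S w]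
  exact nrm_lift_le _ (retr_nrm S)

theorem letters_subset {X : Type} {S : Set X} {r : FreeGroup X}
    (h : r ∈ Subgroup.closure (of '' S)) : letters r ⊆ S := by
  intro z hz
  by_contra hzS
  have h1 := nrm_lift_lt hz (retr S) (retr_nrm S) (retr_of_not_mem hzS)
  have h2 := nrm_map_le Subtype.val (retr S r)
  have h3 : FreeGroup.map Subtype.val (retr S r) = r := incl_retr h
  rw [h3] at h2
  omega

theorem letters_finite {X : Type} (r : FreeGroup X) : (letters r).Finite := by
  classical
  apply Set.Finite.subset (r.toWord.map Prod.fst).toFinset.finite_toSet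
  intro x hx
  obtain ⟨b, hb⟩ := mem_letters.1 hx
  simp only [List.coe_toFinset, List.mem_map]
  exact ⟨(x, b), by convert hb, rfl⟩

variable {Y : Type}

open Classical in
noncomputable def zkill (z : Y) : EE Y →* EE Y :=
  EE_lift (fun y => if y = z then 1 else il (of (y, 0))) ss

/-- the `z`-free part -/
noncomputable def zf (z : Y) : Subgroup (EE Y) := (zkill z).eqLocus (MonoidHom.id _)

theorem mem_zf {z : Y} {x : EE Y} : x ∈ zf z ↔ zkill z x = x := Iff.rfl

theorem ss_mem_zf (z : Y) : ss ∈ zf z := EE_lift_ss _ _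

theorem il_of_eq (y : Y) (i : ℤ) : il (of (y, i)) = ss ^ i * il (of (y, 0)) * (ss ^ i)⁻¹ := by
  rw [ss_conj, shiftHom_of]; simp

theorem il_of_mem_zf {z y : Y} (i : ℤ) (h : y ≠ z) : il (of (y, i)) ∈ zf z := by
  rw [mem_zf, zkill, EE_lift_il, if_neg h, ← il_of_eq]

theorem il_mem_zf {z : Y} {l : FreeGroup (Y × ℤ)} :
    il l ∈ zf z ↔ l ∈ Subgroup.closure (of '' {p : Y × ℤ | p.1 ≠ z}) := by
  constructor
  · intro h
    rw [mem_zf] at h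
    have : (zkill z).comp il = il.comp ((incl {p : Y × ℤ | p.1 ≠ z}).comp (retr {p : Y × ℤ | p.1 ≠ z})) := by
      ext ⟨y, i⟩ : 1
      simp only [MonoidHom.comp_apply]
      by_cases hy : y = z
      · rw [zkill, EE_lift_il, if_pos hy, retr_of_not_mem (by simpa using hy)]
        simp
      · rw [retr_of_mem (show (y, i) ∈ {p : Y × ℤ | p.1 ≠ z} from hy)]
        rw [mem_zf.1 (il_of_mem_zf i hy)]
        simp
    have h2 := DFunLike.congr_fun this l
    simp only [MonoidHom.comp_apply] at h2
    rw [h] at h2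
    rw [il_injective h2]
    exact incl_mem _ _
  · exact fun h => closure_map_mem il (fun p hp => il_of_mem_zf p.2 hp) h

def L0 (Y : Type) : Subgroup (EE Y) := (Subgroup.closure (of '' {p : Y × ℤ | p.2 = 0})).map il

theorem nc_il {r : FreeGroup (Y × ℤ)} {w : EE Y} (h : w ∈ nc (il r)) : ∃ l, w = il l := by
  have : w.right = 1 := nc_le_ker (SemidirectProduct.rightHom (φ := shiftHom Y)) (by simp) h
  refine ⟨w.left, ?_⟩
  conv_lhs => rw [← SemidirectProduct.inl_left_mul_inr_right w, this]
  simp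

section core

variable {z : Y} {b : ℕ} {q : FreeGroup (Wd z b)}

theorem core_free (hmin : MinConj (incl _ q)) (hq : Fr q) {p : Y × ℤ} (hp : p ∈ letters (incl _ q))
    {S : Set (Wd z b)} (hS : ∀ x ∈ S, (x : Y × ℤ) ≠ p) {w : FreeGroup (Wd z b)}
    (hw : w ∈ Subgroup.closure (of '' S)) (hwn : w ∈ nc q) : w = 1 := by
  apply hq.subset _ hw hwn
  intro g hg
  apply ess hmin hp (S := Subtype.val '' S) _ (incl _ g)
  · rw [← map_inv, ← map_mul, ← map_mul]
    refine closure_map_mem (incl _) ?_ hg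
    intro x hx
    rw [FreeGroup.map.of]
    exact Subgroup.subset_closure ⟨_, ⟨x, hx, rfl⟩, rfl⟩
  · rintro ⟨x, hx, rfl⟩
    exact hS x hx rfl

theorem core_wm (hmin : MinConj (incl _ q)) (hq : Fr q)
    (hb : (z, (b : ℤ)) ∈ letters (incl _ q)) (w) (hw : wm z b w ∈ nc q) : w = 1 := by
  apply wm_inj
  rw [map_one]
  refine core_free hmin hq hb (S := {x | (x : Y × ℤ) ≠ (z, (b : ℤ))}) (fun x hx => hx) ?_ hw
  apply map_range_mem
  rintro ⟨⟨y, i⟩, h1, h2⟩ h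
  obtain ⟨rfl, rfl⟩ := Prod.mk.inj h
  have := (h2 rfl).2
  simp at this

theorem core_wp (hmin : MinConj (incl _ q)) (hq : Fr q)
    (hb : (z, (0 : ℤ)) ∈ letters (incl _ q)) (w) (hw : wp z b w ∈ nc q) : w = 1 := by
  apply wp_inj
  rw [map_one]
  refine core_free hmin hq hb (S := {x | (x : Y × ℤ) ≠ (z, (0 : ℤ))}) (fun x hx => hx) ?_ hw
  apply map_range_mem
  rintro ⟨⟨y, i⟩, h1, h2⟩ h
  obtain ⟨hy, h⟩ := Prod.mk.inj h
  have hy : y = z := hy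
  subst hy
  have h : i + 1 = 0 := h
  have : (0:ℤ) ≤ i := (h1 rfl).1
  omega

theorem core_inj (hk : Function.Injective (kk q)) {l : FreeGroup (Y × ℤ)}
    {S : Set (Y × ℤ)} (hS : S ⊆ Wd z b) (hl : l ∈ Subgroup.closure (of '' S)) (hn : il l ∈ nc (il (incl _ q))) :
    ∃ l' ∈ Subgroup.closure (of '' {x : Wd z b | (x : Y × ℤ) ∈ S}), l' ∈ nc q ∧ incl _ l' = l := by
  have h1 := incl_retr (closure_mono_set hS hl)
  refine ⟨retr _ l, ?_, ?_, h1⟩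
  · refine closure_map_mem _ ?_ hl
    intro x hx
    rw [retr_of_mem (hS hx)]
    exact Subgroup.subset_closure ⟨_, hx, rfl⟩
  · rw [← or_mk_eq_one]
    apply hk
    rw [map_one]
    have : kk q (QuotientGroup.mk (retr _ l)) = QuotientGroup.mk (il (incl _ (retr _ l))) := rfl
    rw [this, h1, or_mk_eq_one]
    exact hn

/-- conclusions of the induction step -/
def StepConcl (z : Y) (x : EE Y) : Prop :=
  (∀ w ∈ zf z, w ∈ nc x → w = 1) ∧
  ((∀ g, g * x * g⁻¹ ∉ L0 Y) → ∀ w ∈ L0 Y, w ∈ nc x → w = 1) ∧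
  (NP x → No2 (OR x) ∧ ∀ n : ℕ, HQ (OR (x ^ n)))

theorem core_step (hmin : MinConj (incl _ q)) (hq : Good q)
    (h0 : (z, (0 : ℤ)) ∈ letters (incl _ q)) (hb : (z, (b : ℤ)) ∈ letters (incl _ q)) :
    StepConcl z (il (incl _ q)) := by
  have hkq : ∀ q', nc q' ≤ nc q → Function.Injective (kk q') := by
    intro q' h
    exact kk_inj q' (fun w hw => core_wm hmin hq.1 hb w (h hw)) (fun w hw => core_wp hmin hq.1 h0 w (h hw))
  have hk := hkq q le_rfl
  refine ⟨?_, ?_, ?_⟩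
  · intro w hw hwn
    obtain ⟨l, rfl⟩ := nc_il hwn
    rw [il_mem_zf] at hw
    obtain ⟨l', h1, h2, rfl⟩ := core_inj hk (fun p hp h => absurd h hp) hw hwn
    rw [core_free hmin hq.1 h0 (S := {x : Wd z b | (x : Y × ℤ) ∈ {p : Y × ℤ | p.1 ≠ z}}) _ h1 h2]
    · simp
    · rintro x hx h
      apply hx
      rw [h]
  · intro hL w hw hwn
    have : ∃ p ∈ letters (incl _ q), p.2 ≠ 0 := by
      by_contra hcon
      push Not at hcon
      apply hL 1
      rw [one_mul, inv_one, mul_one]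
      exact ⟨_, closure_mono_set hcon (mem_closure_letters _), rfl⟩
    obtain ⟨p, hp, hp0⟩ := this
    obtain ⟨l, hl, rfl⟩ := hw
    obtain ⟨l', h1, h2, rfl⟩ := core_inj hk (fun p hp h => by
      have : p.2 = 0 := hp
      rw [this]; exact ⟨le_rfl, Int.natCast_nonneg _⟩) hl hwn
    rw [core_free hmin hq.1 hp (S := {x : Wd z b | (x : Y × ℤ) ∈ {p : Y × ℤ | p.2 = 0}}) _ h1 h2]
    · simp
    · rintro x hx rfl
      exact hp0 hx
  · intro hNP
    have hNPq : NP q := by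
      intro S k hk1 hS
      apply hNP (il (incl _ S)) k hk1
      rw [hS, map_pow, map_pow]
    obtain ⟨h1, h2⟩ := hq.2 hNPq
    have h3 := win_No2 q hk h1
    refine ⟨h3, fun n => ?_⟩
    have h4 := win_HQ (q ^ n) q (nc_pow_le q n) (hkq _ (nc_pow_le q n)) hk
      (core_wp hmin hq.1 h0) (h2 n) h3
    have h5 : il (incl _ q) ^ n = il (incl _ (q ^ n)) := by rw [map_pow, map_pow]
    have e' : nc (il (incl _ q) ^ n) = nc (il (incl _ (q ^ n))) := by rw [h5]
    exact h4.of_injective (orCongr e').toMonoidHom (orCongr e').injective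

end core

theorem StepConcl.conj {z : Y} {x : EE Y} {g : EE Y} (h : StepConcl z (g * x * g⁻¹)) : StepConcl z x := by
  have e : nc x = nc (g * x * g⁻¹) := (nc_conj x g).symm
  obtain ⟨h1, h2, h3⟩ := h
  refine ⟨?_, ?_, ?_⟩
  · rw [e]; exact h1
  · intro h4
    rw [e]
    apply h2
    intro g'
    have := h4 (g' * g)
    have h5 : g' * g * x * (g' * g)⁻¹ = g' * (g * x * g⁻¹) * g'⁻¹ := by group
    rwa [h5] at this
  · intro hx
    obtain ⟨h4, h5⟩ := h3 (hx.conj g)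
    refine ⟨h4.of_injective (orCongr e).toMonoidHom (orCongr e).injective, fun n => ?_⟩
    have e' : nc (x ^ n) = nc ((g * x * g⁻¹) ^ n) := by rw [conj_pow, nc_conj]
    exact (h5 n).of_injective (orCongr e').toMonoidHom (orCongr e').injective

theorem nrm_shift (k : Multiplicative ℤ) (w : FreeGroup (Y × ℤ)) : nrm (shiftHom Y k w) = nrm w := by
  have key : ∀ (k : Multiplicative ℤ) (w : FreeGroup (Y × ℤ)), nrm (shiftHom Y k w) ≤ nrm w := by
    intro k w
    apply nrm_lift_le (shiftHom Y k).toMonoidHom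
    intro x
    simp [shiftHom_of, nrm_of]
  apply le_antisymm (key k w)
  have := key k⁻¹ (shiftHom Y k w)
  rw [← MulAut.mul_apply, ← map_mul] at this
  simpa using this

theorem letters_shift (k : Multiplicative ℤ) (w : FreeGroup (Y × ℤ)) {p : Y × ℤ}
    (hp : p ∈ letters (shiftHom Y k w)) : (p.1, p.2 - k.toAdd) ∈ letters w := by
  have h : shiftHom Y k w ∈ Subgroup.closure (of '' {p : Y × ℤ | (p.1, p.2 - k.toAdd) ∈ letters w}) := by
    refine closure_map_mem (shiftHom Y k).toMonoidHom ?_ (mem_closure_letters w)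
    rintro p hp
    simp only [MulEquiv.coe_toMonoidHom, shiftHom_of]
    apply Subgroup.subset_closure
    exact ⟨_, by simpa using hp, rfl⟩
  exact letters_subset h hp

theorem letters_shift' (k : Multiplicative ℤ) (w : FreeGroup (Y × ℤ)) {p : Y × ℤ}
    (hp : p ∈ letters w) : (p.1, p.2 + k.toAdd) ∈ letters (shiftHom Y k w) := by
  have := letters_shift k⁻¹ (shiftHom Y k w) (p := p)
  rw [← MulAut.mul_apply, ← map_mul] at this
  simpa using this (by simpa using hp)

theorem stepE {z : Y} {r : FreeGroup (Y × ℤ)}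
    (IH : ∀ (X : Type) (r' : FreeGroup X), nrm r' ≤ nrm r → Good r')
    (hz : ∀ g, g * il r * g⁻¹ ∉ zf z) : StepConcl z (il r) := by
  obtain ⟨g, hg, hgn⟩ := exists_minConj r
  set r1 := g * r * g⁻¹ with hr1
  have hr1' : il r1 = il g * il r * (il g)⁻¹ := by rw [hr1]; simp
  let I : Set ℤ := {i | (z, i) ∈ letters r1}
  have hIf : I.Finite := by
    apply Set.Finite.preimage _ (letters_finite r1)
    intro a _ b _ h
    simpa using h
  have hIne : I.Nonempty := by
    by_contra hcon
    apply hz (il g)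
    rw [← hr1', il_mem_zf]
    refine closure_mono_set ?_ (mem_closure_letters r1)
    rintro ⟨y, i⟩ hp hy
    apply hcon
    refine ⟨i, ?_⟩
    change (z, i) ∈ letters r1
    have hy : y = z := hy
    rw [← hy]; exact hp
  obtain ⟨a, ha, hamin⟩ := Set.exists_min_image I id hIf hIne
  obtain ⟨c, hc, hcmax⟩ := Set.exists_max_image I id hIf hIne
  simp only [id] at hamin hcmax
  obtain ⟨b, hb⟩ : ∃ b : ℕ, (b : ℤ) = c - a := ⟨(c - a).toNat, by have := hamin c hc; omega⟩
  let k : Multiplicative ℤ := Multiplicative.ofAdd (-a)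
  set r2 := shiftHom Y k r1 with hr2
  have hW : r2 ∈ Subgroup.closure (of '' Wd z b) := by
    refine closure_mono_set ?_ (mem_closure_letters r2)
    rintro ⟨y, i⟩ hp hy
    have h1 := letters_shift k r1 hp
    have hy : y = z := hy
    subst hy
    simp only [k, toAdd_ofAdd, sub_neg_eq_add] at h1
    have h2 := hamin _ h1
    have h3 := hcmax _ h1
    simp only
    omega
  have hq := incl_retr hW
  have hz0 : (z, (0 : ℤ)) ∈ letters r2 := by
    have := letters_shift' k r1 ha
    have e : a + k.toAdd = 0 := by simp [k]
    change (z, a + k.toAdd) ∈ letters r2 at this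
    rwa [e] at this
  have hzb : (z, (b : ℤ)) ∈ letters r2 := by
    have := letters_shift' k r1 hc
    rw [hb]
    have e : c + k.toAdd = c - a := by simp [k, sub_eq_add_neg]
    change (z, c + k.toAdd) ∈ letters r2 at this
    rwa [e] at this
  have hmin : MinConj r2 := by
    intro h
    have h1 := hg (shiftHom Y k⁻¹ h)
    rw [hr2, nrm_shift]
    refine h1.trans ?_
    rw [← nrm_shift k]
    simp only [map_mul, map_inv]
    simp
  have hfin : StepConcl z (il r2) := by
    have hgood : Good (retr (Wd z b) r2) := by
      apply IH
      refine (nrm_lift_le _ (retr_nrm _)).trans ?_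
      rw [hr2, nrm_shift]; exact hgn
    rw [← hq] at hmin hz0 hzb
    have := core_step hmin hgood hz0 hzb
    rwa [hq] at this
  have : il r2 = (ss ^ (-a) * il g) * il r * (ss ^ (-a) * il g)⁻¹ := by
    have := ss_conj (-a) r1
    rw [hr1'] at this
    rw [hr2, ← this]
    group
  rw [this] at hfin
  exact hfin.conj

end OneRel

namespace OneRel

open FreeGroup (of)

variable {X : Type}

open Classical in
theorem word_sum' {r : FreeGroup X} {H : Type} [Group H] (N : H → ℕ) (h1 : N 1 = 0)
    (hm : ∀ a b, N (a * b) ≤ N a + N b) (hi : ∀ a, N a⁻¹ = N a) (f : FreeGroup X →* H) :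
    N (f r) ≤ (r.toWord.map (fun p => N (f (of p.1)))).sum := by
  have key : ∀ L : List (X × Bool), 
      N (f (FreeGroup.mk L)) ≤ (L.map (fun p => N (f (of p.1)))).sum := by
    intro L
    induction L with
    | nil => rw [← FreeGroup.one_eq_mk, map_one, h1]; simp
    | cons p L ih =>
      have h1 : FreeGroup.mk (p :: L) = FreeGroup.mk [p] * FreeGroup.mk L := by
        rw [FreeGroup.mul_mk]; rfl
      rw [h1, map_mul]
      refine (hm _ _).trans ?_
      rw [List.map_cons, List.sum_cons]
      apply add_le_add _ ih
      obtain ⟨x, _ | _⟩ := p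
      · have : FreeGroup.mk [(x, false)] = (of x)⁻¹ := rfl
        rw [this, map_inv, hi]
      · exact le_rfl
  conv_lhs => rw [← FreeGroup.mk_toWord (x := r)]
  exact key _

theorem left_lt {Y : Type} {r : FreeGroup X} {t : X} (ht : t ∈ letters r) (f : FreeGroup X →* EE Y)
    (hf : ∀ x, nrm (f (of x)).left ≤ 1) (h0 : (f (of t)).left = 1) : nrm (f r).left < nrm r := by
  refine lt_of_le_of_lt (word_sum' (fun e : EE Y => nrm e.left) (by simp [nrm_one]) ?_ ?_ f) ?_
  · intro a b
    rw [SemidirectProduct.mul_left]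
    refine (nrm_mul_le _ _).trans ?_
    rw [nrm_shift]
  · intro a
    rw [SemidirectProduct.inv_left, nrm_shift, nrm_inv]
  · exact sum_lt ht (c := fun x => nrm (f (of x)).left) hf (by simp [h0, nrm_one])

theorem eq_il {Y : Type} {e : EE Y} (h : e.right = 1) : e = il e.left := by
  conv_lhs => rw [← SemidirectProduct.inl_left_mul_inr_right e, h]
  simp

section

variable (t : X)

abbrev Yt : Type := {x : X // x ≠ t}

open Classical in
noncomputable def it : FreeGroup X →* EE (Yt t) :=
  FreeGroup.lift (fun x => if h : x = t then ss else il (of (⟨x, h⟩, 0)))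

def jt : EE (Yt t) →* FreeGroup X := EE_lift (fun y => of y.1) (of t)

theorem it_t : it t (of t) = ss := by simp [it]

theorem it_ne {x : X} (h : x ≠ t) : it t (of x) = il (of (⟨x, h⟩, 0)) := by simp [it, h]

theorem jt_it (w : FreeGroup X) : jt t (it t w) = w := by
  have : (jt t).comp (it t) = MonoidHom.id _ := by
    ext x
    simp only [MonoidHom.comp_apply, MonoidHom.id_apply]
    by_cases h : x = t
    · subst h; rw [it_t, jt, EE_lift_ss]
    · rw [it_ne t h, jt, EE_lift_il]; simp
  exact DFunLike.congr_fun this w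

theorem it_jt (w : EE (Yt t)) : it t (jt t w) = w := by
  have : (it t).comp (jt t) = MonoidHom.id _ := by
    apply EE_ext
    · intro y
      simp only [MonoidHom.comp_apply, MonoidHom.id_apply]
      rw [jt, EE_lift_il]; simp [it_ne t y.2]
    · simp only [MonoidHom.comp_apply, MonoidHom.id_apply]
      rw [jt, EE_lift_ss, it_t]
  exact DFunLike.congr_fun this w

noncomputable def itE : FreeGroup X ≃* EE (Yt t) where
  toFun := it t
  invFun := jt t
  left_inv := jt_it t
  right_inv := it_jt t
  map_mul' := map_mul _

@[simp] theorem itE_apply (w) : itE t w = it t w := rfl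

end

open Classical in
noncomputable def sg (x : X) : FreeGroup X →* Multiplicative ℤ :=
  FreeGroup.lift (fun y => if y = x then Multiplicative.ofAdd 1 else 1)

theorem sg_self (x : X) : sg x (of x) = Multiplicative.ofAdd 1 := by simp [sg]
theorem sg_ne {x y : X} (h : y ≠ x) : sg x (of y) = 1 := by simp [sg, h]

theorem nc_equiv {H K : Type} [Group H] [Group K] (e : H ≃* K) (x : H) {w : H} :
    e w ∈ nc (e x) ↔ w ∈ nc x := by
  constructor
  · intro h
    have := nc_le_ker ((QuotientGroup.mk' (nc x)).comp e.symm.toMonoidHom) (x := e x)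
      (by simp [mem_nc_self]) h
    simpa using this
  · intro h
    have := nc_le_ker ((QuotientGroup.mk' (nc (e x))).comp e.toMonoidHom) (x := x)
      (by simp [mem_nc_self]) h
    simpa using this

theorem NP_equiv {H K : Type} [Group H] [Group K] (e : H ≃* K) {x : H} (h : NP x) : NP (e x) := by
  intro S k hk hS
  apply h (e.symm S) k hk
  rw [← map_pow, ← hS]; simp

/-- map induced on one-relator quotients -/
def orMap {H K : Type} [Group H] [Group K] (f : H →* K) (x : H) : OR x →* OR (f x) :=
  orLift ((QuotientGroup.mk' (nc (f x))).comp f) (by simp [mem_nc_self])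

theorem orMap_inj {H K : Type} [Group H] [Group K] (f : H →* K) (x : H)
    (h : ∀ w, f w ∈ nc (f x) → w ∈ nc x) : Function.Injective (orMap f x) := by
  rw [injective_iff_map_eq_one]
  intro a
  induction a using QuotientGroup.induction_on with
  | H w =>
    intro hw
    have hw : (QuotientGroup.mk (f w) : OR (f x)) = 1 := hw
    rw [or_mk_eq_one]
    apply h
    rw [← or_mk_eq_one]
    exact hw

theorem stepIso {r : FreeGroup X} (t z : X) (hzt : z ≠ t) (ht : t ∈ letters r)
    (IH : ∀ (X' : Type) (r' : FreeGroup X'), nrm r' < nrm r → Good r')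
    (hs : sg t r = 1) (hz : ∀ g, g * r * g⁻¹ ∉ lset z) :
    (∀ w ∈ lset z, w ∈ nc r → w = 1) ∧
    ((∀ g, g * r * g⁻¹ ∉ lset t) → ∀ w ∈ lset t, w ∈ nc r → w = 1) ∧
    (NP r → No2 (OR r) ∧ ∀ n : ℕ, HQ (OR (r ^ n))) := by
  have hright : (SemidirectProduct.rightHom).comp (it t) = sg t := by
    ext x
    simp only [MonoidHom.comp_apply]
    by_cases h : x = t
    · subst h; rw [it_t, sg_self]; simp [ss]
    · rw [it_ne t h, sg_ne h]; simp
  have hr1 : (it t r).right = 1 := by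
    have := DFunLike.congr_fun hright r
    simp only [MonoidHom.comp_apply] at this
    rw [hs] at this; exact this
  have hil := eq_il hr1
  have hlt : nrm (it t r).left < nrm r := by
    apply left_lt ht (it t)
    · intro x
      by_cases h : x = t
      · subst h; rw [it_t]; simp [ss, nrm_one]
      · rw [it_ne t h]; simp [nrm_of]
    · rw [it_t]; simp [ss]
  have hz1 : ∀ w ∈ lset z, it t w ∈ zf (⟨z, hzt⟩ : Yt t) := by
    intro w hw
    refine closure_map_mem (it t) ?_ hw
    intro x hx
    by_cases h : x = t
    · subst h; rw [it_t]; exact ss_mem_zf _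
    · rw [it_ne t h]
      refine il_of_mem_zf 0 ?_
      intro h'
      exact hx (congrArg Subtype.val h')
  have hz2 : ∀ w, it t w ∈ zf (⟨z, hzt⟩ : Yt t) → w ∈ lset z := by
    intro w hw
    rw [mem_zf] at hw
    have : ∀ e, jt t (zkill (⟨z, hzt⟩ : Yt t) e) ∈ lset z := by
      apply EE_gen ((lset z).comap ((jt t).comp (zkill (⟨z, hzt⟩ : Yt t))))
      · intro y
        simp only [Subgroup.mem_comap, MonoidHom.comp_apply]
        rw [zkill, EE_lift_il]
        split_ifs with h
        · simp
        · simp only [zpow_zero, one_mul, inv_one, mul_one]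
          rw [jt, EE_lift_il]
          simp only [zpow_zero, one_mul, inv_one, mul_one]
          apply Subgroup.subset_closure
          refine ⟨y.1, ?_, rfl⟩
          intro h'
          exact h (Subtype.ext h')
      · simp only [Subgroup.mem_comap, MonoidHom.comp_apply]
        rw [zkill, EE_lift_ss, jt, EE_lift_ss]
        apply Subgroup.subset_closure
        refine ⟨t, ?_, rfl⟩
        intro h'
        exact hzt h'.symm
    have := this (it t w)
    rwa [hw, jt_it] at this
  have ht1 : ∀ w ∈ lset t, it t w ∈ L0 (Yt t) := by
    intro w hw
    refine closure_map_mem (it t) ?_ hw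
    intro x hx
    rw [it_ne t hx]
    exact ⟨_, Subgroup.subset_closure ⟨_, rfl, rfl⟩, rfl⟩
  have ht2 : ∀ w, it t w ∈ L0 (Yt t) → w ∈ lset t := by
    rintro w ⟨l, hl, hw⟩
    rw [← jt_it t w, ← hw]
    refine closure_map_mem ((jt t).comp il) ?_ hl
    rintro ⟨y, i⟩ hi
    have hi : i = 0 := hi
    subst hi
    simp only [MonoidHom.comp_apply]
    rw [jt, EE_lift_il]
    simp only [zpow_zero, one_mul, inv_one, mul_one]
    exact Subgroup.subset_closure ⟨y.1, y.2, rfl⟩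
  have hconj : ∀ g : EE (Yt t), g * it t r * g⁻¹ = it t (jt t g * r * (jt t g)⁻¹) := by
    intro g
    rw [map_mul, map_mul, map_inv, it_jt]
  have main : StepConcl (⟨z, hzt⟩ : Yt t) (it t r) := by
    rw [hil]
    apply stepE
    · intro X' r' h'
      exact IH X' r' (lt_of_le_of_lt h' hlt)
    · intro g hg
      rw [← hil, hconj] at hg
      exact hz _ (hz2 _ hg)
  obtain ⟨m1, m2, m3⟩ := main
  have hinj : ∀ w, it t w = 1 → w = 1 := fun w hw => by
    rw [← jt_it t w, hw, map_one]
  refine ⟨?_, ?_, ?_⟩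
  · intro w hw hwr
    exact hinj _ (m1 _ (hz1 w hw) ((nc_equiv (itE t) r).2 hwr))
  · intro h w hw hwr
    refine hinj _ (m2 ?_ _ (ht1 w hw) ((nc_equiv (itE t) r).2 hwr))
    intro g hg
    rw [hconj] at hg
    exact h _ (ht2 _ hg)
  · intro hNP
    obtain ⟨h1, h2⟩ := m3 (NP_equiv (itE t) hNP)
    refine ⟨h1.of_injective (orMap (it t) r) (orMap_inj _ _ fun w => (nc_equiv (itE t) r).1), fun n => ?_⟩
    have h3 := h2 n
    have e : nc (it t r ^ n) = nc (it t (r ^ n)) := by rw [map_pow]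
    have h4 := h3.of_injective (orCongr e.symm).toMonoidHom (orCongr e.symm).injective
    exact h4.of_injective (orMap (it t) _) (orMap_inj _ _ fun w => (nc_equiv (itE t) _).1)

end OneRel

namespace OneRel

open FreeGroup (of)

variable {Y : Type}

/-! ### adjoining a root of the stable letter -/

noncomputable def bet (Y : Type) (q : ℤ) : EE Y →* EE Y := EE_lift (fun y => il (of (y, 0))) (ss ^ q)

theorem bet_ss (q : ℤ) : bet Y q ss = ss ^ q := EE_lift_ss _ _

theorem bet_il (q : ℤ) (p : Y × ℤ) : bet Y q (il (of p)) = il (of (p.1, q * p.2)) := by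
  rw [bet, EE_lift_il, ← zpow_mul, ← il_of_eq]

theorem bet_il' (q : ℤ) (l : FreeGroup (Y × ℤ)) : bet Y q (il l) =
    il (FreeGroup.map (fun p : Y × ℤ => (p.1, q * p.2)) l) := by
  have : (bet Y q).comp il = il.comp (FreeGroup.map (fun p : Y × ℤ => (p.1, q * p.2))) := by
    ext p : 1
    simp only [MonoidHom.comp_apply, bet_il, FreeGroup.map.of]
  exact DFunLike.congr_fun this l

open Classical in
noncomputable def rhoq (Y : Type) (q : ℤ) : FreeGroup (Y × ℤ) →* FreeGroup (Y × ℤ) :=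
  FreeGroup.lift (fun p => if q ∣ p.2 then of (p.1, p.2 / q) else 1)

noncomputable def gam (Y : Type) (q : ℤ) (e : EE Y) : EE Y :=
  ⟨rhoq Y q e.left, Multiplicative.ofAdd (e.right.toAdd / q)⟩

theorem rhoq_shift {q : ℤ} (hq : q ≠ 0) (k : ℤ) (w : FreeGroup (Y × ℤ)) :
    rhoq Y q (shiftHom Y (Multiplicative.ofAdd (q * k)) w) =
      shiftHom Y (Multiplicative.ofAdd k) (rhoq Y q w) := by
  have : (rhoq Y q).comp (shiftHom Y (Multiplicative.ofAdd (q * k))).toMonoidHom =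
      ((shiftHom Y (Multiplicative.ofAdd k)).toMonoidHom).comp (rhoq Y q) := by
    ext p : 1
    simp only [MonoidHom.comp_apply, MulEquiv.coe_toMonoidHom, shiftHom_of, rhoq,
      FreeGroup.lift_apply_of, toAdd_ofAdd]
    have h1 : q ∣ p.2 + q * k ↔ q ∣ p.2 := (Int.dvd_add_left (Dvd.intro k rfl))
    by_cases h : q ∣ p.2
    · rw [if_pos (h1.2 h), if_pos h, shiftHom_of]
      simp only [toAdd_ofAdd]
      rw [Int.add_mul_ediv_left _ _ hq]
    · rw [if_neg (mt h1.1 h), if_neg h, map_one]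
  exact DFunLike.congr_fun this w

theorem gam_mul {q : ℤ} (hq : q ≠ 0) {a b : EE Y} (ha : q ∣ a.right.toAdd) :
    gam Y q (a * b) = gam Y q a * gam Y q b := by
  obtain ⟨k, hk⟩ := ha
  have hk' : a.right = Multiplicative.ofAdd (q * k) := by rw [← hk]; rfl
  apply SemidirectProduct.ext
  · simp only [gam, SemidirectProduct.mul_left, map_mul]
    congr 1
    rw [hk', rhoq_shift hq]
    simp [hq]
  · simp only [gam, SemidirectProduct.mul_right, ← ofAdd_add]
    congr 1
    rw [toAdd_mul, hk, mul_comm q k, Int.add_comm, Int.add_mul_ediv_right _ _ hq, Int.mul_ediv_cancel _ hq, Int.add_comm]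

theorem gam_one (q : ℤ) : gam Y q 1 = 1 := by
  apply SemidirectProduct.ext <;> simp [gam]

theorem gam_pow {q : ℤ} (hq : q ≠ 0) {a : EE Y} (ha : q ∣ a.right.toAdd) (k : ℕ) :
    gam Y q (a ^ k) = gam Y q a ^ k := by
  induction k with
  | zero => simp [gam_one]
  | succ k ih => rw [pow_succ', gam_mul hq ha, ih, pow_succ']

theorem bet_right (q : ℤ) (u : EE Y) : (bet Y q u).right = u.right ^ q := by
  have : SemidirectProduct.rightHom.comp (bet Y q) =
      (zpowGroupHom q).comp SemidirectProduct.rightHom := by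
    apply EE_ext
    · intro y
      simp only [MonoidHom.comp_apply]
      rw [bet_il]; simp
    · simp only [MonoidHom.comp_apply]
      rw [bet_ss, map_zpow, zpowGroupHom_apply]
  exact DFunLike.congr_fun this u

theorem gam_bet {q : ℤ} (hq : q ≠ 0) (u : EE Y) : gam Y q (bet Y q u) = u := by
  have hd : ∀ u : EE Y, q ∣ (bet Y q u).right.toAdd := by
    intro u; rw [bet_right]; simp
  let f : EE Y →* EE Y := 
    { toFun := fun u => gam Y q (bet Y q u)
      map_one' := by simp [gam_one]
      map_mul' := fun a b => by rw [map_mul, gam_mul hq (hd a)] }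
  have : f = MonoidHom.id _ := by
    apply EE_ext
    · intro y
      change gam Y q (bet Y q (il (of (y, 0)))) = _
      rw [bet_il]
      apply SemidirectProduct.ext
      · simp [gam, rhoq]
      · simp [gam]
    · change gam Y q (bet Y q ss) = _
      rw [bet_ss, ss_zpow]
      apply SemidirectProduct.ext
      · simp [gam, ss]
      · simp [gam, hq, ss]
  exact DFunLike.congr_fun this u

/-- exponent sum -/
noncomputable def sgE (z : Y) : EE Y →* Multiplicative ℤ :=
  open Classical in EE_lift (fun y => if y = z then Multiplicative.ofAdd 1 else 1) 1

theorem sgE_ss (z : Y) : sgE z ss = 1 := EE_lift_ss _ _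

theorem sgE_zf {z : Y} {e : EE Y} (h : e ∈ zf z) : sgE z e = 1 := by
  rw [mem_zf] at h
  have : (sgE z).comp (zkill z) = 1 := by
    apply EE_ext
    · intro y
      simp only [MonoidHom.comp_apply, MonoidHom.one_apply]
      rw [zkill, EE_lift_il]
      split_ifs with h
      · simp
      · simp only [zpow_zero, one_mul, inv_one, mul_one]
        rw [sgE, EE_lift_il, if_neg h]
        simp
    · simp only [MonoidHom.comp_apply, MonoidHom.one_apply]
      rw [zkill, EE_lift_ss, sgE_ss]
  have := DFunLike.congr_fun this e
  simpa [h] using this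

/-! detecting the shift -/

noncomputable def zperm (q : ℤ) : Equiv.Perm (ZMod q.natAbs × ℤ) := open Classical in
  { toFun := fun p => (p.1, if p.1 = 0 then p.2 + 1 else p.2)
    invFun := fun p => (p.1, if p.1 = 0 then p.2 - 1 else p.2)
    left_inv := fun p => by
      rcases p with ⟨c, n⟩
      by_cases h : c = 0 <;> simp [h]
    right_inv := fun p => by
      rcases p with ⟨c, n⟩
      by_cases h : c = 0 <;> simp [h] }

def sperm (q : ℤ) : Equiv.Perm (ZMod q.natAbs × ℤ) where
  toFun := fun p => (p.1 + 1, p.2)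
  invFun := fun p => (p.1 - 1, p.2)
  left_inv := fun p => by simp
  right_inv := fun p => by simp

theorem sperm_zpow (q k : ℤ) (p) : (sperm q ^ k) p = (p.1 + k, p.2) := by
  induction k with
  | zero => simp
  | succ k ih => 
    rw [add_comm, zpow_add, Equiv.Perm.mul_apply, ih]
    simp [sperm]; ring
  | pred k ih =>
    rw [sub_eq_add_neg, add_comm, zpow_add, Equiv.Perm.mul_apply, ih]
    have : (sperm q ^ (-1 : ℤ)) = (sperm q).symm := by rw [zpow_neg_one]; rfl
    rw [this]
    simp [sperm]; ring

theorem sperm_q (q : ℤ) : sperm q ^ q = 1 := by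
  ext p : 1
  rw [sperm_zpow]
  have : ((q : ℤ) : ZMod q.natAbs) = 0 := by
    rw [ZMod.intCast_zmod_eq_zero_iff_dvd]; simp
  simp [this]

theorem zperm_zpow_zero (q k n : ℤ) : (zperm q ^ k) (0, n) = (0, n + k) := by
  induction k with
  | zero => simp
  | succ k ih => 
    rw [add_comm, zpow_add, Equiv.Perm.mul_apply, ih]
    simp [zperm]; ring
  | pred k ih =>
    rw [sub_eq_add_neg, add_comm, zpow_add, Equiv.Perm.mul_apply, ih]
    have : (zperm q ^ (-1 : ℤ)) = (zperm q).symm := by rw [zpow_neg_one]; rfl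
    rw [this]
    simp [zperm]; ring

theorem zperm_zpow_ne (q k : ℤ) {p} (hp : p.1 ≠ 0) : (zperm q ^ k) p = p := by
  have h1 : zperm q ∈ MulAction.stabilizer (Equiv.Perm (ZMod q.natAbs × ℤ)) p := by
    rw [MulAction.mem_stabilizer_iff, Equiv.Perm.smul_def]
    rcases p with ⟨c, n⟩
    simp only [ne_eq] at hp
    simp [zperm, hp]
  have := (MulAction.stabilizer (Equiv.Perm (ZMod q.natAbs × ℤ)) p).zpow_mem h1 k
  exact this

noncomputable def chi (q : ℤ) (z : Y) : EE Y →* Equiv.Perm (ZMod q.natAbs × ℤ) :=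
  open Classical in EE_lift (fun y => if y = z then zperm q else 1) (sperm q)

theorem chi_fst (q : ℤ) (z : Y) (e : EE Y) (p) : (chi q z e p).1 = p.1 + (e.right.toAdd : ℤ) := by
  revert p
  let L : Subgroup (EE Y) :=
    { carrier := {e | ∀ p, (chi q z e p).1 = p.1 + (e.right.toAdd : ℤ)}
      one_mem' := by intro p; simp
      mul_mem' := by
        intro a b ha hb p
        rw [map_mul, Equiv.Perm.mul_apply, ha, hb]
        simp; ring
      inv_mem' := by
        intro a ha p
        have := ha ((chi q z a)⁻¹ p)
        rw [← Equiv.Perm.mul_apply, mul_inv_cancel, Equiv.Perm.one_apply] at this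
        rw [map_inv, this]
        simp }
  refine EE_gen L ?_ ?_ e
  · intro y p
    rw [chi, EE_lift_il]
    split_ifs with h
    · simp [zperm]
    · simp
  · intro p
    rw [chi, EE_lift_ss]
    simp [sperm, ss]

theorem chi_bet (q : ℤ) (z : Y) (u : EE Y) : chi q z (bet Y q u) = zperm q ^ (sgE z u).toAdd := by
  have : (chi q z).comp (bet Y q) = (zpowersHom _ (zperm q)).comp (sgE z) := by
    apply EE_ext
    · intro y
      simp only [MonoidHom.comp_apply]
      rw [bet_il, chi, EE_lift_il, sgE, EE_lift_il]
      by_cases h : y = z <;> simp [h]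
    · simp only [MonoidHom.comp_apply]
      rw [bet_ss, sgE_ss, map_zpow, chi, EE_lift_ss, sperm_q]
      simp
  exact DFunLike.congr_fun this u

theorem bet_NP {q : ℤ} (hq : q ≠ 0) {z : Y} {u : EE Y} (hu : sgE z u ≠ 1) (h : NP u) :
    NP (bet Y q u) := by
  intro S k hk hS
  have hd : q ∣ S.right.toAdd := by
    have hc : S * bet Y q u = bet Y q u * S := by rw [hS, ← pow_succ, ← pow_succ']
    by_contra hd
    have h0 : (chi q z S (0, 0)).1 ≠ 0 := by
      rw [chi_fst]
      simp only [zero_add, ne_eq, ZMod.intCast_zmod_eq_zero_iff_dvd]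
      simpa using hd
    have h1 : chi q z S (chi q z (bet Y q u) (0, 0)) = chi q z (bet Y q u) (chi q z S (0, 0)) := by
      rw [← Equiv.Perm.mul_apply, ← Equiv.Perm.mul_apply, ← map_mul, hc, map_mul]
    rw [chi_bet, zperm_zpow_ne _ _ h0, zperm_zpow_zero] at h1
    have := (chi q z S).injective h1
    simp at this
    exact hu this
  apply h (gam Y q S) k hk
  rw [← gam_pow hq hd, ← hS, gam_bet hq]

theorem bet_inj {q : ℤ} (hq : q ≠ 0) : Function.Injective (bet Y q) := by
  intro a b h
  rw [← gam_bet hq a, h, gam_bet hq]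

def BD (A B : Type) : Bool → Type
  | true => A
  | false => B

instance BDGroup (A B : Type) [gA : Group A] [gB : Group B] : ∀ b, Group (BD A B b)
  | true => gA
  | false => gB

def BDhom {A B C : Type} [Group A] [Group B] [Group C] (f : C →* A) (g : C →* B) :
    ∀ b, C →* BD A B b
  | true => f
  | false => g

/-- injectivity on quotients -/
theorem bet_or {q : ℤ} (hq : q ≠ 0) {x : EE Y} (hx : ∀ k : ℤ, ss ^ k ∈ nc x → k = 0) (w : EE Y)
    (hw : bet Y q w ∈ nc (bet Y q x)) : w ∈ nc x := by
  let φ : ∀ b, Multiplicative ℤ →* BD (OR x) (Multiplicative ℤ) b :=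
    BDhom (zpowersHom (OR x) (QuotientGroup.mk ss)) (zpowGroupHom q)
  have hφ : ∀ b, Function.Injective (φ b) := by
    rintro (_ | _)
    · change Function.Injective (zpowGroupHom q : Multiplicative ℤ →* Multiplicative ℤ)
      rw [injective_iff_map_eq_one]
      intro a ha
      have : q * a.toAdd = 0 := by
        have := congrArg Multiplicative.toAdd ha
        simpa using this
      rcases mul_eq_zero.1 this with h | h
      · exact absurd h hq
      · exact h
    · change Function.Injective (zpowersHom (OR x) (QuotientGroup.mk ss))
      rw [injective_iff_map_eq_one]
      intro a ha
      rw [zpowersHom_apply, ← QuotientGroup.mk_zpow, or_mk_eq_one] at ha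
      exact hx _ ha
  let o1 : OR x →* Monoid.PushoutI φ := Monoid.PushoutI.of (φ := φ) true
  let o2 : Multiplicative ℤ →* Monoid.PushoutI φ := Monoid.PushoutI.of (φ := φ) false
  have h12 : o1 (QuotientGroup.mk ss) = o2 (Multiplicative.ofAdd q) := by
    have h1 := Monoid.PushoutI.of_apply_eq_base φ true (Multiplicative.ofAdd 1)
    have h2 := Monoid.PushoutI.of_apply_eq_base φ false (Multiplicative.ofAdd 1)
    have h3 : φ true (Multiplicative.ofAdd 1) = (QuotientGroup.mk ss : OR x) := by
      change zpowersHom (OR x) (QuotientGroup.mk ss) (Multiplicative.ofAdd 1) = _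
      simp
    have h4 : φ false (Multiplicative.ofAdd 1) = Multiplicative.ofAdd q := by
      change zpowGroupHom q (Multiplicative.ofAdd 1) = Multiplicative.ofAdd q
      simp [← ofAdd_zsmul]
    rw [h3] at h1
    rw [h4] at h2
    exact h1.trans h2.symm
  let f : EE Y →* Monoid.PushoutI φ :=
    EE_lift (fun y => o1 (QuotientGroup.mk (il (of (y, 0))))) (o2 (Multiplicative.ofAdd 1))
  have hf : f.comp (bet Y q) = o1.comp (QuotientGroup.mk' (nc x)) := by
    apply EE_ext
    · intro y
      simp only [MonoidHom.comp_apply]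
      rw [bet_il]
      simp only [f]
      rw [EE_lift_il]
      simp
    · simp only [MonoidHom.comp_apply]
      rw [bet_ss, map_zpow]
      simp only [f]
      rw [EE_lift_ss, ← map_zpow]
      simp only [QuotientGroup.mk'_apply]
      rw [h12]
      congr 1
      simp [← ofAdd_zsmul]
  have hf' : ∀ w, f (bet Y q w) = o1 (QuotientGroup.mk w) := fun w => DFunLike.congr_fun hf w
  have h1 : f (bet Y q w) = 1 := by
    refine nc_le_ker f ?_ hw
    rw [hf', or_mk_eq_one.2 (mem_nc_self x), map_one]
  rw [hf'] at h1
  have hinj : Function.Injective o1 := Monoid.PushoutI.of_injective hφ true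
  rw [← or_mk_eq_one]
  apply hinj
  rw [h1, map_one]

/-! twisting -/

noncomputable def tw (z : Y) (p : ℤ) : EE Y →* EE Y :=
  open Classical in EE_lift (fun y => if y = z then il (of (y, 0)) * ss ^ p else il (of (y, 0))) ss

theorem tw_ss (z : Y) (p : ℤ) : tw z p ss = ss := EE_lift_ss _ _

theorem tw_z (z : Y) (p : ℤ) : tw z p (il (of (z, 0))) = il (of (z, 0)) * ss ^ p := by
  rw [tw, EE_lift_il]; simp

theorem tw_ne {z y : Y} (h : y ≠ z) (p : ℤ) : tw z p (il (of (y, 0))) = il (of (y, 0)) := by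
  rw [tw, EE_lift_il]; simp [h]

theorem tw_tw (z : Y) (p : ℤ) (e : EE Y) : tw z p (tw z (-p) e) = e := by
  have : (tw z p).comp (tw z (-p)) = MonoidHom.id _ := by
    apply EE_ext
    · intro y
      simp only [MonoidHom.comp_apply, MonoidHom.id_apply]
      by_cases h : y = z
      · subst h
        rw [tw_z, map_mul, map_zpow, tw_ss, tw_z]; group
      · rw [tw_ne h, tw_ne h]
    · simp only [MonoidHom.comp_apply, MonoidHom.id_apply, tw_ss]
  exact DFunLike.congr_fun this e

noncomputable def twE (z : Y) (p : ℤ) : EE Y ≃* EE Y where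
  toFun := tw z p
  invFun := tw z (-p)
  left_inv e := by
    have := tw_tw z (-p) e
    rwa [neg_neg] at this
  right_inv e := tw_tw z p e
  map_mul' := map_mul _

end OneRel

namespace OneRel

open FreeGroup (of)

variable {X : Type}

theorem stepRoot {r : FreeGroup X} (t z : X) (hzt : z ≠ t) (ht : t ∈ letters r)
    (IH : ∀ (X' : Type) (r' : FreeGroup X'), nrm r' < nrm r → Good r')
    (hz : sg z r ≠ 1) :
    (∀ w ∈ lset z, w ∈ nc r → w = 1) ∧
    (NP r → No2 (OR r) ∧ ∀ n : ℕ, HQ (OR (r ^ n))) := by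
  set p : ℤ := (sg t r).toAdd with hp
  set q : ℤ := (sg z r).toAdd with hq
  have hq0 : q ≠ 0 := fun h => hz h
  let z' : Yt t := ⟨z, hzt⟩
  let f : EE (Yt t) →* EE (Yt t) := (tw z' (-p)).comp (bet _ q)
  let ι : FreeGroup X →* EE (Yt t) := f.comp (it t)
  have ι_t : ι (of t) = ss ^ q := by
    simp only [ι, f, MonoidHom.comp_apply]
    rw [it_t, bet_ss, map_zpow, tw_ss]
  have ι_z : ι (of z) = il (of (z', 0)) * ss ^ (-p) := by
    simp only [ι, f, MonoidHom.comp_apply]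
    rw [it_ne t hzt, bet_il, mul_zero, tw_z]
  have ι_ne : ∀ x (h : x ≠ t), x ≠ z → ι (of x) = il (of ((⟨x, h⟩ : Yt t), 0)) := by
    intro x h h'
    simp only [ι, f, MonoidHom.comp_apply]
    rw [it_ne t h, bet_il, mul_zero, tw_ne]
    intro h''
    exact h' (congrArg Subtype.val h'')
  have hright : (SemidirectProduct.rightHom).comp ι = (zpowGroupHom q).comp (sg t) * (zpowGroupHom (-p)).comp (sg z) := by
    ext x
    simp only [MonoidHom.comp_apply, MonoidHom.mul_apply]
    by_cases h : x = t
    · subst h; rw [ι_t, sg_self, sg_ne hzt.symm, map_zpow]; simp [ss]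
    · by_cases h' : x = z
      · subst h'; rw [ι_z, sg_self, sg_ne h, map_mul, map_zpow]; simp [ss]
      · rw [ι_ne x h h', sg_ne h, sg_ne h']; simp
  have hr1 : (ι r).right = 1 := by
    have := DFunLike.congr_fun hright r
    simp only [MonoidHom.comp_apply, MonoidHom.mul_apply] at this
    have h2 : (ι r).right = (sg t r) ^ q * (sg z r) ^ (-p) := this
    rw [h2]
    apply Multiplicative.toAdd.injective
    simp only [toAdd_mul, toAdd_zpow, toAdd_one, ← hp, ← hq, smul_eq_mul]
    ring
  have hil := eq_il hr1
  have hlt : nrm (ι r).left < nrm r := by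
    apply left_lt ht ι
    · intro x
      by_cases h : x = t
      · subst h; rw [ι_t, ss_zpow]; simp [nrm_one]
      · by_cases h' : x = z
        · subst h'; rw [ι_z, ss_zpow]; simp [nrm_of]
        · rw [ι_ne x h h']; simp [nrm_of]
    · rw [ι_t, ss_zpow]; simp
  have hz1 : ∀ w ∈ lset z, ι w ∈ zf z' := by
    intro w hw
    refine closure_map_mem ι ?_ hw
    intro x hx
    by_cases h : x = t
    · subst h; rw [ι_t]; exact (zf z').zpow_mem (ss_mem_zf _) _
    · rw [ι_ne x h hx]
      refine il_of_mem_zf 0 ?_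
      intro h'
      exact hx (congrArg Subtype.val h')
  have hsg : ∀ w, sgE z' (ι w) = sg z w := by
    have : (sgE z').comp ι = sg z := by
      ext x
      simp only [MonoidHom.comp_apply]
      by_cases h : x = t
      · subst h; rw [ι_t, sg_ne hzt.symm, map_zpow, sgE_ss, one_zpow]
      · by_cases h' : x = z
        · subst h'; rw [ι_z, sg_self, map_mul, map_zpow, sgE_ss, sgE, EE_lift_il]; simp [z']
        · rw [ι_ne x h h', sg_ne h', sgE, EE_lift_il]
          have : (⟨x, h⟩ : Yt t) ≠ z' := fun h'' => h' (congrArg Subtype.val h'')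
          simp [this]
    exact fun w => DFunLike.congr_fun this w
  have hsg' : ∀ w, sgE z' (it t w) = sg z w := by
    have : (sgE z').comp (it t) = sg z := by
      ext x
      simp only [MonoidHom.comp_apply]
      by_cases h : x = t
      · subst h; rw [it_t, sg_ne hzt.symm, sgE_ss]
      · rw [it_ne t h, sgE, EE_lift_il]
        by_cases h' : x = z
        · subst h'; rw [sg_self]; simp [z']
        · have : (⟨x, h⟩ : Yt t) ≠ z' := fun h'' => h' (congrArg Subtype.val h'')
          rw [sg_ne h']; simp [this]
    exact fun w => DFunLike.congr_fun this w
  have main : StepConcl z' (ι r) := by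
    rw [hil]
    apply stepE
    · intro X' r' h'
      exact IH X' r' (lt_of_le_of_lt h' hlt)
    · intro g hg
      rw [← hil] at hg
      have := sgE_zf hg
      rw [map_mul, map_mul, map_inv, hsg, mul_comm (sgE z' g), mul_assoc, mul_inv_cancel, mul_one] at this
      exact hz this
  obtain ⟨m1, -, m3⟩ := main
  have hinj : Function.Injective ι := 
    ((twE z' (-p)).injective.comp (bet_inj hq0)).comp (itE t).injective
  have hFr : ∀ w ∈ lset z, w ∈ nc r → w = 1 := by
    intro w hw hwr
    apply hinj
    rw [map_one]
    refine m1 _ (hz1 w hw) ?_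
    have := nc_le_ker ((QuotientGroup.mk' (nc (ι r))).comp ι) (x := r)
      (by simp [mem_nc_self]) hwr
    simpa using this
  refine ⟨hFr, fun hNP => ?_⟩
  have hNP1 : NP (it t r) := NP_equiv (itE t) hNP
  have hNP2 : NP (bet _ q (it t r)) := bet_NP hq0 (z := z') (by rw [hsg']; exact hz) hNP1
  have hNP3 : NP (ι r) := NP_equiv (twE z' (-p)) hNP2
  obtain ⟨h1, h2⟩ := m3 hNP3
  have hord : ∀ k : ℤ, ss ^ k ∈ nc (it t r) → k = 0 := by
    intro k hk
    have h : it t ((of t) ^ k) ∈ nc (it t r) := by rw [map_zpow, it_t]; exact hk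
    have h := (nc_equiv (itE t) r).1 h
    have h := hFr _ ((lset z).zpow_mem (Subgroup.subset_closure ⟨t, hzt.symm, rfl⟩) _) h
    have h := congrArg (sg t) h
    rw [map_zpow, sg_self, map_one (sg t)] at h
    have h := congrArg Multiplicative.toAdd h
    simpa using h
  have key : ∀ n : ℕ, Function.Injective (orMap ι (r ^ n)) := by
    intro n
    apply orMap_inj
    intro w hw
    have hw := (nc_equiv (twE z' (-p)) (bet _ q (it t (r ^ n)))).1 hw
    have hw := bet_or hq0 (fun k hk => hord k ?_) _ hw
    · exact (nc_equiv (itE t) (r ^ n)).1 hw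
    · rw [map_pow] at hk
      exact nc_pow_le _ _ hk
  constructor
  · have := key 1
    rw [pow_one] at this
    exact h1.of_injective _ this
  · intro n
    have e : nc (ι r ^ n) = nc (ι (r ^ n)) := by rw [map_pow]
    have h4 := (h2 n).of_injective (orCongr e.symm).toMonoidHom (orCongr e.symm).injective
    exact h4.of_injective _ (key n)

theorem good_aux (n : ℕ) : ∀ (X : Type) (r : FreeGroup X), nrm r ≤ n → Good r := by
  induction n using Nat.strong_induction_on with
  | _ n ih =>
  suffices H : ∀ (X : Type) (r : FreeGroup X), nrm r ≤ n → MinConj r → Good r by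
    intro X r hr
    obtain ⟨g, hg, hgn⟩ := exists_minConj r
    exact (H X _ (hgn.trans hr) hg).conj
  intro X r hr hmin
  have IH : ∀ (X' : Type) (r' : FreeGroup X'), nrm r' < nrm r → Good r' := by
    intro X' r' h'
    exact ih (nrm r') (lt_of_lt_of_le h' hr) X' r' le_rfl
  by_cases hne : (letters r).Nonempty
  swap
  · rw [Set.not_nonempty_iff_eq_empty] at hne
    have h1 : r = 1 := by
      have := mem_closure_letters r
      rw [hne] at this
      simpa using this
    subst h1
    refine ⟨?_, fun h => absurd rfl h.ne_one⟩
    intro z hz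
    exact absurd (Subgroup.one_mem (lset z)) (by simpa using hz 1)
  have hnot : ∀ z ∈ letters r, ∀ g, g * r * g⁻¹ ∉ lset z := fun z hz g =>
    ess hmin hz (S := {z}ᶜ) (by simp) g
  by_cases hone : ∃ z, letters r ⊆ {z}
  · obtain ⟨z, hz⟩ := hone
    exact base_good hz
  push Not at hone
  have hall : ∀ z ∈ letters r, (∀ w ∈ lset z, w ∈ nc r → w = 1) ∧
      (NP r → No2 (OR r) ∧ ∀ n : ℕ, HQ (OR (r ^ n))) := by
    intro z hz
    obtain ⟨t, ht, htz⟩ := Set.not_subset.1 (hone z)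
    have htz : t ≠ z := htz
    by_cases h1 : sg z r = 1
    · obtain ⟨-, h2, h3⟩ := stepIso z t htz hz IH h1 (hnot t ht)
      exact ⟨h2 (hnot z hz), h3⟩
    · exact stepRoot t z htz.symm ht IH h1
  refine ⟨?_, (hall _ hne.some_mem).2⟩
  intro z hz
  by_cases hzl : z ∈ letters r
  · exact (hall z hzl).1
  · exfalso
    apply hz 1
    simp only [one_mul, inv_one, mul_one]
    refine closure_mono_set ?_ (mem_closure_letters r)
    intro x hx hxz
    have hxz : x = z := hxz
    exact hzl (hxz ▸ hx)

theorem good (r : FreeGroup X) : Good r := good_aux _ X r le_rfl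

end OneRel

namespace OneRel

open FreeGroup (of)
open Monoid (CoprodI)

section chain

variable {ι : Type} {F : Type} [Group F] {G : ι → Type} [∀ i, Group (G i)] {P : Type}

abbrev co {i : ι} : G i →* CoprodI G := CoprodI.of

abbrev lp (l : List (Σ i, G i)) : CoprodI G := (l.map (fun a => co a.2)).prod

variable (A : Finset P) (y : P → CoprodI G) (j : F →* CoprodI G)

def Piece (p : P) (a : Σ i, G i) (q : P) : Prop :=
  p ∈ A ∧ q ∈ A ∧ ∃ f, co a.2 = (y p)⁻¹ * j f * y q

inductive Ch : P → List (Σ i, G i) → P → Prop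
  | nil (p : P) : p ∈ A → Ch p [] p
  | cons {p : P} {a : Σ i, G i} {u : P} {l : List (Σ i, G i)} {q : P} :
      Piece A y j p a u → Ch u l q → Ch p (a :: l) q

variable {A y j}

theorem Ch.left {p q : P} {l} (h : Ch A y j p l q) : p ∈ A := by
  cases h with
  | nil _ h => exact h
  | cons h _ => exact h.1

theorem Ch.append {p u q : P} {l l'} (h : Ch A y j p l u) (h' : Ch A y j u l' q) :
    Ch A y j p (l ++ l') q := by
  induction h with
  | nil => exact h'
  | cons hp _ ih => exact Ch.cons hp (ih h')

theorem Ch.split {p q : P} {l l'} (h : Ch A y j p (l ++ l') q) :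
    ∃ u, Ch A y j p l u ∧ Ch A y j u l' q := by
  induction l generalizing p with
  | nil => exact ⟨p, Ch.nil p h.left, h⟩
  | cons a l ih =>
    rw [List.cons_append] at h
    cases h with
    | cons hp h =>
      obtain ⟨u, h1, h2⟩ := ih h
      exact ⟨u, Ch.cons hp h1, h2⟩

theorem Piece.inv {p q : P} {i : ι} {a : G i} (h : Piece A y j p ⟨i, a⟩ q) :
    Piece A y j q ⟨i, a⁻¹⟩ p := by
  obtain ⟨h1, h2, f, hf⟩ := h
  refine ⟨h2, h1, f⁻¹, ?_⟩
  simp only [map_inv] at hf ⊢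
  rw [hf]; group

theorem Piece.mul {p u q : P} {i : ι} {a b : G i} (h : Piece A y j p ⟨i, a⟩ u)
    (h' : Piece A y j u ⟨i, b⟩ q) : Piece A y j p ⟨i, a * b⟩ q := by
  obtain ⟨h1, h2, f, hf⟩ := h
  obtain ⟨h3, h4, g, hg⟩ := h'
  refine ⟨h1, h4, f * g, ?_⟩
  have hf : co a = _ := hf
  have hg : co b = _ := hg
  change co (a * b) = _
  rw [map_mul, map_mul, hf, hg]; group

theorem Ch.inv {p q : P} {l} (h : Ch A y j p l q) : ∃ l', Ch A y j q l' p ∧ lp l' = (lp l)⁻¹ := by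
  induction h with
  | nil p hp => exact ⟨[], Ch.nil p hp, (show (1 : CoprodI G) = 1⁻¹ by simp)⟩
  | @cons p a u l q hp _ ih =>
    obtain ⟨l', h1, h2⟩ := ih
    obtain ⟨i, a⟩ := a
    refine ⟨l' ++ [⟨i, a⁻¹⟩], h1.append (Ch.cons hp.inv (Ch.nil p hp.1)), ?_⟩
    have e1 : lp (l' ++ [(⟨i, a⁻¹⟩ : Σ i, G i)]) = lp l' * co a⁻¹ := by
      rw [lp, List.map_append, List.prod_append]; simp
    have e2 : lp ((⟨i, a⟩ : Σ i, G i) :: l) = co a * lp l := by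
      rw [lp, List.map_cons, List.prod_cons]
    rw [e1, e2, h2, map_inv, mul_inv_rev]

def cmap {Q : ι → Type} [∀ i, Group (Q i)] (θ : ∀ i, G i →* Q i) : CoprodI G →* CoprodI Q :=
  CoprodI.lift (fun i => (co).comp (θ i))

theorem cmap_of {Q : ι → Type} [∀ i, Group (Q i)] (θ : ∀ i, G i →* Q i) {i : ι} (a : G i) :
    cmap θ (co a) = co (θ i a) := by simp [cmap]

theorem isChain_or {α : Type} (R : α → α → Prop) (l : List α) :
    l.IsChain R ∨ ∃ l1 a b l2, l = l1 ++ a :: b :: l2 ∧ ¬ R a b := by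
  induction l with
  | nil => left; simp
  | cons a l ih =>
    rcases ih with h | ⟨l1, b, c, l2, rfl, h⟩
    · cases l with
      | nil => left; simp
      | cons b l =>
        by_cases hR : R a b
        · left; rw [List.isChain_cons_cons]; exact ⟨hR, h⟩
        · right; exact ⟨[], a, b, l, rfl, hR⟩
    · right; exact ⟨a :: l1, b, c, l2, rfl, h⟩

theorem tie {Q : ι → Type} [∀ i, Group (Q i)] (θ : ∀ i, G i →* Q i) (n : ℕ) :
    ∀ (l : List (Σ i, G i)) (p q : P), l.length = n → p ≠ q → Ch A y j p l q → cmap θ (lp l) = 1 →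
    ∃ (p q : P) (i : ι) (a : G i), p ≠ q ∧ Piece A y j p ⟨i, a⟩ q ∧ θ i a = 1 := by
  classical
  induction n using Nat.strong_induction_on with
  | _ n ih =>
  intro l p q hl hpq hc h1
  by_cases hne : ∃ a ∈ l, θ a.1 a.2 = 1
  · obtain ⟨a, ha, ha1⟩ := hne
    obtain ⟨l1, l2, rfl⟩ := List.append_of_mem ha
    obtain ⟨u, c1, c2⟩ := hc.split
    cases c2 with
    | @cons _ _ v _ _ hp c2 =>
      by_cases huv : u = v
      · subst huv
        refine ih (l1 ++ l2).length ?_ (l1 ++ l2) p q rfl hpq (c1.append c2) ?_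
        · rw [← hl]; simp
        · rw [← h1]
          simp only [lp, List.map_append, List.prod_append, List.map_cons, List.prod_cons, map_mul]
          rw [cmap_of, ha1, map_one, one_mul]
      · exact ⟨u, v, a.1, a.2, huv, hp, ha1⟩
  push Not at hne
  rcases isChain_or (fun a b : Σ i, G i => a.1 ≠ b.1) l with hch | ⟨l1, ⟨i, a⟩, ⟨i', b⟩, l2, rfl, hR⟩
  · exfalso
    let w : CoprodI.Word Q :=
      { toList := l.map (fun a => ⟨a.1, θ a.1 a.2⟩)
        ne_one := by
          intro x hx
          rw [List.mem_map] at hx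
          obtain ⟨a, ha, rfl⟩ := hx
          exact hne a ha
        chain_ne := by
          rw [List.isChain_map]; exact hch }
    have hw : w.prod = 1 := by
      rw [← h1]
      simp only [CoprodI.Word.prod, w, lp, map_list_prod, List.map_map]
      congr 1
    have hw2 : w = CoprodI.Word.empty := by
      apply (CoprodI.Word.equiv (M := Q)).symm.injective
      change w.prod = CoprodI.Word.empty.prod
      rw [hw, CoprodI.Word.prod_empty]
    have hl0 : l.map (fun a => (⟨a.1, θ a.1 a.2⟩ : Σ i, Q i)) = [] := congrArg CoprodI.Word.toList hw2
    rw [List.map_eq_nil_iff] at hl0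
    subst hl0
    cases hc
    exact hpq rfl
  · have hR : i = i' := by simpa using hR
    subst hR
    obtain ⟨u, c1, c2⟩ := hc.split
    cases c2 with
    | @cons _ _ v _ _ hp c2 =>
    cases c2 with
    | @cons _ _ v' _ _ hp' c2 =>
    refine ih (l1 ++ ⟨i, a * b⟩ :: l2).length ?_ _ p q rfl hpq
      (c1.append (Ch.cons (hp.mul hp') c2)) ?_
    · rw [← hl]; simp
    · rw [← h1]
      simp only [lp, List.map_append, List.prod_append, List.map_cons, List.prod_cons, map_mul, mul_assoc]

end chain

end OneRel

namespace OneRel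

open FreeGroup (of)
open Monoid (CoprodI)

variable {ι : Type} {F : Type} [Group F] {Q : ι → Type} [∀ i, Group (Q i)] {P : Type}

structure GS (Φ : F →* CoprodI Q) (o : P) where
  G : ι → Type
  gG : ∀ i, Group (G i)
  θ : ∀ i, G i →* Q i
  A : Finset P
  y : P → CoprodI G
  j : F →* CoprodI G
  hΦ : ∀ f, cmap θ (j f) = Φ f
  ho : o ∈ A
  yo : y o = 1
  U : ∀ (K : Type) [Group K] (g : F →* K) (k : P → K), k o = 1 →
    ∃ h : CoprodI G →* K, (∀ f, h (j f) = g f) ∧ ∀ p ∈ A, h (y p) = k p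
  E : ∀ L : Subgroup (CoprodI G), (∀ f, j f ∈ L) → (∀ p ∈ A, y p ∈ L) → ∀ w, w ∈ L
  gen : ∀ q ∈ A, ∀ f, ∃ l, Ch A y j o l q ∧ lp l = j f * y q

variable {Φ : F →* CoprodI Q} {o : P}

open Classical in
theorem GS.step (S : GS Φ o) {p q : P} (hp : p ∈ S.A) (hqA : q ∈ S.A) (hpq : p ≠ q) (hqo : q ≠ o)
    {b : ι} (α : S.G b) (f : F)
    (hα : letI := S.gG; co α = (S.y p)⁻¹ * S.j f * S.y q)
    (hθ : letI := S.gG; S.θ b α = 1) : ∃ S' : GS Φ o, S'.A = S.A.erase q := by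
  let := S.gG
  let N : ∀ i, Subgroup (S.G i) := fun i => Subgroup.normalClosure {a | (⟨i, a⟩ : Σ i, S.G i) = ⟨b, α⟩}
  let G' : ι → Type := fun i => S.G i ⧸ N i
  have hN : ∀ {i} {K : Type} [Group K] (g : S.G i →* K), (∀ a : S.G i, (⟨i, a⟩ : Σ i, S.G i) = ⟨b, α⟩ → g a = 1) →
      ∀ a ∈ N i, g a = 1 := by
    intro i K _ g hg a ha
    have : N i ≤ g.ker := Subgroup.normalClosure_le_normal (fun a ha => hg a ha)
    exact this ha
  let θ' : ∀ i, G' i →* Q i := fun i => QuotientGroup.lift (N i) (S.θ i) (hN _ (by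
    intro a h
    cases h
    exact hθ))
  let π : CoprodI S.G →* CoprodI G' := cmap (fun i => QuotientGroup.mk' (N i))
  have hπ : ∀ w, cmap θ' (π w) = cmap S.θ w := by
    have : (cmap θ').comp π = cmap S.θ := by
      apply CoprodI.ext_hom
      intro i
      ext a
      simp only [MonoidHom.comp_apply]
      have := cmap_of (fun i => QuotientGroup.mk' (N i)) a
      simp only [π]
      erw [this, cmap_of, cmap_of]
    exact fun w => DFunLike.congr_fun this w
  have hπs : Function.Surjective π := by
    intro w
    induction w using CoprodI.induction_on with
    | one => exact ⟨1, map_one _⟩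
    | of i a =>
      obtain ⟨a, rfl⟩ := QuotientGroup.mk_surjective a
      exact ⟨co a, cmap_of _ _⟩
    | mul x y hx hy =>
      obtain ⟨x, rfl⟩ := hx
      obtain ⟨y, rfl⟩ := hy
      exact ⟨x * y, map_mul _ _ _⟩
  have hπα : π (co α) = 1 := by
    have h1 : π (co α) = co (G := G') (i := b) (QuotientGroup.mk α : G' b) := cmap_of _ _
    have h2 : (QuotientGroup.mk α : G' b) = 1 := by
      rw [QuotientGroup.eq_one_iff]
      exact Subgroup.subset_normalClosure rfl
    rw [h1, h2, map_one]
  have hyq : π (S.y q) = π (S.j f⁻¹) * π (S.y p) := by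
    rw [hα] at hπα
    simp only [map_mul, map_inv] at hπα ⊢
    rw [mul_eq_one_iff_eq_inv] at hπα
    rw [eq_comm, ← inv_inj, ← hπα]
    group
  refine ⟨⟨G', inferInstance, θ', S.A.erase q, fun p => π (S.y p), π.comp S.j, ?_, ?_, ?_, ?_, ?_, ?_⟩, rfl⟩
  · intro f
    rw [MonoidHom.comp_apply, hπ, S.hΦ]
  · exact Finset.mem_erase.2 ⟨hqo.symm, S.ho⟩
  · simp only [S.yo, map_one]
  · intro K _ g k hk
    obtain ⟨h, h1, h2⟩ := S.U K g (Function.update k q (g f⁻¹ * k p)) (by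
      rw [Function.update_of_ne hqo.symm]; exact hk)
    have hhα : h (co α) = 1 := by
      rw [hα]
      simp only [map_mul, map_inv, h1, h2 p hp, h2 q hqA, Function.update_self,
        Function.update_of_ne hpq]
      group
    let h' : CoprodI G' →* K := CoprodI.lift (fun i => QuotientGroup.lift (N i) (h.comp co) (hN _ (by
      intro a ha
      cases ha
      exact hhα)))
    have hh : ∀ w, h' (π w) = h w := by
      have : h'.comp π = h := by
        apply CoprodI.ext_hom
        intro i
        ext a
        simp only [MonoidHom.comp_apply]
        have := cmap_of (fun i => QuotientGroup.mk' (N i)) a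
        simp only [π]
        erw [this]
        simp only [h']
        erw [CoprodI.lift_of]
      exact fun w => DFunLike.congr_fun this w
    refine ⟨h', fun f => (hh _).trans (h1 f), ?_⟩
    intro p' hp'
    rw [Finset.mem_erase] at hp'
    rw [hh, h2 p' hp'.2, Function.update_of_ne hp'.1]
  · intro L hL1 hL2 w
    obtain ⟨w, rfl⟩ := hπs w
    refine S.E (L.comap π) hL1 ?_ w
    intro p' hp'
    by_cases h : p' = q
    · subst h
      change π (S.y p') ∈ L
      rw [hyq]
      exact L.mul_mem (hL1 _) (hL2 p (Finset.mem_erase.2 ⟨hpq, hp⟩))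
    · exact hL2 p' (Finset.mem_erase.2 ⟨h, hp'⟩)
  · intro q' hq' f'
    rw [Finset.mem_erase] at hq'
    obtain ⟨l, hl1, hl2⟩ := S.gen q' hq'.2 f'
    let v : P → P := fun u => if u = q then p else u
    have hv : ∀ u ∈ S.A, v u ∈ S.A.erase q := by
      intro u hu
      simp only [v]
      split_ifs with h
      · exact Finset.mem_erase.2 ⟨hpq, hp⟩
      · exact Finset.mem_erase.2 ⟨h, hu⟩
    have hyv : ∀ u, ∃ g, π (S.y u) = π (S.j g) * π (S.y (v u)) := by
      intro u
      simp only [v]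
      split_ifs with h
      · subst h; exact ⟨_, hyq⟩
      · exact ⟨1, by simp⟩
    let ml : List (Σ i, S.G i) → List (Σ i, G' i) := List.map (fun a => ⟨a.1, QuotientGroup.mk a.2⟩)
    have key : ∀ {p1 l q1}, Ch S.A S.y S.j p1 l q1 →
        Ch (S.A.erase q) (fun p => π (S.y p)) (π.comp S.j) (v p1) (ml l) (v q1) := by
      intro p1 l q1 h
      induction h with
      | nil u hu => exact Ch.nil _ (hv u hu)
      | @cons u a u' l w hp' _ ih =>
        refine Ch.cons ?_ ih
        obtain ⟨h1, h2, g, hg⟩ := hp'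
        refine ⟨hv _ h1, hv _ h2, ?_⟩
        obtain ⟨g1, hg1⟩ := hyv u
        obtain ⟨g2, hg2⟩ := hyv u'
        refine ⟨g1⁻¹ * g * g2, ?_⟩
        have h3 : co (G := G') (i := a.1) (QuotientGroup.mk a.2 : G' a.1) = π (co a.2) := (cmap_of (fun i => QuotientGroup.mk' (N i)) a.2).symm
        change co (G := G') (i := a.1) (QuotientGroup.mk a.2 : G' a.1) = _
        rw [h3, hg]
        simp only [map_mul, map_inv, hg1, hg2, MonoidHom.comp_apply]
        group
    have hlp : ∀ l, lp (ml l) = π (lp l) := by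
      intro l
      induction l with
      | nil => exact (map_one π).symm
      | cons a l ih =>
        have e1 : lp (a :: l) = co a.2 * lp l := by rw [lp, List.map_cons, List.prod_cons]
        have e2 : lp (ml (a :: l)) = co (G := G') (i := a.1) (QuotientGroup.mk a.2 : G' a.1) * lp (ml l) := by
          simp only [ml]
          rw [lp, List.map_cons, List.map_cons, List.prod_cons]
        have h3 : co (G := G') (i := a.1) (QuotientGroup.mk a.2 : G' a.1) = π (co a.2) := (cmap_of (fun i => QuotientGroup.mk' (N i)) a.2).symm
        rw [e1, e2, ih, map_mul, h3]
    refine ⟨ml l, ?_, ?_⟩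
    · have := key hl1
      have e1 : v o = o := by simp [v, hqo.symm]
      have e2 : v q' = q' := by simp [v, hq'.1]
      rwa [e1, e2] at this
    · rw [hlp, hl2, map_mul]; rfl

theorem GS.finish (hs : Function.Surjective Φ) (n : ℕ) : ∀ (S : GS Φ o), S.A.card = n →
    ∃ (G : ι → Type) (_ : ∀ i, Group (G i)) (θ : ∀ i, G i →* Q i) (e : F ≃* CoprodI G),
      ∀ f, cmap θ (e f) = Φ f := by
  classical
  induction n using Nat.strong_induction_on with
  | _ n ih =>
  intro S hn
  let := S.gG
  by_cases hA : ∃ q ∈ S.A, q ≠ o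
  · obtain ⟨q, hq, hqo⟩ := hA
    obtain ⟨f, hf⟩ := hs (cmap S.θ (S.y q))⁻¹
    obtain ⟨l, hl1, hl2⟩ := S.gen q hq f
    obtain ⟨p, q, i, a, hpq, hP, ha⟩ := tie S.θ _ l o q rfl hqo.symm hl1 (by
      rw [hl2, map_mul, S.hΦ, hf]; group)
    by_cases h : q = o
    · obtain ⟨h1, h2, f, hf⟩ := hP.inv
      obtain ⟨S', hS'⟩ := S.step h1 h2 hpq.symm (by rw [← h]; exact hpq) a⁻¹ f hf (by
        rw [map_inv, ha, inv_one])
      exact ih S'.A.card (by rw [hS', ← hn]; exact Finset.card_erase_lt_of_mem h2) S' rfl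
    · obtain ⟨h1, h2, f, hf⟩ := hP
      obtain ⟨S', hS'⟩ := S.step h1 h2 hpq h a f hf ha
      exact ih S'.A.card (by rw [hS', ← hn]; exact Finset.card_erase_lt_of_mem h2) S' rfl
  · push Not at hA
    have hsurj : Function.Surjective S.j := by
      intro w
      have := S.E S.j.range (fun f => ⟨f, rfl⟩) (fun p hp => by
        rw [hA p hp, S.yo]; exact one_mem _) w
      exact this
    have hinj : Function.Injective S.j := by
      obtain ⟨h, h1, _⟩ := S.U F (MonoidHom.id F) (fun _ => 1) rfl
      intro a b hab
      have := congrArg h hab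
      rwa [h1, h1] at this
    exact ⟨S.G, S.gG, S.θ, MulEquiv.ofBijective S.j ⟨hinj, hsurj⟩, S.hΦ⟩

end OneRel

namespace OneRel

open FreeGroup (of)
open Monoid (CoprodI)

section init

variable {ι : Type} {X : Type} {Q : ι → Type} [∀ i, Group (Q i)]

theorem exists_lp (w : CoprodI Q) : ∃ l : List (Σ i, Q i), lp l = w := by
  induction w using CoprodI.induction_on with
  | one => exact ⟨[], rfl⟩
  | of i a => exact ⟨[⟨i, a⟩], by simp [lp]⟩
  | mul x y hx hy =>
    obtain ⟨l, rfl⟩ := hx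
    obtain ⟨l', rfl⟩ := hy
    exact ⟨l ++ l', by rw [lp, List.map_append, List.prod_append]⟩

theorem lp_pad (d : ι) (l : List (Σ i, Q i)) : ∀ m, l.length ≤ m →
    ((List.range m).map (fun n => co (l.getD n ⟨d, 1⟩).2)).prod = lp l := by
  induction l with
  | nil =>
    intro m _
    refine List.prod_eq_one ?_
    intro x hx
    rw [List.mem_map] at hx
    obtain ⟨n, _, rfl⟩ := hx
    exact map_one _
  | cons a l ih =>
    intro m hm
    obtain ⟨m, rfl⟩ : ∃ m', m = m' + 1 := ⟨m - 1, by simp at hm; omega⟩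
    rw [List.range_succ_eq_map, List.map_cons, List.prod_cons, List.map_map, lp, List.map_cons,
      List.prod_cons]
    congr 1
    rw [← lp, ← ih m (by simpa using hm)]
    rfl

variable (lab : X → ℕ → Σ i, Q i) (N : ℕ)

abbrev EG (i : ι) : Type := FreeGroup {e : X × ℕ // e.2 ≤ N ∧ (lab e.1 e.2).1 = i}

open Classical in
noncomputable def ed (x : X) (i : ℕ) : CoprodI (EG lab N) :=
  if h : i ≤ N then co (G := EG lab N) (i := (lab x i).1) (of ⟨(x, i), h, rfl⟩) else 1

noncomputable def yy (x : X) (i : ℕ) : CoprodI (EG lab N) := ((List.range i).map (ed lab N x)).prod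

theorem yy_zero (x : X) : yy lab N x 0 = 1 := rfl

theorem yy_succ (x : X) (i : ℕ) : yy lab N x (i + 1) = yy lab N x i * ed lab N x i := by
  simp [yy, List.range_succ]

noncomputable def yv : Option (X × ℕ) → CoprodI (EG lab N)
  | none => 1
  | some (x, i) => yy lab N x i

def eth (i : ι) : EG lab N i →* Q i := FreeGroup.lift (fun e => e.2.2 ▸ (lab e.1.1 e.1.2).2)

theorem eth_ed (x : X) (i : ℕ) (h : i ≤ N) : cmap (eth lab N) (ed lab N x i) = co (lab x i).2 := by
  rw [ed, dif_pos h, cmap_of]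
  simp [eth]

noncomputable def ej : FreeGroup X →* CoprodI (EG lab N) :=
  FreeGroup.lift (fun x => yy lab N x (N + 1))

theorem ej_of (x : X) : ej lab N (of x) = yy lab N x (N + 1) := by simp [ej]

theorem ed_eq (x : X) (i : ℕ) : ed lab N x i = (yy lab N x i)⁻¹ * yy lab N x (i + 1) := by
  rw [yy_succ]; group

def vv (x : X) (i : ℕ) : Option (X × ℕ) := if i = 0 then none else some (x, i)

theorem yv_vv (x : X) (i : ℕ) : yv lab N (vv x i) = yy lab N x i := by
  unfold vv
  split_ifs with h
  · subst h; rfl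
  · rfl

open Classical in
noncomputable def initGS [Fintype X] (Φ : FreeGroup X →* CoprodI Q)
    (hlab : ∀ x, ((List.range (N + 1)).map (fun n => co (lab x n).2)).prod = Φ (of x)) :
    GS Φ (none : Option (X × ℕ)) where
  G := EG lab N
  gG := inferInstance
  θ := eth lab N
  A := Finset.insertNone (Finset.univ ×ˢ Finset.Icc 1 N)
  y := yv lab N
  j := ej lab N
  hΦ := by
    have : (cmap (eth lab N)).comp (ej lab N) = Φ := by
      ext x
      rw [MonoidHom.comp_apply, ej_of, ← hlab, yy, map_list_prod, List.map_map]
      congr 1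
      apply List.map_congr_left
      intro n hn
      rw [List.mem_range] at hn
      exact eth_ed lab N x n (by omega)
    exact fun f => DFunLike.congr_fun this f
  ho := by simp
  yo := rfl
  U := by
    intro K _ g k hk
    let κ : X → ℕ → K := fun x i => if i = 0 then 1 else if i ≤ N then k (some (x, i)) else g (of x)
    let h : CoprodI (EG lab N) →* K := CoprodI.lift (fun i => FreeGroup.lift (fun e =>
      (κ e.1.1 e.1.2)⁻¹ * κ e.1.1 (e.1.2 + 1)))
    have hed : ∀ x i, i ≤ N → h (ed lab N x i) = (κ x i)⁻¹ * κ x (i + 1) := by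
      intro x i hi
      rw [ed, dif_pos hi]
      simp only [h]
      erw [CoprodI.lift_of, FreeGroup.lift_apply_of]
    have hyy : ∀ x i, i ≤ N + 1 → h (yy lab N x i) = κ x i := by
      intro x i
      induction i with
      | zero => intro _; rw [yy_zero, map_one]; simp [κ]
      | succ i ih =>
        intro hi
        rw [yy_succ, map_mul, ih (by omega), hed x i (by omega)]
        group
    refine ⟨h, ?_, ?_⟩
    · have : h.comp (ej lab N) = g := by
        ext x
        rw [MonoidHom.comp_apply, ej_of, hyy x _ le_rfl]
        simp [κ]
      exact fun f => DFunLike.congr_fun this f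
    · rintro (_ | ⟨x, i⟩) hp
      · rw [hk]; exact map_one h
      · have hp : 1 ≤ i ∧ i ≤ N := by simpa using hp
        change h (yy lab N x i) = _
        rw [hyy x i (by omega)]
        simp only [κ]
        rw [if_neg (by omega), if_pos hp.2]
  E := by
    intro L h1 h2 w
    have hyy : ∀ x i, i ≤ N + 1 → yy lab N x i ∈ L := by
      intro x i hi
      rcases Nat.eq_zero_or_pos i with rfl | hpos
      · rw [yy_zero]; exact one_mem _
      by_cases h : i ≤ N
      · exact h2 (some (x, i)) (by simp; omega)
      · obtain rfl : i = N + 1 := by omega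
        rw [← ej_of]; exact h1 _
    have hed : ∀ x i, i ≤ N → ed lab N x i ∈ L := by
      intro x i hi
      rw [ed_eq]
      exact L.mul_mem (L.inv_mem (hyy x i (by omega))) (hyy x _ (by omega))
    induction w using CoprodI.induction_on with
    | one => exact one_mem _
    | of i a =>
      have hof : ∀ e, co (G := EG lab N) (i := i) (of e) ∈ L := by
        rintro ⟨⟨x, m⟩, hm, rfl⟩
        have := hed x m hm
        rwa [ed, dif_pos hm] at this
      induction a using FreeGroup.induction_on with
      | C1 => rw [map_one]; exact one_mem _
      | of e => exact hof e
      | inv_of e _ => rw [map_inv]; exact L.inv_mem (hof e)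
      | mul x y hx hy => rw [map_mul]; exact L.mul_mem hx hy
    | mul x y hx hy => exact L.mul_mem hx hy
  gen := by
    set A : Finset (Option (X × ℕ)) := Finset.insertNone (Finset.univ ×ˢ Finset.Icc 1 N) with hA
    have hnone : none ∈ A := by simp [hA]
    have hvA : ∀ x i, i ≤ N → vv x i ∈ A := by
      intro x i hi
      unfold vv
      split_ifs with h
      · exact hnone
      · simp [hA]; omega
    have hv : ∀ x i, i ≤ N → ∃ l, Ch A (yv lab N) (ej lab N) none l (vv x i) ∧ lp l = yy lab N x i := by
      intro x i
      induction i with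
      | zero => intro _; exact ⟨[], Ch.nil _ hnone, rfl⟩
      | succ i ih =>
        intro hi
        obtain ⟨l, h1, h2⟩ := ih (by omega)
        refine ⟨l ++ [⟨(lab x i).1, of ⟨(x, i), by omega, rfl⟩⟩],
          h1.append (Ch.cons ⟨hvA x i (by omega), hvA x (i + 1) hi, 1, ?_⟩
            (Ch.nil _ (hvA x (i + 1) hi))), ?_⟩
        · rw [map_one, mul_one, yv_vv, yv_vv, ← ed_eq, ed, dif_pos (by omega)]
        · rw [yy_succ, ← h2, ed, dif_pos (by omega)]
          rw [lp, List.map_append, List.prod_append]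
          simp
    have hf : ∀ f, ∃ l, Ch A (yv lab N) (ej lab N) none l none ∧ lp l = ej lab N f := by
      intro f
      have hx : ∀ x, ∃ l, Ch A (yv lab N) (ej lab N) none l none ∧ lp l = ej lab N (of x) := by
        intro x
        obtain ⟨l, h1, h2⟩ := hv x N le_rfl
        refine ⟨l ++ [⟨(lab x N).1, of ⟨(x, N), le_rfl, rfl⟩⟩],
          h1.append (Ch.cons ⟨hvA x N le_rfl, hnone, of x, ?_⟩ (Ch.nil _ hnone)), ?_⟩
        · rw [ej_of, yv_vv, yv, mul_one, ← ed_eq, ed, dif_pos le_rfl]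
        · rw [ej_of, yy_succ, ← h2, ed, dif_pos le_rfl]
          rw [lp, List.map_append, List.prod_append]
          simp
      induction f using FreeGroup.induction_on with
      | C1 => exact ⟨[], Ch.nil _ hnone, rfl⟩
      | of x => exact hx x
      | inv_of x _ =>
        obtain ⟨l, h1, h2⟩ := hx x
        obtain ⟨l', h3, h4⟩ := h1.inv
        exact ⟨l', h3, by rw [h4, h2, map_inv]⟩
      | mul x y hx hy =>
        obtain ⟨l, h1, h2⟩ := hx
        obtain ⟨l', h3, h4⟩ := hy
        refine ⟨l ++ l', h1.append h3, ?_⟩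
        rw [lp, List.map_append, List.prod_append, ← lp, ← lp, h2, h4, map_mul]
    intro q hq f
    obtain ⟨l, h1, h2⟩ := hf f
    have : ∃ l', Ch A (yv lab N) (ej lab N) none l' q ∧ lp l' = yv lab N q := by
      rcases q with _ | ⟨x, i⟩
      · exact ⟨[], Ch.nil _ hnone, rfl⟩
      · have hp : 1 ≤ i ∧ i ≤ N := by simpa [hA] using hq
        have := hv x i hp.2
        rw [vv, if_neg (by omega)] at this
        exact this
    obtain ⟨l', h3, h4⟩ := this
    refine ⟨l ++ l', h1.append h3, ?_⟩
    rw [lp, List.map_append, List.prod_append, ← lp, ← lp, h2, h4]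

end init

theorem grushko {ι : Type} [Inhabited ι] {X : Type} [Finite X] {Q : ι → Type} [∀ i, Group (Q i)]
    (Φ : FreeGroup X →* CoprodI Q) (hs : Function.Surjective Φ) :
    ∃ (G : ι → Type) (_ : ∀ i, Group (G i)) (θ : ∀ i, G i →* Q i) (e : FreeGroup X ≃* CoprodI G),
      ∀ f, cmap θ (e f) = Φ f := by
  classical
  have := Fintype.ofFinite X
  choose l hl using fun x => exists_lp (Φ (of x))
  let N := Finset.univ.sup (fun x => (l x).length)
  refine GS.finish hs _ (initGS (fun x n => (l x).getD n ⟨default, 1⟩) N Φ ?_) rfl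
  intro x
  rw [← hl x]
  apply lp_pad
  have : (l x).length ≤ N := Finset.le_sup (f := fun x => (l x).length) (Finset.mem_univ x)
  omega

end OneRel

namespace OneRel

open FreeGroup (of)
open Monoid (CoprodI)

theorem decomp {X Y1 Y2 : Type} (ψ : FreeGroup (Y1 ⊕ Y2) ≃* FreeGroup X) (R : FreeGroup X)
    (R1 : FreeGroup Y1) (g : FreeGroup X) (hR : R = g * ψ (FreeGroup.map Sum.inl R1) * g⁻¹) (n : ℕ)
    (h1 : Nontrivial (OR (R1 ^ n))) (h2 : Nonempty Y2) :
    FreelyDecomposable (PresentedGroup {R ^ n}) := by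
  have hRn : R ^ n = g * ψ (FreeGroup.map Sum.inl (R1 ^ n)) * g⁻¹ := by
    rw [hR, conj_pow, map_pow, map_pow]
  let f0 : FreeGroup (Y1 ⊕ Y2) →* Monoid.Coprod (OR (R1 ^ n)) (FreeGroup Y2) :=
    FreeGroup.lift (Sum.elim (fun y => Monoid.Coprod.inl (QuotientGroup.mk (of y)))
      (fun y => Monoid.Coprod.inr (of y)))
  have hf0l : ∀ w, f0 (FreeGroup.map Sum.inl w) = Monoid.Coprod.inl (QuotientGroup.mk w) := by
    have : f0.comp (FreeGroup.map Sum.inl) =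
        (Monoid.Coprod.inl).comp (QuotientGroup.mk' (nc (R1 ^ n))) := by
      ext y; simp [f0]
    exact fun w => DFunLike.congr_fun this w
  have hf0r : ∀ w, f0 (FreeGroup.map Sum.inr w) = Monoid.Coprod.inr w := by
    have : f0.comp (FreeGroup.map Sum.inr) = Monoid.Coprod.inr := by
      ext y; simp [f0]
    exact fun w => DFunLike.congr_fun this w
  let f : OR (R ^ n) →* Monoid.Coprod (OR (R1 ^ n)) (FreeGroup Y2) :=
    orLift (f0.comp ψ.symm.toMonoidHom) (by
      rw [hRn]
      have : (QuotientGroup.mk (R1 ^ n) : OR (R1 ^ n)) = 1 := or_mk_eq_one.2 (mem_nc_self _)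
      have e1 : (f0.comp ψ.symm.toMonoidHom) (g * ψ (FreeGroup.map Sum.inl (R1 ^ n)) * g⁻¹) =
          f0 (ψ.symm g) * f0 (FreeGroup.map Sum.inl (R1 ^ n)) * (f0 (ψ.symm g))⁻¹ := by
        simp only [map_mul, map_inv]
        congr 2
        change f0 (ψ.symm (ψ _)) = _
        rw [ψ.symm_apply_apply]
      rw [e1, hf0l, this, map_one, mul_one, mul_inv_cancel])
  have hf : ∀ w, f (QuotientGroup.mk (ψ w)) = f0 w := by
    intro w
    change f0 (ψ.symm (ψ w)) = f0 w
    simp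
  let g1 : OR (R1 ^ n) →* OR (R ^ n) :=
    orLift (((QuotientGroup.mk' (nc (R ^ n))).comp ψ.toMonoidHom).comp (FreeGroup.map Sum.inl)) (by
      change (QuotientGroup.mk (ψ (FreeGroup.map Sum.inl (R1 ^ n))) : OR (R ^ n)) = 1
      rw [or_mk_eq_one, hRn, nc_conj]
      exact mem_nc_self _)
  let g2 : FreeGroup Y2 →* OR (R ^ n) :=
    ((QuotientGroup.mk' (nc (R ^ n))).comp ψ.toMonoidHom).comp (FreeGroup.map Sum.inr)
  let G := Monoid.Coprod.lift g1 g2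
  refine ⟨OR (R1 ^ n), FreeGroup Y2, inferInstance, inferInstance, h1, inferInstance,
    ⟨MonoidHom.toMulEquiv f G ?_ ?_⟩⟩
  · have key : (G.comp f).comp ((QuotientGroup.mk' (nc (R ^ n))).comp ψ.toMonoidHom) =
        (QuotientGroup.mk' (nc (R ^ n))).comp ψ.toMonoidHom := by
      ext y
      change G (f (QuotientGroup.mk (ψ (of y)))) = QuotientGroup.mk (ψ (of y))
      rw [hf]
      rcases y with y | y
      · simp only [f0, FreeGroup.lift_apply_of, Sum.elim_inl, G, Monoid.Coprod.lift_apply_inl, g1, orLift_mk]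
        simp
      · simp only [f0, FreeGroup.lift_apply_of, Sum.elim_inr, G, Monoid.Coprod.lift_apply_inr, g2]
        simp
    refine MonoidHom.ext fun w => ?_
    obtain ⟨w, rfl⟩ := QuotientGroup.mk_surjective w
    obtain ⟨w, rfl⟩ := ψ.surjective w
    exact DFunLike.congr_fun key w
  · apply Monoid.Coprod.hom_ext
    · ext y
      change f (G (Monoid.Coprod.inl (QuotientGroup.mk (of y)))) = Monoid.Coprod.inl (QuotientGroup.mk (of y))
      simp only [G, Monoid.Coprod.lift_apply_inl, g1, orLift_mk]
      exact (hf _).trans (hf0l _)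
    · ext y
      change f (G (Monoid.Coprod.inr (of y))) = Monoid.Coprod.inr (of y)
      simp only [G, Monoid.Coprod.lift_apply_inr, g2]
      exact (hf _).trans (hf0r _)

theorem decomp_infinite {X : Type} [Infinite X] (R : FreeGroup X) (n : ℕ) :
    FreelyDecomposable (PresentedGroup {R ^ n}) := by
  classical
  obtain ⟨z, hz⟩ := (letters_finite R).exists_notMem
  obtain ⟨z', hz'⟩ := ((letters_finite R).union (Set.finite_singleton z)).exists_notMem
  have hz1 : z' ∉ letters R := fun h => hz' (Or.inl h)
  have hz2 : z' ≠ z := fun h => hz' (Or.inr h)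
  let S : Set X := {z}ᶜ
  have hRS : R ∈ Subgroup.closure (of '' S) := closure_mono_set (by
    intro x hx h
    exact hz (by rw [← show x = z from h]; exact hx)) (mem_closure_letters R)
  have hR1 := incl_retr hRS
  refine decomp (Y1 := S) (Y2 := (Sᶜ : Set X)) (FreeGroup.freeGroupCongr (Equiv.Set.sumCompl S)) R (retr S R) 1 ?_ n ?_ ?_
  · rw [one_mul, inv_one, mul_one]
    conv_lhs => rw [← hR1]
    rw [FreeGroup.freeGroupCongr_apply, FreeGroup.map.comp]
    rfl
  · let f : OR ((retr S R) ^ n) →* FreeGroup ({z'} : Set X) := orLift ((retr {z'}).comp (incl S)) (by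
      rw [MonoidHom.comp_apply, map_pow, map_pow, hR1]
      have : retr ({z'} : Set X) R ∈ (⊥ : Subgroup _) := by
        refine closure_map_mem _ ?_ (mem_closure_letters R)
        intro x hx
        rw [retr_of_not_mem]
        · exact one_mem _
        · intro h
          exact hz1 (by rw [← show x = z' from h]; exact hx)
      rw [Subgroup.mem_bot.1 this, one_pow])
    refine ⟨QuotientGroup.mk (of ⟨z', hz2⟩), 1, ?_⟩
    intro h
    have := congrArg f h
    rw [map_one, orLift_mk, MonoidHom.comp_apply, FreeGroup.map.of, retr_of_mem (S := {z'}) rfl] at this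
    exact FreeGroup.of_ne_one _ this
  · exact ⟨⟨z, by simp [S]⟩⟩

theorem free_of_embed {X G : Type} [Group G] (f : G →* FreeGroup X) (hf : Function.Injective f) :
    ∃ Y : Type, Nonempty (FreeGroup Y ≃* G) := by
  have e : G ≃* f.range := MonoidHom.ofInjective hf
  exact ⟨IsFreeGroup.Generators f.range, ⟨(IsFreeGroup.toFreeGroup f.range).symm.trans e.symm⟩⟩

theorem grushko2 {X : Type} [Finite X] {Q : Bool → Type} [∀ i, Group (Q i)]
    (Φ : FreeGroup X →* CoprodI Q) (hs : Function.Surjective Φ) :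
    ∃ (Y1 Y2 : Type) (η1 : FreeGroup Y1 →* Q true) (η2 : FreeGroup Y2 →* Q false)
      (ψ : FreeGroup (Y1 ⊕ Y2) ≃* FreeGroup X),
      (∀ w, Φ (ψ (FreeGroup.map Sum.inl w)) = co (η1 w)) ∧
      (∀ w, Φ (ψ (FreeGroup.map Sum.inr w)) = co (η2 w)) := by
  obtain ⟨G, gG, θ, e, he⟩ := grushko Φ hs
  have hfree : ∀ b, ∃ Y : Type, Nonempty (FreeGroup Y ≃* G b) := by
    intro b
    exact free_of_embed (e.symm.toMonoidHom.comp (co (G := G) (i := b)))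
      (e.symm.injective.comp (CoprodI.of_injective b))
  obtain ⟨Y1, ⟨u1⟩⟩ := hfree true
  obtain ⟨Y2, ⟨u2⟩⟩ := hfree false
  let A : FreeGroup (Y1 ⊕ Y2) →* CoprodI G :=
    FreeGroup.lift (Sum.elim (fun y => co (u1 (of y))) (fun y => co (u2 (of y))))
  have hAl : ∀ w, A (FreeGroup.map Sum.inl w) = co (u1 w) := by
    have : A.comp (FreeGroup.map Sum.inl) = (co (G := G) (i := true)).comp u1.toMonoidHom := by
      ext y; simp [A]
    exact fun w => DFunLike.congr_fun this w
  have hAr : ∀ w, A (FreeGroup.map Sum.inr w) = co (u2 w) := by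
    have : A.comp (FreeGroup.map Sum.inr) = (co (G := G) (i := false)).comp u2.toMonoidHom := by
      ext y; simp [A]
    exact fun w => DFunLike.congr_fun this w
  let B : CoprodI G →* FreeGroup (Y1 ⊕ Y2) := CoprodI.lift (fun b => match b with
    | true => (FreeGroup.map Sum.inl).comp u1.symm.toMonoidHom
    | false => (FreeGroup.map Sum.inr).comp u2.symm.toMonoidHom)
  have hBl : ∀ a : G true, B (co a) = FreeGroup.map Sum.inl (u1.symm a) := by
    intro a; simp [B]
  have hBr : ∀ a : G false, B (co a) = FreeGroup.map Sum.inr (u2.symm a) := by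
    intro a; simp [B]
  let E : FreeGroup (Y1 ⊕ Y2) ≃* CoprodI G := MonoidHom.toMulEquiv A B
    (by
      ext y
      rcases y with y | y
      · have := hAl (of y)
        rw [FreeGroup.map.of] at this
        rw [MonoidHom.comp_apply, this, hBl]; simp
      · have := hAr (of y)
        rw [FreeGroup.map.of] at this
        rw [MonoidHom.comp_apply, this, hBr]; simp)
    (by
      apply CoprodI.ext_hom
      intro b
      ext a
      cases b
      · change A (B (co a)) = co a
        rw [hBr, hAr]; simp
      · change A (B (co a)) = co a
        rw [hBl, hAl]; simp)
  refine ⟨Y1, Y2, (θ true).comp u1.toMonoidHom, (θ false).comp u2.toMonoidHom, E.trans e.symm, ?_, ?_⟩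
  · intro w
    rw [← he]
    have : e ((E.trans e.symm) (FreeGroup.map Sum.inl w)) = A (FreeGroup.map Sum.inl w) :=
      e.apply_symm_apply _
    rw [this, hAl, cmap_of]; rfl
  · intro w
    rw [← he]
    have : e ((E.trans e.symm) (FreeGroup.map Sum.inr w)) = A (FreeGroup.map Sum.inr w) :=
      e.apply_symm_apply _
    rw [this, hAr, cmap_of]; rfl

theorem dihedral_hom_trivial {G : Type} [Group G] (h : No2 G) (f : DihedralGroup 0 →* G) (x) : f x = 1 := by
  have hs : ∀ i, f (DihedralGroup.sr i) = 1 := by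
    intro i
    apply h
    rw [← map_mul, DihedralGroup.sr_mul_self, map_one]
  cases x with
  | r i =>
    have : (DihedralGroup.r i : DihedralGroup 0) = DihedralGroup.sr 0 * DihedralGroup.sr i := by
      rw [DihedralGroup.sr_mul_sr, sub_zero]
    rw [this, map_mul, hs, hs, one_mul]
  | sr i => exact hs i

/-- an infinite group generated by two elements of square one is infinite dihedral -/
theorem dihedral_of_gen {G : Type} [Group G] [Infinite G] {x y : G} (hx : x * x = 1) (hy : y * y = 1)
    (h : Subgroup.closure {x, y} = ⊤) : Nonempty (G ≃* DihedralGroup 0) := by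
  let t := x * y
  have hxi : x⁻¹ = x := inv_eq_of_mul_eq_one_left hx
  have hyi : y⁻¹ = y := inv_eq_of_mul_eq_one_left hy
  have hxt : x * t * x⁻¹ = t⁻¹ := by
    simp only [t, mul_inv_rev, hxi, hyi]
    rw [← mul_assoc, hx, one_mul]
  have hc : ∀ i : ℤ, t ^ i * x = x * t ^ (-i) := by
    intro i
    have : x * t ^ (-i) * x⁻¹ = t ^ i := by
      rw [← conj_zpow, hxt, inv_zpow', neg_neg]
    rw [← this, inv_mul_cancel_right]
  let F : DihedralGroup 0 →* G :=
    { toFun := fun z => match z with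
        | DihedralGroup.r i => t ^ (show ℤ from i)
        | DihedralGroup.sr i => x * t ^ (show ℤ from i)
      map_one' := zpow_zero t
      map_mul' := by
        have hneg : ∀ i : ℤ, x * t ^ i * (x) = t ^ (-i) := by
          intro i
          rw [mul_assoc, hc, ← mul_assoc, hx, one_mul]
        intro a b
        cases a with
        | r i =>
          cases b with
          | r k => exact zpow_add t (show ℤ from i) k
          | sr k =>
            change x * t ^ ((show ℤ from k) - (show ℤ from i)) = t ^ (show ℤ from i) * (x * t ^ (show ℤ from k))
            rw [← mul_assoc, hc, mul_assoc, ← zpow_add]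
            congr 2; ring
        | sr i =>
          cases b with
          | r k =>
            change x * t ^ ((show ℤ from i) + (show ℤ from k)) = x * t ^ (show ℤ from i) * t ^ (show ℤ from k)
            rw [mul_assoc, zpow_add]
          | sr k =>
            change t ^ ((show ℤ from k) - (show ℤ from i)) = x * t ^ (show ℤ from i) * (x * t ^ (show ℤ from k))
            rw [← mul_assoc, hneg, ← zpow_add]
            congr 1; ring }
  have hFr : ∀ i : ℤ, F (DihedralGroup.r i) = t ^ i := fun i => rfl
  have hFs : ∀ i : ℤ, F (DihedralGroup.sr i) = x * t ^ i := fun i => rfl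
  have hsurj : Function.Surjective F := by
    have : (⊤ : Subgroup G) ≤ F.range := by
      rw [← h, Subgroup.closure_le]
      rintro z (rfl | rfl)
      · exact ⟨DihedralGroup.sr (0 : ℤ), by rw [hFs, zpow_zero, mul_one]⟩
      · refine ⟨DihedralGroup.sr (1 : ℤ), ?_⟩
        rw [hFs, zpow_one]
        simp only [t]
        rw [← mul_assoc, hx, one_mul]
    intro z
    exact this trivial
  have hnf : ∀ i : ℤ, i ≠ 0 → t ^ i ≠ 1 := by
    intro i hi hti
    have hfin : Set.Finite (Set.univ : Set G) := by
      have hfo : IsOfFinOrder t := isOfFinOrder_iff_zpow_eq_one.2 ⟨i, hi, hti⟩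
      have hzf : (Subgroup.zpowers t : Set G).Finite := by
        exact Set.finite_coe_iff.1 (finite_zpowers.2 hfo)
      refine Set.Finite.subset (hzf.union (hzf.image (fun g => x * g))) ?_
      intro z _
      obtain ⟨w, rfl⟩ := hsurj z
      cases w with
      | r k => left; exact ⟨k, rfl⟩
      | sr k => right; exact ⟨_, ⟨k, rfl⟩, rfl⟩
    exact Set.infinite_univ hfin
  have hinj : Function.Injective F := by
    rw [injective_iff_map_eq_one]
    intro a ha
    cases a with
    | r i =>
      have hi : (show ℤ from i) = 0 := by
        by_contra hne
        exact hnf _ hne ha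
      change i = 0 at hi
      rw [hi]; rfl
    | sr i =>
      exfalso
      have ha : x * t ^ (show ℤ from i) = 1 := ha
      have hxe : t ^ (-(show ℤ from i)) = x := by
        rw [zpow_neg]; exact (eq_inv_of_mul_eq_one_left ha).symm
      -- x commutes with t, so t squared is trivial
      have hcomm : x * t * x⁻¹ = t := by
        rw [← hxe]
        rw [((Commute.refl t).zpow_left _).eq, mul_inv_cancel_right]
      rw [hxt] at hcomm
      have h2 : t ^ (2 : ℤ) = 1 := by
        rw [zpow_two]
        nth_rewrite 1 [← hcomm]
        exact inv_mul_cancel t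
      exact hnf 2 (by norm_num) h2
  exact ⟨(MulEquiv.ofBijective F ⟨hinj, hsurj⟩).symm⟩

end OneRel

namespace OneRel

open FreeGroup (of)
open Monoid (CoprodI)

/-- projection of a free product onto a factor -/
noncomputable def cproj {Q : Bool → Type} [∀ i, Group (Q i)] (b : Bool) : CoprodI Q →* Q b :=
  CoprodI.lift (Pi.mulSingle b (MonoidHom.id (Q b)))

theorem cproj_same {Q : Bool → Type} [∀ i, Group (Q i)] (b : Bool) (a : Q b) : cproj b (co a) = a := by
  simp [cproj]

theorem cproj_ne {Q : Bool → Type} [∀ i, Group (Q i)] {b c : Bool} (h : c ≠ b) (a : Q c) :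
    cproj b (co a) = 1 := by
  simp [cproj, h]

theorem eta_surj {Y1 Y2 : Type} {Q : Bool → Type} [∀ i, Group (Q i)]
    {η1 : FreeGroup Y1 →* Q true} {η2 : FreeGroup Y2 →* Q false}
    (Ψ : FreeGroup (Y1 ⊕ Y2) →* CoprodI Q) (hs : Function.Surjective Ψ)
    (h1 : ∀ w, Ψ (FreeGroup.map Sum.inl w) = co (η1 w))
    (h2 : ∀ w, Ψ (FreeGroup.map Sum.inr w) = co (η2 w)) :
    Function.Surjective η1 ∧ Function.Surjective η2 := by
  have g1 : ∀ y, Ψ (of (Sum.inl y)) = co (η1 (of y)) := fun y => by rw [← h1, FreeGroup.map.of]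
  have g2 : ∀ y, Ψ (of (Sum.inr y)) = co (η2 (of y)) := fun y => by rw [← h2, FreeGroup.map.of]
  constructor
  · intro c
    obtain ⟨w, hw⟩ := hs (co c)
    have hmem : ((cproj true).comp Ψ) w ∈ η1.range := by
      refine closure_map_mem (S := Set.univ) _ ?_ (by
        rw [Set.image_univ, FreeGroup.closure_range_of]; trivial)
      rintro (y | y) _
      · rw [MonoidHom.comp_apply, g1, cproj_same]; exact ⟨_, rfl⟩
      · rw [MonoidHom.comp_apply, g2, cproj_ne (by decide)]; exact one_mem _
    rw [MonoidHom.comp_apply, hw, cproj_same] at hmem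
    exact hmem
  · intro c
    obtain ⟨w, hw⟩ := hs (co c)
    have hmem : ((cproj false).comp Ψ) w ∈ η2.range := by
      refine closure_map_mem (S := Set.univ) _ ?_ (by
        rw [Set.image_univ, FreeGroup.closure_range_of]; trivial)
      rintro (y | y) _
      · rw [MonoidHom.comp_apply, g1, cproj_ne (by decide)]; exact one_mem _
      · rw [MonoidHom.comp_apply, g2, cproj_same]; exact ⟨_, rfl⟩
    rw [MonoidHom.comp_apply, hw, cproj_same] at hmem
    exact hmem

theorem nonempty_of_surj {Y Q : Type} [Group Q] [Nontrivial Q] (η : FreeGroup Y →* Q)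
    (h : Function.Surjective η) : Nonempty Y := by
  by_contra hne
  rw [not_nonempty_iff] at hne
  obtain ⟨c, hc⟩ := exists_ne (1 : Q)
  obtain ⟨w, rfl⟩ := h c
  exact hc (by rw [Subsingleton.elim w 1, map_one])

theorem or_nontrivial_of_surj {Y Q : Type} [Group Q] [Nontrivial Q] (η : FreeGroup Y →* Q)
    (h : Function.Surjective η) (x : FreeGroup Y) (hx : η x = 1) : Nontrivial (OR x) := by
  obtain ⟨c, hc⟩ := exists_ne (1 : Q)
  obtain ⟨w, rfl⟩ := h c
  refine ⟨QuotientGroup.mk w, 1, fun hw => hc ?_⟩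
  have := congrArg (orLift η hx) hw
  rwa [orLift_mk, map_one] at this

theorem exists_preimage_map {Y Z : Type} (f : Y → Z) {w : FreeGroup Z}
    (hw : w ∈ Subgroup.closure (of '' Set.range f)) : ∃ v, FreeGroup.map f v = w := by
  have := closure_map_mem (K := (FreeGroup.map f).range) (MonoidHom.id _) (by
    rintro _ ⟨y, rfl⟩
    exact ⟨of y, by simp⟩) hw
  exact this

theorem both {X : Type} [Finite X] {Q : Bool → Type} [∀ i, Group (Q i)] [∀ i, Nontrivial (Q i)]
    (Φ : FreeGroup X →* CoprodI Q) (hs : Function.Surjective Φ) (R : FreeGroup X) (n : ℕ) (hn : 1 < n)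
    (hR : NP R) (hker : ∀ w, Φ w = 1 → w ∈ nc R) (hRn : Φ (R ^ n) = 1) :
    FreelyDecomposable (PresentedGroup {R ^ n}) := by
  obtain ⟨Y1, Y2, η1, η2, ψ, h1, h2⟩ := grushko2 Φ hs
  obtain ⟨s1, s2⟩ := eta_surj (η1 := η1) (η2 := η2) (Φ.comp ψ.toMonoidHom) (hs.comp ψ.surjective) h1 h2
  let R' := ψ.symm R
  have hψR : ψ R' = R := ψ.apply_symm_apply R
  have hco : ∀ {b : Bool} {a : Q b}, co a = (1 : CoprodI Q) → a = 1 := by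
    intro b a h
    apply CoprodI.of_injective b
    rw [map_one]; exact h
  -- generic consequence of conjugacy into a factor
  have conjR : ∀ (g v : FreeGroup (Y1 ⊕ Y2)), v = g * R' * g⁻¹ → R = (ψ g)⁻¹ * ψ v * (ψ g)⁻¹⁻¹ := by
    intro g v hv
    rw [hv, map_mul, map_mul, map_inv, hψR]; group
  have conjΦ : ∀ (g v : FreeGroup (Y1 ⊕ Y2)), v = g * R' * g⁻¹ → Φ (ψ v) ^ n = 1 := by
    intro g v hv
    have e1 : ψ v = ψ g * R * (ψ g)⁻¹ := by rw [hv, map_mul ψ, map_mul ψ, map_inv ψ, hψR]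
    rw [← map_pow, e1, conj_pow, map_mul, map_mul, hRn, mul_one, ← map_mul, mul_inv_cancel, map_one]
  by_cases c1 : ∃ g, g * R' * g⁻¹ ∈ Subgroup.closure (of '' Set.range (Sum.inl : Y1 → Y1 ⊕ Y2))
  · obtain ⟨g, hg⟩ := c1
    obtain ⟨v, hv⟩ := exists_preimage_map _ hg
    refine decomp ψ R v _ (conjR g _ hv) n ?_ (nonempty_of_surj η2 s2)
    refine or_nontrivial_of_surj η1 s1 _ ?_
    have := conjΦ g _ hv
    rw [h1, ← map_pow, ← map_pow] at this
    exact hco this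
  by_cases c2 : ∃ g, g * R' * g⁻¹ ∈ Subgroup.closure (of '' Set.range (Sum.inr : Y2 → Y1 ⊕ Y2))
  · obtain ⟨g, hg⟩ := c2
    obtain ⟨v, hv⟩ := exists_preimage_map _ hg
    refine decomp ((FreeGroup.freeGroupCongr (Equiv.sumComm Y2 Y1)).trans ψ) R v (ψ g)⁻¹ ?_ n ?_
      (nonempty_of_surj η1 s1)
    · have e1 : ((FreeGroup.freeGroupCongr (Equiv.sumComm Y2 Y1)).trans ψ) (FreeGroup.map Sum.inl v)
          = ψ (FreeGroup.map Sum.inr v) := by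
        rw [MulEquiv.trans_apply, FreeGroup.freeGroupCongr_apply, FreeGroup.map.comp]; rfl
      rw [e1]
      exact conjR g _ hv
    refine or_nontrivial_of_surj η2 s2 _ ?_
    have := conjΦ g _ hv
    rw [h2, ← map_pow, ← map_pow] at this
    exact hco this
  push Not at c1 c2
  exfalso
  have hFr := (good R').1
  have hnc : ∀ w, Φ (ψ w) = 1 → w ∈ nc R' := by
    intro w hw
    rw [← nc_equiv ψ, hψR]
    exact hker _ hw
  have i1 : Function.Injective η1 := by
    rw [injective_iff_map_eq_one]
    intro w hw
    have := hFr.subset c1 (map_range_mem Sum.inl w (fun x => ⟨x, rfl⟩)) (hnc _ (by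
      rw [h1, hw, map_one]))
    exact FreeGroup.map_injective Sum.inl_injective (by rw [this, map_one])
  have i2 : Function.Injective η2 := by
    rw [injective_iff_map_eq_one]
    intro w hw
    have := hFr.subset c2 (map_range_mem Sum.inr w (fun x => ⟨x, rfl⟩)) (hnc _ (by
      rw [h2, hw, map_one]))
    exact FreeGroup.map_injective Sum.inr_injective (by rw [this, map_one])
  let E1 := MulEquiv.ofBijective η1 ⟨i1, s1⟩
  let E2 := MulEquiv.ofBijective η2 ⟨i2, s2⟩
  let B : CoprodI Q →* FreeGroup (Y1 ⊕ Y2) := CoprodI.lift (fun b => match b with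
    | true => (FreeGroup.map Sum.inl).comp E1.symm.toMonoidHom
    | false => (FreeGroup.map Sum.inr).comp E2.symm.toMonoidHom)
  have hB : (B.comp Φ).comp ψ.toMonoidHom = MonoidHom.id _ := by
    ext y
    rcases y with y | y
    · change B (Φ (ψ (of (Sum.inl y)))) = of (Sum.inl y)
      rw [← FreeGroup.map.of, h1]
      have : B (co (η1 (of y))) = FreeGroup.map Sum.inl (E1.symm (E1 (of y))) := by
        simp only [B]
        erw [CoprodI.lift_of]
      rw [this, E1.symm_apply_apply]
    · change B (Φ (ψ (of (Sum.inr y)))) = of (Sum.inr y)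
      rw [← FreeGroup.map.of, h2]
      have : B (co (η2 (of y))) = FreeGroup.map Sum.inr (E2.symm (E2 (of y))) := by
        simp only [B]
        erw [CoprodI.lift_of]
      rw [this, E2.symm_apply_apply]
  have hR'n : R' ^ n = 1 := by
    have := DFunLike.congr_fun hB (R' ^ n)
    change B (Φ (ψ (R' ^ n))) = R' ^ n at this
    rw [map_pow ψ, hψR, hRn, map_one] at this
    exact this.symm
  have hRn1 : R ^ n = 1 := by rw [← hψR, ← map_pow, hR'n, map_one]
  exact hR.ne_one ((pow_eq_one_iff_left (by omega)).1 hRn1)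

theorem main {X : Type} (R : FreeGroup X) (n : ℕ)
    (hn : 1 < n) (hR : NP R)
    (hindec : FreelyIndecomposable (PresentedGroup {R ^ n}))
    (C : Type) [Group C] (hC : Nonempty (C ≃* DihedralGroup 0))
    (D : Bool → Type) [∀ b, Group (D b)]
    (φ : ∀ b, C →* D b) (hinj : ∀ b, Function.Injective (φ b))
    (e : OR (R ^ n) ≃* Monoid.PushoutI φ) :
    ∃ b, Nonempty (D b ≃* DihedralGroup 0) := by
  rcases finite_or_infinite X with hX | hX
  swap
  · exact absurd (decomp_infinite R n) hindec
  obtain ⟨c⟩ := hC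
  obtain ⟨hno2, hHQ⟩ := (good R).2 hR
  have hHQ := hHQ n
  let Q : Bool → Type := fun b => D b ⧸ Subgroup.normalClosure ((φ b).range : Set (D b))
  have hφ : ∀ b x, (QuotientGroup.mk (φ b x) : Q b) = 1 := by
    intro b x
    exact (QuotientGroup.eq_one_iff _).2 (Subgroup.subset_normalClosure ⟨x, rfl⟩)
  let m : ∀ b, D b →* Q b := fun b => QuotientGroup.mk' _
  let Λ : Monoid.PushoutI φ →* CoprodI Q := Monoid.PushoutI.lift (fun b => (co (G := Q)).comp (m b)) 1 (by
    intro b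
    ext x
    change co (G := Q) (i := b) (QuotientGroup.mk (φ b x) : Q b) = 1
    rw [hφ, map_one])
  have hΛ : ∀ b x, Λ (Monoid.PushoutI.of b x) = co (G := Q) (i := b) (m b x) := by
    intro b x
    simp only [Λ]
    erw [Monoid.PushoutI.lift_of]
  let Φ : FreeGroup X →* CoprodI Q := (Λ.comp e.toMonoidHom).comp (QuotientGroup.mk' (nc (R ^ n)))
  have hΛs : Function.Surjective Λ := by
    intro w
    induction w using CoprodI.induction_on with
    | one => exact ⟨1, map_one _⟩
    | of i a =>
      obtain ⟨a, rfl⟩ := QuotientGroup.mk_surjective a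
      exact ⟨_, hΛ i a⟩
    | mul x y hx hy =>
      obtain ⟨x, rfl⟩ := hx
      obtain ⟨y, rfl⟩ := hy
      exact ⟨x * y, map_mul _ _ _⟩
  have hs : Function.Surjective Φ := (hΛs.comp e.surjective).comp (QuotientGroup.mk'_surjective _)
  have hRn : Φ (R ^ n) = 1 := by
    have : (QuotientGroup.mk (R ^ n) : OR (R ^ n)) = 1 := or_mk_eq_one.2 (mem_nc_self _)
    change Λ (e (QuotientGroup.mk (R ^ n))) = 1
    rw [this, map_one, map_one]
  -- the map down to the torsion-free quotient
  let π : OR (R ^ n) →* OR R := orLift (QuotientGroup.mk' (nc R)) (by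
    exact or_mk_eq_one.2 (Subgroup.pow_mem _ (mem_nc_self R) n))
  let δ : ∀ b, D b →* OR R := fun b => (π.comp e.symm.toMonoidHom).comp (Monoid.PushoutI.of b)
  have hδ : ∀ b x, δ b (φ b x) = 1 := by
    intro b x
    have := dihedral_hom_trivial hno2 (((δ b).comp (φ b)).comp c.symm.toMonoidHom) (c x)
    simpa using this
  let Γ : CoprodI Q →* OR R := CoprodI.lift (fun b => QuotientGroup.lift _ (δ b) (by
    have : Subgroup.normalClosure ((φ b).range : Set (D b)) ≤ (δ b).ker :=
      Subgroup.normalClosure_le_normal (by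
        rintro _ ⟨x, rfl⟩
        exact hδ b x)
    exact this))
  have hΓΛ : Γ.comp Λ = π.comp e.symm.toMonoidHom := by
    refine Monoid.PushoutI.hom_ext_nonempty ?_
    intro b
    ext x
    rw [MonoidHom.comp_apply, MonoidHom.comp_apply, hΛ]
    simp only [Γ]
    erw [CoprodI.lift_of]
  have hker : ∀ w, Φ w = 1 → w ∈ nc R := by
    intro w hw
    have h1 := DFunLike.congr_fun hΓΛ (e (QuotientGroup.mk w))
    change Γ (Φ w) = π (e.symm (e (QuotientGroup.mk w))) at h1
    rw [hw, map_one, e.symm_apply_apply] at h1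
    exact or_mk_eq_one.1 h1.symm
  by_cases hQ : ∀ b, Nontrivial (Q b)
  · exact absurd (both Φ hs R n hn hR hker hRn) hindec
  push Not at hQ
  obtain ⟨b, hb⟩ := hQ
  refine ⟨b, ?_⟩
  have htop : Subgroup.normalClosure ((φ b).range : Set (D b)) = ⊤ := by
    rw [eq_top_iff]
    intro x _
    exact (QuotientGroup.eq_one_iff x).1 (Subsingleton.elim (α := Q b) _ _)
  let u := φ b (c.symm (DihedralGroup.sr 0))
  let v := φ b (c.symm (DihedralGroup.sr 1))
  have hu : u * u = 1 := by
    simp only [u]; rw [← map_mul, ← map_mul, DihedralGroup.sr_mul_self, map_one, map_one]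
  have hv : v * v = 1 := by
    simp only [v]; rw [← map_mul, ← map_mul, DihedralGroup.sr_mul_self, map_one, map_one]
  have hrange : (φ b).range ≤ Subgroup.closure {u, v} := by
    have hu' : u ∈ Subgroup.closure {u, v} := Subgroup.subset_closure (by simp)
    have hv' : v ∈ Subgroup.closure {u, v} := Subgroup.subset_closure (by simp)
    have hr : ∀ i : ℤ, φ b (c.symm (DihedralGroup.r i)) ∈ Subgroup.closure {u, v} := by
      intro i
      have e1 : (DihedralGroup.r i : DihedralGroup 0) = (DihedralGroup.sr 0 * DihedralGroup.sr 1) ^ i := by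
        rw [DihedralGroup.sr_mul_sr, sub_zero, DihedralGroup.r_one_zpow]; rfl
      rw [e1, map_zpow, map_zpow, map_mul, map_mul]
      exact Subgroup.zpow_mem _ (Subgroup.mul_mem _ hu' hv') i
    rintro _ ⟨x, rfl⟩
    obtain ⟨x, rfl⟩ := c.symm.surjective x
    cases x with
    | r i => exact hr i
    | sr i =>
      have e1 : (DihedralGroup.sr i : DihedralGroup 0) = DihedralGroup.sr 0 * DihedralGroup.r i := by
        rw [DihedralGroup.sr_mul_r, zero_add]
      rw [e1, map_mul, map_mul]
      exact Subgroup.mul_mem _ hu' (hr i)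
  have hnc : Subgroup.normalClosure {u, v} = ⊤ := by
    rw [eq_top_iff, ← htop]
    apply Subgroup.normalClosure_le_normal
    exact fun x hx => Subgroup.closure_le_normalClosure (hrange hx)
  obtain ⟨u', v', hu', hv', hgen⟩ := (hHQ (D b) (e.symm.toMonoidHom.comp (Monoid.PushoutI.of b))
    (e.symm.injective.comp (Monoid.PushoutI.of_injective hinj b))).2 u v hu hv hnc
  have : Infinite (DihedralGroup 0) := by
    refine Infinite.of_injective (fun i : ℤ => (DihedralGroup.r i : DihedralGroup 0)) ?_
    intro i j h
    exact DihedralGroup.r.inj h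
  have : Infinite C := Infinite.of_injective _ c.symm.injective
  have : Infinite (D b) := Infinite.of_injective _ (hinj b)
  exact dihedral_of_gen hu' hv' hgen

end OneRel

/-- If a freely indecomposable one-relator group with torsion
`G = ⟨X; Rⁿ⟩` splits nontrivially as an amalgam `A ∗_C B` with `C` infinite dihedral,
then `A` or `B` is infinite dihedral (here `A = D true`, `B = D false`). -/
theorem statement_10 {X : Type} [Nontrivial X] (R : FreeGroup X) (n : ℕ)
    (hn : 1 < n) (hR : ∀ (S : FreeGroup X) (k : ℕ), 1 ≤ k → R = S ^ k → k = 1)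
    (hindec : FreelyIndecomposable (PresentedGroup {R ^ n}))
    (C : Type) [Group C] (hC : Nonempty (C ≃* DihedralGroup 0))
    (D : Bool → Type) [∀ b, Group (D b)]
    (φ : ∀ b, C →* D b) (hinj : ∀ b, Function.Injective (φ b))
    (hproper : ∀ b, (φ b).range ≠ ⊤)
    (e : PresentedGroup {R ^ n} ≃* Monoid.PushoutI φ) :
    Nonempty (D true ≃* DihedralGroup 0) ∨ Nonempty (D false ≃* DihedralGroup 0) := by
  obtain ⟨b, hb⟩ := OneRel.main R n hn hR hindec C hC D φ hinj e
  cases b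
  · exact Or.inr hb
  · exact Or.inl hb
end

section
/- The one-relator group with torsion G = ⟨a, t; (t⁻¹ a⁻¹ t a²)²⟩ is isomorphic to the HNN-extension of the base group H = ⟨a, b; (b⁻¹ a²)²⟩ with stable letter t, associated cyclic subgroups ⟨a⟩ and ⟨b⟩ of H, and associated isomorphism sending a to b (so that t⁻¹ a t = b in the HNN-extension). -/
/-- Infinite cyclic subgroups are isomorphic via the map matching the generators. -/
theorem exists_zpowers_equiv {G : Type*} [Group G] (x y : G)
    (hx : Function.Injective (fun n : ℤ => x ^ n)) (hy : Function.Injective (fun n : ℤ => y ^ n)) :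
    ∃ φ : Subgroup.zpowers x ≃* Subgroup.zpowers y,
      φ ⟨x, Subgroup.mem_zpowers _⟩ = ⟨y, Subgroup.mem_zpowers _⟩ := by
  have key : ∀ z : G, Function.Injective (fun n : ℤ => z ^ n) →
      ∃ e : Multiplicative ℤ ≃* Subgroup.zpowers z,
        e (Multiplicative.ofAdd 1) = ⟨z, Subgroup.mem_zpowers _⟩ := by
    intro z hz
    refine ⟨MulEquiv.ofBijective
      (zpowersHom (Subgroup.zpowers z) ⟨z, Subgroup.mem_zpowers _⟩) ⟨?_, ?_⟩, ?_⟩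
    · intro m n h
      have h2 := congrArg Subtype.val h
      simp only [zpowersHom_apply, Subgroup.coe_zpow] at h2
      exact Multiplicative.toAdd.injective (hz h2)
    · rintro ⟨w, n, rfl⟩
      exact ⟨Multiplicative.ofAdd n, by ext; simp [zpowersHom_apply]⟩
    · ext; exact zpow_one z
  obtain ⟨e, he⟩ := key x hx
  obtain ⟨f, hf⟩ := key y hy
  refine ⟨e.symm.trans f, ?_⟩
  rw [MulEquiv.trans_apply, ← he, MulEquiv.symm_apply_apply, hf]

/-- An element with nontrivial image in the integers has injective powers. -/
theorem zpow_injective_of_hom {G : Type*} [Group G] (x : G) (f : G →* Multiplicative ℤ)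
    (hf : (f x).toAdd ≠ 0) : Function.Injective (fun n : ℤ => x ^ n) := by
  intro m n h
  have h2 := congrArg (fun z => (f z).toAdd) h
  simp only [map_zpow, toAdd_zpow, smul_eq_mul] at h2
  exact mul_right_cancel₀ hf h2


/-- The one-relator group with torsion `G = ⟨a, t; (t⁻¹ a⁻¹ t a²)²⟩`
(with `a = FreeGroup.of true`, `t = FreeGroup.of false`) is isomorphic to the
HNN-extension of the base group `H = ⟨a, b; (b⁻¹ a²)²⟩` (with `a = FreeGroup.of true`,
`b = FreeGroup.of false`) with associated cyclic subgroups `⟨a⟩` and `⟨b⟩` of `H` and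
associated isomorphism sending `a` to `b`. -/
theorem statement_15 :
    let relG : Set (FreeGroup Bool) :=
      {((FreeGroup.of false)⁻¹ * (FreeGroup.of true)⁻¹ * FreeGroup.of false *
          FreeGroup.of true ^ 2) ^ 2}
    let relH : Set (FreeGroup Bool) :=
      {((FreeGroup.of false)⁻¹ * FreeGroup.of true ^ 2) ^ 2}
    let A : Subgroup (PresentedGroup relH) :=
      Subgroup.zpowers (PresentedGroup.of true)
    let B : Subgroup (PresentedGroup relH) :=
      Subgroup.zpowers (PresentedGroup.of false)
    ∃ φ : A ≃* B,
      φ ⟨PresentedGroup.of true, Subgroup.mem_zpowers _⟩ =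
        ⟨PresentedGroup.of false, Subgroup.mem_zpowers _⟩ ∧
      Nonempty (PresentedGroup relG ≃* HNNExtension (PresentedGroup relH) A B φ) := by

  intro relG relH A B
  have hlift : ∃ f : PresentedGroup relH →* Multiplicative ℤ,
      (f (PresentedGroup.of true)).toAdd = 1 ∧ (f (PresentedGroup.of false)).toAdd = 2 := by
    refine ⟨PresentedGroup.toGroup
      (f := fun i => Multiplicative.ofAdd (if i then (1 : ℤ) else 2)) ?_, ?_, ?_⟩
    · rintro r rfl
      simp only [map_pow, map_mul, map_inv, FreeGroup.lift_apply_of]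
      rfl
    · rw [PresentedGroup.toGroup.of]; rfl
    · rw [PresentedGroup.toGroup.of]; rfl
  obtain ⟨f, hfa, hfb⟩ := hlift
  obtain ⟨φ, hφ⟩ := exists_zpowers_equiv
    (PresentedGroup.of true : PresentedGroup relH) (PresentedGroup.of false)
    (zpow_injective_of_hom _ f (by rw [hfa]; decide))
    (zpow_injective_of_hom _ f (by rw [hfb]; decide))
  refine ⟨φ, hφ, ?_⟩
  have relHr : ((PresentedGroup.of false : PresentedGroup relH)⁻¹ *
      PresentedGroup.of true ^ 2) ^ 2 = 1 :=
    PresentedGroup.one_of_mem (rels := relH) rfl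
  have relGr : ((PresentedGroup.of false : PresentedGroup relG)⁻¹ *
      (PresentedGroup.of true)⁻¹ * PresentedGroup.of false * PresentedGroup.of true ^ 2) ^ 2 = 1 :=
    PresentedGroup.one_of_mem (rels := relG) rfl
  -- the conjugation relation in the HNN-extension
  have hconj : (HNNExtension.of (PresentedGroup.of false) : HNNExtension _ A B φ) =
      HNNExtension.t * HNNExtension.of (PresentedGroup.of true) * HNNExtension.t⁻¹ := by
    have h := HNNExtension.equiv_eq_conj (φ := φ) ⟨PresentedGroup.of true, Subgroup.mem_zpowers _⟩
    rw [hφ] at h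
    exact h
  let F : PresentedGroup relG →* HNNExtension _ A B φ :=
    PresentedGroup.toGroup (f := fun i => if i then HNNExtension.of (PresentedGroup.of true)
      else HNNExtension.t⁻¹) (by
      rintro r rfl
      simp only [map_pow, map_mul, map_inv, FreeGroup.lift_apply_of, if_true, Bool.false_eq_true,
        if_false]
      have h := congrArg (HNNExtension.of (φ := φ)) relHr
      simp only [map_pow, map_mul, map_inv, map_one, hconj] at h
      rw [← h]
      group)
  have hFt : F (PresentedGroup.of true) = HNNExtension.of (PresentedGroup.of true) :=
    PresentedGroup.toGroup.of _
  have hFf : F (PresentedGroup.of false) = HNNExtension.t⁻¹ := PresentedGroup.toGroup.of _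
  let K0 : PresentedGroup relH →* PresentedGroup relG :=
    PresentedGroup.toGroup (f := fun i => if i then PresentedGroup.of true
      else (PresentedGroup.of false)⁻¹ * PresentedGroup.of true * PresentedGroup.of false) (by
      rintro r rfl
      simp only [map_pow, map_mul, map_inv, FreeGroup.lift_apply_of, if_true, Bool.false_eq_true,
        if_false]
      rw [← relGr]
      group)
  have hKt : K0 (PresentedGroup.of true) = PresentedGroup.of true :=
    PresentedGroup.toGroup.of _
  have hKf : K0 (PresentedGroup.of false) =
      (PresentedGroup.of false)⁻¹ * PresentedGroup.of true * PresentedGroup.of false :=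
    PresentedGroup.toGroup.of _
  let K : HNNExtension _ A B φ →* PresentedGroup relG :=
    HNNExtension.lift K0 (PresentedGroup.of false)⁻¹ (by
      rintro ⟨w, n, rfl⟩
      have h1 : (⟨(PresentedGroup.of true : PresentedGroup relH) ^ n, ⟨n, rfl⟩⟩ : A) =
        (⟨PresentedGroup.of true, Subgroup.mem_zpowers _⟩ : A) ^ n := rfl
      have h2 : ((φ ⟨(PresentedGroup.of true : PresentedGroup relH) ^ n, ⟨n, rfl⟩⟩ : B) :
          PresentedGroup relH) = PresentedGroup.of false ^ n := by
        rw [h1, map_zpow, hφ]; rfl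
      refine Eq.trans ?_ (congrArg (fun z => K0 z * (PresentedGroup.of false)⁻¹) h2.symm)
      simp only [map_zpow, hKt, hKf]
      have h3 := conj_zpow (i := n) (a := (PresentedGroup.of false : PresentedGroup relG)⁻¹)
        (b := PresentedGroup.of true)
      rw [inv_inv] at h3
      rw [h3]
      group)
  have hK : ∀ g, K (HNNExtension.of g) = K0 g := fun g => HNNExtension.lift_of _ _ _ g
  have hKs : K HNNExtension.t = (PresentedGroup.of false)⁻¹ := HNNExtension.lift_t _ _ _
  refine ⟨MonoidHom.toMulEquiv F K ?_ ?_⟩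
  · apply PresentedGroup.ext
    rintro (_ | _)
    · simp only [MonoidHom.comp_apply, MonoidHom.id_apply, hFf, map_inv, hKs, inv_inv]
    · simp only [MonoidHom.comp_apply, MonoidHom.id_apply, hFt, hK, hKt]
  · apply HNNExtension.hom_ext
    · apply PresentedGroup.ext
      rintro (_ | _)
      · simp only [MonoidHom.comp_apply, MonoidHom.id_apply, hK, hKf, map_mul, map_inv, hFf, hFt,
          inv_inv, hconj, hKs, hKt]
      · simp only [MonoidHom.comp_apply, MonoidHom.id_apply, hFt, hK, hKt]
    · simp only [MonoidHom.comp_apply, MonoidHom.id_apply, hKs, map_inv, hFf, inv_inv]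
end
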